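/- arXiv:2010.07407 — 5 statements merged into one kernel-verified Lean document; each statement's English description precedes it below -/
import Mathlib

section
/- Let G be a group with a normal subgroup A of finite index and a fixed group isomorphism between A and ℤⁿ, and let ρ : G → GL(n, ℤ) be the conjugation action (ρ(g) is the automorphism of ℤⁿ corresponding to a ↦ g a g⁻¹ on A). If G acts properly and cocompactly by graph automorphisms on some Helly graph, then there exists φ ∈ GL(n, ℝ) such that for every g ∈ G the matrix φ ρ(g) φ⁻¹ (viewed in GL(n, ℝ)) is a linear isometry of ℝⁿ = (Fin n → ℝ) equipped with the supremum norm ‖x‖∞ = max |xᵢ|. -/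
/-- A simple graph is Helly if it is connected and every pairwise intersecting family of
closed balls (with respect to the graph metric) has a common vertex. -/
def IsHellyGraph {V : Type*} (Γ : SimpleGraph V) : Prop :=
  Γ.Connected ∧
    ∀ {ι : Type} (v : ι → V) (r : ι → ℕ),
      (∀ i j, Γ.dist (v i) (v j) ≤ r i + r j) → ∃ x : V, ∀ i, Γ.dist x (v i) ≤ r i

/-- A group `G` acts properly and cocompactly by automorphisms on a graph `Γ` (the action
being given by a homomorphism to permutations of the vertex set preserving adjacency) if
for every vertex `v` and radius `R` the set `{g | d(v, g·v) ≤ R}` is finite, and there are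
finitely many orbits of vertices. -/
def IsProperCocompactGraphAction {G : Type*} [Group G] {V : Type*} (Γ : SimpleGraph V)
    (act : G →* Equiv.Perm V) : Prop :=
  (∀ (g : G) (u v : V), Γ.Adj u v → Γ.Adj (act g u) (act g v)) ∧
  (∀ (v : V) (R : ℕ), {g : G | Γ.dist v (act g v) ≤ R}.Finite) ∧
  (∃ S : Finset V, ∀ v : V, ∃ g : G, act g v ∈ S)

/-- A group is Helly if it acts properly and cocompactly by automorphisms on some
Helly graph. -/
def IsHellyGroup (G : Type*) [Group G] : Prop :=
  ∃ (V : Type) (Γ : SimpleGraph V) (act : G →* Equiv.Perm V),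
    IsHellyGraph Γ ∧ IsProperCocompactGraphAction Γ act

/-!
For a Helly graph acted on by `G`, the distance `d(v, a v)` is a length function on the subgroup
`ℤⁿ` whose balls have the Helly property up to a bounded error. Homogenizing it gives a norm on
`ℝⁿ` whose balls have the Helly property up to an arbitrarily small error, and this norm is
invariant under the point group because conjugation by `g` changes the displacement of `v` by at
most `2 d(v, g v)`.

Such a norm is isometric to the supremum norm. Smooth points of the unit sphere are dense, so the
norm is the supremum of their supporting functionals. By the Helly property, finitely many of these
functionals, no two of them opposite, are all positive at some common vector; as signs can be
changed freely, they are linearly independent. Hence there are finitely many of them up to sign,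
and they are the coordinates in which the norm is the supremum norm.
-/

open Filter Module Set Topology
open scoped Matrix

/-- An additive length function `f` satisfies the Helly property for balls of a common radius, up
to the error `R`: finitely many balls of radius `r` whose centres are pairwise `2 * r`-close have a
common point once their radii are enlarged by `R`. -/
def IsCoarselyHelly {X : Type*} [AddGroup X] (R : ℝ) (f : X → ℝ) : Prop :=
  ∀ (s : Set X) (r : ℝ), s.Finite → (∀ x ∈ s, ∀ y ∈ s, f (x - y) ≤ 2 * r) →
    ∃ z, ∀ x ∈ s, f (x - z) ≤ r + R

theorem exists_norm_sub_lt_one {E : Type*} [SeminormedAddCommGroup E]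
    (hE : ∀ ε > 0, IsCoarselyHelly ε fun x : E ↦ ‖x‖)
    {s : Set E} (hs : s.Finite) (hlt : ∀ x ∈ s, ∀ y ∈ s, ‖x - y‖ < 2) :
    ∃ z, ∀ x ∈ s, ‖x - z‖ < 1 := by
  obtain ⟨d, hd, hle⟩ : ∃ d < 2, ∀ q ∈ s ×ˢ s, ‖q.1 - q.2‖ ≤ d := by
    have hclose : ∀ᶠ d in 𝓝[<] (2 : ℝ), ∀ q ∈ s ×ˢ s, ‖q.1 - q.2‖ ≤ d :=
      (eventually_all_finite (hs.prod hs)).2 fun q hq ↦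
        (eventually_ge_nhds (hlt _ hq.1 _ hq.2)).filter_mono nhdsWithin_le_nhds
    obtain ⟨d, hd, hle⟩ := (eventually_mem_nhdsWithin.and hclose).exists
    exact ⟨d, hd, hle⟩
  obtain ⟨z, hz⟩ := hE ((2 - d) / 4) (by linarith) s (d / 2) hs fun x hx y hy ↦ by
    linarith [hle (x, y) ⟨hx, hy⟩]
  exact ⟨z, fun x hx ↦ (hz x hx).trans_lt (by linarith)⟩

section SmoothSupportFunctionals

variable {E : Type*} [NormedAddCommGroup E] [NormedSpace ℝ E]

theorem apply_eq_norm_of_hasFDerivAt_norm {x : E} {f : StrongDual ℝ E}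
    (hf : HasFDerivAt (‖·‖) f x) : f x = ‖x‖ := by
  rw [← hf.differentiableAt.fderiv_norm_self, hf.fderiv]

theorem eq_of_hasFDerivAt_norm {x : E} {f g : StrongDual ℝ E} (hf : HasFDerivAt (‖·‖) f x)
    (hg : ‖g‖ ≤ 1) (hgx : g x = ‖x‖) : g = f := by
  have hmin : IsLocalMin (fun v ↦ ‖v‖ - g v) x := Eventually.of_forall fun v ↦ by
    have hgv : g v ≤ ‖v‖ := (le_abs_self _).trans (g.le_of_opNorm_le_of_le hg le_rfl |>.trans
      (one_mul _).le)
    simp only [hgx, sub_self]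
    linarith
  exact (sub_eq_zero.1 (hmin.hasFDerivAt_eq_zero (hf.sub g.hasFDerivAt))).symm

theorem eq_neg_of_two_le_norm_sub {x y : E} {f g : StrongDual ℝ E} (hx : ‖x‖ = 1) (hy : ‖y‖ = 1)
    (hf : HasFDerivAt (‖·‖) f x) (hg : HasFDerivAt (‖·‖) g y) (hxy : 2 ≤ ‖x - y‖) :
    f = -g := by
  obtain ⟨k, hk, hkxy⟩ := exists_dual_vector'' ℝ (x - y)
  have hk_le (v : E) : |k v| ≤ ‖v‖ := by simpa using k.le_of_opNorm_le hk v
  have hkx : k x ≤ ‖x‖ := (le_abs_self _).trans (hk_le x)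
  have hky : -k y ≤ ‖y‖ := (neg_le_abs _).trans (hk_le y)
  simp only [map_sub, RCLike.ofReal_real_eq_id, id] at hkxy
  have hkf : k = f := eq_of_hasFDerivAt_norm hf hk (by linarith)
  have hkg : -k = g := eq_of_hasFDerivAt_norm hg (by rwa [norm_neg]) (by
    rw [neg_apply]; linarith)
  rw [← hkf, ← hkg, neg_neg]

variable (E) in
/-- The derivatives of the norm at the smooth points of the unit sphere. For a polyhedral norm
these are the functionals defining the facets of the unit ball. -/
def smoothSupportFunctionals : Set (StrongDual ℝ E) :=
  {f | ∃ x : E, ‖x‖ = 1 ∧ HasFDerivAt (‖·‖) f x}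

theorem abs_apply_le_norm_of_mem_smoothSupportFunctionals {f : StrongDual ℝ E}
    (hf : f ∈ smoothSupportFunctionals E) (x : E) : |f x| ≤ ‖x‖ := by
  obtain ⟨y, -, hfy⟩ := hf
  simpa using f.le_of_opNorm_le (hfy.le_of_lipschitz lipschitzWith_one_norm) x

theorem neg_mem_smoothSupportFunctionals {f : StrongDual ℝ E}
    (hf : f ∈ smoothSupportFunctionals E) : -f ∈ smoothSupportFunctionals E := by
  obtain ⟨x, hx, hfx⟩ := hf
  exact ⟨(-1 : ℝ) • x, by simpa using hx, hfx.hasFDerivAt_norm_smul_neg (by norm_num)⟩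

theorem ne_neg_self_of_mem_smoothSupportFunctionals {f : StrongDual ℝ E}
    (hf : f ∈ smoothSupportFunctionals E) : f ≠ -f := by
  obtain ⟨x, hx, hfx⟩ := hf
  intro h
  have hself : f x = 1 := (apply_eq_norm_of_hasFDerivAt_norm hfx).trans hx
  have hneg : f x = -f x := DFunLike.congr_fun h x
  linarith

theorem fderiv_norm_mem_smoothSupportFunctionals {x : E} (hx : x ≠ 0)
    (h : DifferentiableAt ℝ (‖·‖) x) : fderiv ℝ (‖·‖) x ∈ smoothSupportFunctionals E :=
  ⟨‖x‖⁻¹ • x, norm_smul_inv_norm (𝕜 := ℝ) hx,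
    h.hasFDerivAt.hasFDerivAt_norm_smul_pos (inv_pos.2 (norm_pos_iff.2 hx))⟩

/-- The unit balls centred at the smooth points have a common point: by
`eq_neg_of_two_le_norm_sub`, centres of non-antipodal functionals are at distance less than `2`. -/
theorem exists_forall_pos_of_smoothSupportFunctionals
    (hE : ∀ ε > 0, IsCoarselyHelly ε fun x : E ↦ ‖x‖) {T : Set (StrongDual ℝ E)} (hT : T.Finite)
    (hT_smooth : T ⊆ smoothSupportFunctionals E) (hT_neg : ∀ f ∈ T, ∀ g ∈ T, f ≠ -g) :
    ∃ y, ∀ f ∈ T, 0 < f y := by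
  have hT_point : ∀ f ∈ T, ∃ x : E, ‖x‖ = 1 ∧ HasFDerivAt (‖·‖) f x := hT_smooth
  choose! x hx hfx using hT_point
  obtain ⟨y, hy⟩ := exists_norm_sub_lt_one hE (hT.image x) (by
    rintro _ ⟨f, hf, rfl⟩ _ ⟨g, hg, rfl⟩
    by_contra! hdist
    exact hT_neg f hf g hg
      (eq_neg_of_two_le_norm_sub (hx f hf) (hx g hg) (hfx f hf) (hfx g hg) hdist))
  refine ⟨y, fun f hf ↦ ?_⟩
  have hself : f (x f) = 1 := (apply_eq_norm_of_hasFDerivAt_norm (hfx f hf)).trans (hx f hf)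
  have hle : f (x f - y) ≤ ‖x f - y‖ :=
    (le_abs_self _).trans (abs_apply_le_norm_of_mem_smoothSupportFunctionals (hT_smooth hf) _)
  rw [map_sub, hself] at hle
  linarith [hy (x f) (mem_image_of_mem x hf)]

theorem linearIndependent_of_smoothSupportFunctionals
    (hE : ∀ ε > 0, IsCoarselyHelly ε fun x : E ↦ ‖x‖) {T : Set (StrongDual ℝ E)}
    (hT_smooth : T ⊆ smoothSupportFunctionals E) (hT_neg : ∀ f ∈ T, ∀ g ∈ T, f ≠ -g) :
    LinearIndependent ℝ ((↑) : T → StrongDual ℝ E) := by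
  rw [linearIndependent_iff']
  intro s c hsum i hi
  -- Flipping signs to match those of the coefficients turns the relation into a sum of
  -- nonnegative terms at a point where all flipped functionals are positive.
  let σ (f : T) : StrongDual ℝ E := if 0 ≤ c f then f else -f
  obtain ⟨y, hy⟩ := exists_forall_pos_of_smoothSupportFunctionals hE (s.finite_toSet.image σ)
    (by
      rintro _ ⟨f, -, rfl⟩
      dsimp only [σ]
      split_ifs
      exacts [hT_smooth f.2, neg_mem_smoothSupportFunctionals (hT_smooth f.2)])
    (by
      rintro _ ⟨f, -, rfl⟩ _ ⟨g, -, rfl⟩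
      dsimp only [σ]
      split_ifs with hf hg hg <;> intro h
      · exact hT_neg f f.2 g g.2 h
      · exact hg (Subtype.ext ((neg_neg (g : StrongDual ℝ E)) ▸ h) ▸ hf)
      · exact hf (Subtype.ext (neg_injective h) ▸ hg)
      · exact hT_neg f f.2 g g.2 (neg_injective h))
  have hsign (f : T) (hf : f ∈ s) : 0 ≤ c f * f.1 y ∧ (c f * f.1 y = 0 → c f = 0) := by
    have hpos : 0 < σ f y := hy _ (mem_image_of_mem σ hf)
    dsimp only [σ] at hpos
    split_ifs at hpos with hc
    · exact ⟨mul_nonneg hc hpos.le, fun h ↦ (mul_eq_zero.1 h).resolve_right hpos.ne'⟩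
    · rw [neg_apply, neg_pos] at hpos
      exact ⟨(mul_pos_of_neg_of_neg (not_le.1 hc) hpos).le,
        fun h ↦ (mul_eq_zero.1 h).resolve_right hpos.ne⟩
  have hsum_y : ∑ f ∈ s, c f * f.1 y = 0 := by simpa using DFunLike.congr_fun hsum y
  exact (hsign i hi).2 ((Finset.sum_eq_zero_iff_of_nonneg fun f hf ↦ (hsign f hf).1).1 hsum_y i hi)

variable (E) in
theorem exists_half_smoothSupportFunctionals :
    ∃ T ⊆ smoothSupportFunctionals E, (∀ f ∈ T, ∀ g ∈ T, f ≠ -g) ∧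
      ∀ f ∈ smoothSupportFunctionals E, f ∈ T ∨ -f ∈ T := by
  let T := {f ∈ smoothSupportFunctionals E | WellOrderingRel f (-f)}
  refine ⟨T, sep_subset _ _, ?_, fun f hf ↦ ?_⟩
  · rintro _ hf g hg rfl
    have hrel : WellOrderingRel (-g) g := by simpa using hf.2
    exact asymm hg.2 hrel
  · rcases trichotomous_of WellOrderingRel f (-f) with h | h | h
    · exact Or.inl ⟨hf, h⟩
    · exact (ne_neg_self_of_mem_smoothSupportFunctionals hf h).elim
    · exact Or.inr ⟨neg_mem_smoothSupportFunctionals hf, (neg_neg f).symm ▸ h⟩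

variable [FiniteDimensional ℝ E]

theorem norm_eq_norm_of_forall_smoothSupportFunctionals {ι : Type*} [Fintype ι]
    (Φ : E →L[ℝ] (ι → ℝ))
    (hΦ_mem : ∀ i, (ContinuousLinearMap.proj i).comp Φ ∈ smoothSupportFunctionals E)
    (hΦ_all : ∀ f ∈ smoothSupportFunctionals E, ∃ i, ∀ x, |f x| = |Φ x i|) (x : E) :
    ‖Φ x‖ = ‖x‖ := by
  suffices h : (fun x ↦ ‖Φ x‖) = fun x ↦ ‖x‖ from congrFun h x
  refine Continuous.ext_on dense_differentiableAt_norm Φ.continuous.norm continuous_norm ?_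
  intro x (hx : DifferentiableAt ℝ (‖·‖) x)
  obtain rfl | hx₀ := eq_or_ne x 0
  · simp
  refine le_antisymm ((pi_norm_le_iff_of_nonneg (norm_nonneg x)).2 fun i ↦ ?_) ?_
  · exact abs_apply_le_norm_of_mem_smoothSupportFunctionals (hΦ_mem i) x
  · obtain ⟨i, hi⟩ := hΦ_all _ (fderiv_norm_mem_smoothSupportFunctionals hx₀ hx)
    calc ‖x‖ = |fderiv ℝ (‖·‖) x x| := by rw [hx.fderiv_norm_self, abs_norm]
      _ = ‖Φ x i‖ := hi x
      _ ≤ ‖Φ x‖ := norm_le_pi_norm _ i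

/-- A finite-dimensional case of Nachbin's theorem. -/
theorem exists_linearIsometryEquiv_pi_of_isCoarselyHelly
    (hE : ∀ ε > 0, IsCoarselyHelly ε fun x : E ↦ ‖x‖) :
    Nonempty (E ≃ₗᵢ[ℝ] (Fin (finrank ℝ E) → ℝ)) := by
  obtain ⟨T, hT_smooth, hT_neg, hT_all⟩ := exists_half_smoothSupportFunctionals E
  have hT_li := linearIndependent_of_smoothSupportFunctionals hE hT_smooth hT_neg
  have : Finite T := hT_li.finite
  have := Fintype.ofFinite T
  let Φ : E →L[ℝ] (T → ℝ) := ContinuousLinearMap.pi Subtype.val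
  have hΦ (x : E) : ‖Φ x‖ = ‖x‖ :=
    norm_eq_norm_of_forall_smoothSupportFunctionals Φ (fun f ↦ hT_smooth f.2) (fun f hf ↦
      (hT_all f hf).elim (fun h ↦ ⟨⟨f, h⟩, fun _ ↦ rfl⟩)
        fun h ↦ ⟨⟨-f, h⟩, fun x ↦ (abs_neg (f x)).symm⟩) x
  let Φᵢ : E →ₗᵢ[ℝ] (T → ℝ) := ⟨Φ, hΦ⟩
  have hcard : Fintype.card T = finrank ℝ E := by
    refine le_antisymm ?_ ?_
    · simpa [← (LinearMap.toContinuousLinearMap (𝕜 := ℝ) (E := E) (F' := ℝ)).finrank_eq] using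
        hT_li.fintype_card_le_finrank
    · simpa using LinearMap.finrank_le_finrank_of_injective Φᵢ.injective
  let reindex := LinearEquiv.funCongrLeft ℝ ℝ (Fintype.equivFinOfCardEq hcard).symm
  exact ⟨(Φᵢ.toLinearIsometryEquiv (by simp [hcard])).trans
    ⟨reindex, (Fintype.equivFinOfCardEq hcard).symm.surjective.pi_norm_comp⟩⟩

end SmoothSupportFunctionals

theorem exists_linearEquiv_pi_of_isCoarselyHelly {E : Type*} [AddCommGroup E] [Module ℝ E]
    [FiniteDimensional ℝ E] (p : Seminorm ℝ E) (hp : ∀ x, p x = 0 → x = 0)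
    (hH : ∀ ε > 0, IsCoarselyHelly ε p) :
    ∃ φ : E ≃ₗ[ℝ] (Fin (finrank ℝ E) → ℝ), ∀ x, ‖φ x‖ = p x := by
  let : NormedAddCommGroup E :=
    AddGroupNorm.toNormedAddCommGroup ⟨p.toAddGroupSeminorm, hp⟩
  let : NormedSpace ℝ E := ⟨fun c x ↦ (map_smul_eq_mul p c x).le⟩
  obtain ⟨φ⟩ := exists_linearIsometryEquiv_pi_of_isCoarselyHelly hH
  exact ⟨φ.toLinearEquiv, φ.norm_map⟩

/-- A real function on a real vector space that is subadditive and even up to the error `K` and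
bounded on segments from the origin. -/
structure IsCoarseSeminorm {E : Type*} [AddCommGroup E] [Module ℝ E] (K : ℝ) (f : E → ℝ) :
    Prop where
  nonneg (x : E) : 0 ≤ f x
  add_le (x y : E) : f (x + y) ≤ f x + f y + K
  neg_le (x : E) : f (-x) ≤ f x + K
  bddAbove_segment (x : E) : BddAbove ((fun s : ℝ ↦ f (s • x)) '' Icc 0 1)

theorem le_of_tendsto_div_atTop {u v : ℝ → ℝ} {a b C : ℝ} (huv : ∀ t, u t ≤ v t + C)
    (hu : Tendsto (fun t ↦ u t / t) atTop (𝓝 a)) (hv : Tendsto (fun t ↦ v t / t) atTop (𝓝 b)) :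
    a ≤ b := by
  have hC : Tendsto (fun t ↦ v t / t + C / t) atTop (𝓝 b) := by
    simpa using hv.add (tendsto_const_nhds.div_atTop tendsto_id)
  refine le_of_tendsto_of_tendsto hu hC ?_
  filter_upwards [eventually_gt_atTop 0] with t ht
  rw [← add_div]
  exact div_le_div_of_nonneg_right (huv t) ht.le

namespace IsCoarseSeminorm

variable {E : Type*} [AddCommGroup E] [Module ℝ E] {K R : ℝ} {f : E → ℝ}

theorem subadditive (hf : IsCoarseSeminorm K f) (x : E) :
    Subadditive fun m : ℕ ↦ f ((m : ℝ) • x) + K := fun m n ↦ by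
  have hadd := hf.add_le ((m : ℝ) • x) ((n : ℝ) • x)
  rw [← add_smul, ← Nat.cast_add] at hadd
  linarith

theorem error_nonneg (hf : IsCoarseSeminorm K f) : 0 ≤ K := by
  simpa using hf.neg_le 0

theorem bddBelow_range_div (hf : IsCoarseSeminorm K f) (x : E) :
    BddBelow (range fun m : ℕ ↦ (f ((m : ℝ) • x) + K) / m) :=
  ⟨0, by
    rintro _ ⟨m, rfl⟩
    exact div_nonneg (add_nonneg (hf.nonneg _) hf.error_nonneg) m.cast_nonneg⟩

theorem tendsto_natCast (hf : IsCoarseSeminorm K f) (x : E) :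
    Tendsto (fun m : ℕ ↦ f ((m : ℝ) • x) / m) atTop (𝓝 (hf.subadditive x).lim) := by
  have hK : Tendsto (fun m : ℕ ↦ K / (m : ℝ)) atTop (𝓝 0) :=
    tendsto_const_nhds.div_atTop tendsto_natCast_atTop_atTop
  simpa [add_div] using ((hf.subadditive x).tendsto_lim (hf.bddBelow_range_div x)).sub hK

theorem exists_abs_sub_natFloor_le (hf : IsCoarseSeminorm K f) (x : E) :
    ∃ B, ∀ t : ℝ, 0 ≤ t → |f (t • x) - f ((⌊t⌋₊ : ℝ) • x)| ≤ B := by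
  obtain ⟨B, hB⟩ := hf.bddAbove_segment x
  refine ⟨B + 2 * K, fun t ht ↦ ?_⟩
  have hfract : f ((t - ⌊t⌋₊) • x) ≤ B := hB ⟨t - ⌊t⌋₊,
    ⟨sub_nonneg.2 (Nat.floor_le ht), by linarith [Nat.lt_floor_add_one t]⟩, rfl⟩
  have hupper := hf.add_le ((⌊t⌋₊ : ℝ) • x) ((t - ⌊t⌋₊) • x)
  have hlower := hf.add_le (t • x) (-((t - ⌊t⌋₊) • x))
  rw [← add_smul, add_sub_cancel] at hupper
  rw [← neg_smul, ← add_smul, neg_sub, add_sub_cancel] at hlower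
  have hneg := hf.neg_le ((t - ⌊t⌋₊) • x)
  rw [← neg_smul, neg_sub] at hneg
  rw [abs_le]
  constructor <;> linarith [hf.error_nonneg]

theorem tendsto_div_lim (hf : IsCoarseSeminorm K f) (x : E) :
    Tendsto (fun t : ℝ ↦ f (t • x) / t) atTop (𝓝 (hf.subadditive x).lim) := by
  obtain ⟨B, hB⟩ := hf.exists_abs_sub_natFloor_le x
  have hfloor : Tendsto (fun t : ℝ ↦ f ((⌊t⌋₊ : ℝ) • x) / ⌊t⌋₊ * (⌊t⌋₊ / t)) atTop
      (𝓝 (hf.subadditive x).lim) := by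
    simpa using ((hf.tendsto_natCast x).comp tendsto_nat_floor_atTop).mul
      (tendsto_nat_floor_div_atTop (R := ℝ))
  refine (tendsto_iff_of_dist ?_).1 hfloor
  refine squeeze_zero' (Eventually.of_forall fun _ ↦ dist_nonneg) ?_
    (tendsto_const_nhds.div_atTop tendsto_id : Tendsto (fun t : ℝ ↦ B / t) atTop (𝓝 0))
  filter_upwards [eventually_ge_atTop 1] with t ht
  have ht₀ : 0 < t := by linarith
  have hfloor_ne : (⌊t⌋₊ : ℝ) ≠ 0 := by exact_mod_cast (Nat.floor_pos.2 ht).ne'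
  rw [div_mul_div_cancel₀ hfloor_ne, dist_comm, Real.dist_eq, ← sub_div, abs_div, abs_of_pos ht₀]
  exact div_le_div_of_nonneg_right (hB t ht₀.le) ht₀.le

theorem lim_smul_of_pos (hf : IsCoarseSeminorm K f) {c : ℝ} (hc : 0 < c) (x : E) :
    (hf.subadditive (c • x)).lim = c * (hf.subadditive x).lim := by
  refine tendsto_nhds_unique (hf.tendsto_div_lim (c • x)) ?_
  refine (((hf.tendsto_div_lim x).comp (tendsto_id.const_mul_atTop hc)).const_mul c).congr
    fun t ↦ ?_
  simp only [Function.comp_apply, id, smul_smul, mul_comm t c]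
  rw [mul_div_assoc', mul_div_mul_left _ _ hc.ne']

theorem lim_neg_le (hf : IsCoarseSeminorm K f) (x : E) :
    (hf.subadditive (-x)).lim ≤ (hf.subadditive x).lim :=
  le_of_tendsto_div_atTop (fun t ↦ smul_neg t x ▸ hf.neg_le _) (hf.tendsto_div_lim (-x))
    (hf.tendsto_div_lim x)

theorem lim_zero (hf : IsCoarseSeminorm K f) : (hf.subadditive 0).lim = 0 :=
  tendsto_nhds_unique (hf.tendsto_div_lim 0) <| by
    simpa using tendsto_const_nhds.div_atTop tendsto_id

/-- The homogenization `x ↦ lim f (t • x) / t` of a coarse seminorm `f`. -/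
noncomputable def homogenization (hf : IsCoarseSeminorm K f) : Seminorm ℝ E :=
  .ofSMulLE (fun x ↦ (hf.subadditive x).lim) hf.lim_zero
    (fun x y ↦ le_of_tendsto_div_atTop (v := fun t ↦ f (t • x) + f (t • y))
      (fun t ↦ smul_add t x y ▸ hf.add_le _ _) (hf.tendsto_div_lim (x + y))
      (by simpa [add_div] using (hf.tendsto_div_lim x).add (hf.tendsto_div_lim y)))
    (fun r x ↦ by
      rcases lt_trichotomy r 0 with hr | rfl | hr
      · rw [Real.norm_of_nonpos hr.le, ← hf.lim_smul_of_pos (neg_pos.2 hr)]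
        simpa using hf.lim_neg_le (-r • x)
      · simpa using hf.lim_zero.le
      · rw [Real.norm_of_nonneg hr.le, hf.lim_smul_of_pos hr])

theorem tendsto_homogenization (hf : IsCoarseSeminorm K f) (x : E) :
    Tendsto (fun t : ℝ ↦ f (t • x) / t) atTop (𝓝 (hf.homogenization x)) :=
  hf.tendsto_div_lim x

theorem homogenization_le (hf : IsCoarseSeminorm K f) (x : E) : hf.homogenization x ≤ f x + K := by
  simpa only [Nat.cast_one, one_smul, div_one] using!
    (hf.subadditive x).lim_le_div (hf.bddBelow_range_div x) one_ne_zero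

theorem le_mul_homogenization (hf : IsCoarseSeminorm K f) (q : Seminorm ℝ E) {M C : ℝ}
    (h : ∀ x, q x ≤ M * f x + C) (x : E) : q x ≤ M * hf.homogenization x := by
  refine le_of_tendsto_div_atTop (u := fun t ↦ q (t • x)) (fun t ↦ h (t • x)) ?_
    (by simpa [mul_div_assoc] using (hf.tendsto_homogenization x).const_mul M)
  refine tendsto_const_nhds.congr' ?_
  filter_upwards [eventually_gt_atTop 0] with t ht
  rw [map_smul_eq_mul, Real.norm_of_nonneg ht.le, mul_div_cancel_left₀ _ ht.ne']

theorem isCoarselyHelly_homogenization (hf : IsCoarseSeminorm K f) (hH : IsCoarselyHelly R f)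
    {ε : ℝ} (hε : 0 < ε) : IsCoarselyHelly ε hf.homogenization := by
  intro s r hs hr
  have hfar : ∀ᶠ t : ℝ in atTop, ∀ q ∈ s ×ˢ s, f (t • (q.1 - q.2)) / t ≤ 2 * (r + ε / 2) :=
    (eventually_all_finite (hs.prod hs)).2 fun q hq ↦
      (hf.tendsto_homogenization _).eventually_le_const (by linarith [hr _ hq.1 _ hq.2])
  obtain ⟨t, hts, htR, ht⟩ := (hfar.and ((eventually_ge_atTop ((R + K) / (ε / 2))).and
    (eventually_gt_atTop 0))).exists
  obtain ⟨z, hz⟩ := hH ((t • ·) '' s) (t * (r + ε / 2)) (hs.image _) (by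
    rintro _ ⟨x, hx, rfl⟩ _ ⟨y, hy, rfl⟩
    have hxy := (div_le_iff₀ ht).1 (hts (x, y) ⟨hx, hy⟩)
    rw [← smul_sub]
    linarith)
  refine ⟨t⁻¹ • z, fun x hx ↦ ?_⟩
  have hscale : t * hf.homogenization (x - t⁻¹ • z) ≤ t * (r + ε) := by
    calc t * hf.homogenization (x - t⁻¹ • z) = hf.homogenization (t • x - z) := by
          rw [← smul_inv_smul₀ ht.ne' z, ← smul_sub, map_smul_eq_mul, Real.norm_of_nonneg ht.le,
            smul_inv_smul₀ ht.ne']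
      _ ≤ f (t • x - z) + K := hf.homogenization_le _
      _ ≤ t * (r + ε / 2) + R + K := by linarith [hz _ (mem_image_of_mem _ hx)]
      _ ≤ t * (r + ε) := by linarith [(div_le_iff₀ (half_pos hε)).1 htR]
  exact le_of_mul_le_mul_left hscale ht

end IsCoarseSeminorm

section Lattice

variable {ι : Type*}

variable (ι) in
/-- The inclusion of `ℤ^ι` as the standard lattice of `ℝ^ι`. -/
def intCastPi : (ι → ℤ) →+ (ι → ℝ) := (Int.castAddHom ℝ).compLeft ι

/-- The coordinatewise floor, which rounds points of `ℝ^ι` to the standard lattice. -/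
noncomputable def floorPi (x : ι → ℝ) : ι → ℤ := fun i ↦ ⌊x i⌋

theorem floorPi_sub_intCastPi (x : ι → ℝ) (a : ι → ℤ) :
    floorPi (x - intCastPi ι a) = floorPi x - a :=
  funext fun i ↦ Int.floor_sub_intCast (x i) (a i)

section Norm

variable [Fintype ι]

theorem norm_intCastPi (a : ι → ℤ) : ‖intCastPi ι a‖ = ‖a‖ := by
  simp only [Pi.norm_def]
  rfl

theorem norm_intCastPi_floorPi_sub_le (x : ι → ℝ) : ‖intCastPi ι (floorPi x) - x‖ ≤ 1 :=
  (pi_norm_le_iff_of_nonneg zero_le_one).2 fun i ↦ by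
    change |(⌊x i⌋ : ℝ) - x i| ≤ 1
    rw [abs_le]
    constructor <;> linarith [Int.floor_le (x i), Int.lt_floor_add_one (x i)]

theorem norm_intCastPi_floorPi_add_sub_le (x y : ι → ℝ) :
    ‖intCastPi ι (floorPi (x + y)) - intCastPi ι (floorPi x + floorPi y)‖ ≤ 3 := by
  calc ‖intCastPi ι (floorPi (x + y)) - intCastPi ι (floorPi x + floorPi y)‖
      = ‖(intCastPi ι (floorPi (x + y)) - (x + y)) - (intCastPi ι (floorPi x) - x)
          - (intCastPi ι (floorPi y) - y)‖ := by rw [map_add]; congr 1; abel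
    _ ≤ 1 + 1 + 1 := norm_sub_le_of_le (norm_sub_le_of_le (norm_intCastPi_floorPi_sub_le _)
        (norm_intCastPi_floorPi_sub_le x)) (norm_intCastPi_floorPi_sub_le y)
    _ = 3 := by norm_num

theorem norm_intCastPi_floorPi_neg_sub_le (x : ι → ℝ) :
    ‖intCastPi ι (floorPi (-x)) - intCastPi ι (-floorPi x)‖ ≤ 2 := by
  calc ‖intCastPi ι (floorPi (-x)) - intCastPi ι (-floorPi x)‖
      = ‖(intCastPi ι (floorPi (-x)) - -x) + (intCastPi ι (floorPi x) - x)‖ := by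
        rw [map_neg]; congr 1; abel
    _ ≤ 1 + 1 := norm_add_le_of_le (norm_intCastPi_floorPi_sub_le _)
        (norm_intCastPi_floorPi_sub_le x)
    _ = 2 := by norm_num

theorem exists_le_add_of_norm_intCastPi_sub_le (D : AddGroupSeminorm (ι → ℤ)) (c : ℝ) :
    ∃ K, ∀ a b, ‖intCastPi ι a - intCastPi ι b‖ ≤ c → D a ≤ D b + K := by
  obtain ⟨K, hK⟩ := ((isCompact_closedBall (0 : ι → ℤ) c).finite_of_discrete.image D).bddAbove
  refine ⟨K, fun a b hab ↦ ?_⟩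
  rw [← map_sub, norm_intCastPi, ← mem_closedBall_zero_iff] at hab
  calc D a = D (b + (a - b)) := by rw [add_sub_cancel]
    _ ≤ D b + D (a - b) := map_add_le_add D b (a - b)
    _ ≤ D b + K := by gcongr; exact hK (mem_image_of_mem D hab)

end Norm

theorem bddAbove_image_floorPi_segment [Finite ι] (D : AddGroupSeminorm (ι → ℤ)) (x : ι → ℝ) :
    BddAbove ((fun s : ℝ ↦ D (floorPi (s • x))) '' Icc 0 1) := by
  have := Fintype.ofFinite ι
  obtain ⟨B, hB⟩ := exists_le_add_of_norm_intCastPi_sub_le D (‖x‖ + 1)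
  refine ⟨D 0 + B, ?_⟩
  rintro _ ⟨s, ⟨hs₀, hs₁⟩, rfl⟩
  refine hB _ _ ?_
  rw [map_zero, sub_zero]
  calc ‖intCastPi ι (floorPi (s • x))‖
      ≤ ‖s • x‖ + ‖intCastPi ι (floorPi (s • x)) - s • x‖ := norm_le_insert' _ _
    _ ≤ ‖x‖ + 1 := by
      refine add_le_add ?_ (norm_intCastPi_floorPi_sub_le _)
      rw [norm_smul, Real.norm_of_nonneg hs₀]
      exact mul_le_of_le_one_left (norm_nonneg x) hs₁

theorem exists_isCoarseSeminorm_floorPi [Finite ι] (D : AddGroupSeminorm (ι → ℤ)) :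
    ∃ K, IsCoarseSeminorm K fun x ↦ D (floorPi x) := by
  have := Fintype.ofFinite ι
  obtain ⟨K, hK⟩ := exists_le_add_of_norm_intCastPi_sub_le D 3
  have hadd (x y : ι → ℝ) : D (floorPi (x + y)) ≤ D (floorPi x) + D (floorPi y) + K :=
    (hK _ _ (norm_intCastPi_floorPi_add_sub_le x y)).trans
      (by gcongr; exact map_add_le_add D _ _)
  have hneg (x : ι → ℝ) : D (floorPi (-x)) ≤ D (floorPi x) + K := by
    rw [← map_neg_eq_map D (floorPi x)]
    exact hK _ _ ((norm_intCastPi_floorPi_neg_sub_le x).trans (by norm_num))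
  exact ⟨K, fun _ ↦ apply_nonneg D _, hadd, hneg, bddAbove_image_floorPi_segment D⟩

/-- The homogenization of a length function on `ℤ^ι`, extended to `ℝ^ι` by rounding. -/
noncomputable def stableSeminorm [Finite ι] (D : AddGroupSeminorm (ι → ℤ)) :
    Seminorm ℝ (ι → ℝ) :=
  (exists_isCoarseSeminorm_floorPi D).choose_spec.homogenization

theorem exists_isCoarselyHelly_floorPi [Finite ι] {D : AddGroupSeminorm (ι → ℤ)} {R : ℝ}
    (hD : IsCoarselyHelly R D) : ∃ R', IsCoarselyHelly R' fun x ↦ D (floorPi x) := by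
  have := Fintype.ofFinite ι
  obtain ⟨K, hK⟩ := exists_le_add_of_norm_intCastPi_sub_le D 3
  refine ⟨K / 2 + R, fun s r hs hr ↦ ?_⟩
  obtain ⟨z, hz⟩ := hD (floorPi '' s) (r + K / 2) (hs.image _) (by
    rintro _ ⟨x, hx, rfl⟩ _ ⟨y, hy, rfl⟩
    refine (hK _ (floorPi (x - y)) ?_).trans (by linarith [hr x hx y hy])
    have hsum := norm_intCastPi_floorPi_add_sub_le (x - y) y
    rwa [sub_add_cancel, map_add, ← sub_sub, sub_right_comm, ← map_sub] at hsum)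
  refine ⟨intCastPi ι z, fun x hx ↦ ?_⟩
  beta_reduce
  rw [floorPi_sub_intCastPi, ← add_assoc]
  exact hz _ (mem_image_of_mem _ hx)

theorem isCoarselyHelly_stableSeminorm [Finite ι] {D : AddGroupSeminorm (ι → ℤ)} {R ε : ℝ}
    (hD : IsCoarselyHelly R D) (hε : 0 < ε) : IsCoarselyHelly ε (stableSeminorm D) :=
  have ⟨_, hR'⟩ := exists_isCoarselyHelly_floorPi hD
  IsCoarseSeminorm.isCoarselyHelly_homogenization _ hR' hε

theorem eq_zero_of_stableSeminorm_eq_zero [Fintype ι] {D : AddGroupSeminorm (ι → ℤ)} {M C : ℝ}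
    (hD : ∀ a, ‖a‖ ≤ M * D a + C) {x : ι → ℝ}
    (hx : stableSeminorm D x = 0) : x = 0 := by
  have hround (y : ι → ℝ) : ‖y‖ ≤ M * D (floorPi y) + (C + 1) := by
    calc ‖y‖ ≤ ‖intCastPi ι (floorPi y)‖ + ‖intCastPi ι (floorPi y) - y‖ := norm_le_insert _ _
      _ ≤ (M * D (floorPi y) + C) + 1 := by
        rw [norm_intCastPi]
        exact add_le_add (hD _) (norm_intCastPi_floorPi_sub_le y)
      _ = M * D (floorPi y) + (C + 1) := add_assoc _ _ _
  refine norm_le_zero_iff.1 <| calc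
    ‖x‖ ≤ M * stableSeminorm D x := (exists_isCoarseSeminorm_floorPi D).choose_spec
      |>.le_mul_homogenization (normSeminorm ℝ (ι → ℝ)) hround x
    _ = 0 := by rw [hx, mul_zero]

theorem stableSeminorm_map_le [Finite ι] {D : AddGroupSeminorm (ι → ℤ)} {F : (ι → ℤ) → (ι → ℤ)}
    {L : (ι → ℝ) →ₗ[ℝ] (ι → ℝ)} (hL : ∀ a, L (intCastPi ι a) = intCastPi ι (F a)) {C : ℝ}
    (hF : ∀ a, D (F a) ≤ D a + C) (x : ι → ℝ) : stableSeminorm D (L x) ≤ stableSeminorm D x := by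
  have := Fintype.ofFinite ι
  obtain ⟨K, hK⟩ : ∃ K, ∀ y, stableSeminorm D y ≤ D (floorPi y) + K :=
    ⟨_, (exists_isCoarseSeminorm_floorPi D).choose_spec.homogenization_le⟩
  let L' := LinearMap.toContinuousLinearMap L
  obtain ⟨B, hB⟩ := exists_le_add_of_norm_intCastPi_sub_le D (1 + ‖L'‖)
  have hround (y : ι → ℝ) : D (floorPi (L y)) ≤ D (F (floorPi y)) + B := by
    refine hB _ _ ?_
    calc ‖intCastPi ι (floorPi (L y)) - intCastPi ι (F (floorPi y))‖
        = ‖(intCastPi ι (floorPi (L y)) - L y) - L' (intCastPi ι (floorPi y) - y)‖ := by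
          simp [L', hL]
      _ ≤ 1 + ‖L'‖ := norm_sub_le_of_le (norm_intCastPi_floorPi_sub_le _)
          (L'.unit_le_opNorm _ (norm_intCastPi_floorPi_sub_le y))
  have hL_le (y : ι → ℝ) : (stableSeminorm D).comp L y ≤ 1 * D (floorPi y) + (K + B + C) := by
    rw [Seminorm.comp_apply]
    linarith [hK (L y), hround y, hF (floorPi y)]
  rw [← one_mul (stableSeminorm D x)]
  exact (exists_isCoarseSeminorm_floorPi D).choose_spec.le_mul_homogenization _ hL_le x

end Lattice

section Graph

variable {V : Type*} {Γ : SimpleGraph V}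

theorem dist_map_le {V' : Type*} {Γ' : SimpleGraph V'} (hΓ : Γ.Connected) (φ : Γ →g Γ') (u v : V) :
    Γ'.dist (φ u) (φ v) ≤ Γ.dist u v := by
  obtain ⟨p, hp⟩ := hΓ.exists_walk_length_eq_dist u v
  rw [← hp, ← p.length_map φ]
  exact SimpleGraph.dist_le _

/-- Subdividing a geodesic of the graph and moving its vertices to nearby points of the dense
image of `q` gives a chain of points of `X` with consecutive distances at most `M`. -/
theorem dist_le_mul_dist_add_one {X : Type*} [PseudoMetricSpace X] (hΓ : Γ.Connected) {q : X → V}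
    {R : ℕ} {M : ℝ} (hdense : ∀ w, ∃ x, Γ.dist w (q x) ≤ R)
    (hM : ∀ x y, Γ.dist (q x) (q y) ≤ 2 * R + 1 → dist x y ≤ M) (x y : X) :
    dist x y ≤ M * (Γ.dist (q x) (q y) + 1) := by
  have hwalk {u w : V} (p : Γ.Walk u w) : ∀ x y, Γ.dist u (q x) ≤ R → Γ.dist w (q y) ≤ R →
      dist x y ≤ M * (p.length + 1) := by
    induction p with
    | @nil u =>
      intro x y hx hy
      have htri := hΓ.dist_triangle (u := q x) (v := u) (w := q y)
      rw [Γ.dist_comm (u := q x) (v := u)] at htri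
      simpa using hM x y (by omega)
    | @cons u u' w hadj p ih =>
      intro x y hx hy
      obtain ⟨x', hx'⟩ := hdense u'
      have htri := hΓ.dist_triangle (u := q x) (v := u) (w := q x')
      have htri' := hΓ.dist_triangle (u := u) (v := u') (w := q x')
      rw [SimpleGraph.dist_eq_one_iff_adj.2 hadj] at htri'
      rw [Γ.dist_comm (u := q x) (v := u)] at htri
      calc dist x y ≤ dist x x' + dist x' y := dist_triangle x x' y
        _ ≤ M + M * (p.length + 1) := add_le_add (hM x x' (by omega)) (ih x' y hx' hy)
        _ = M * ((p.cons hadj).length + 1) := by rw [SimpleGraph.Walk.length_cons]; push_cast; ring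
  obtain ⟨p, hp⟩ := hΓ.exists_walk_length_eq_dist (q x) (q y)
  rw [← hp]
  exact hwalk p x y (by simp) (by simp)

theorem isCoarselyHelly_of_isHellyGraph (hΓ : IsHellyGraph Γ) {X : Type} [AddGroup X] {f : X → ℝ}
    {q : X → V} {R : ℕ} (hq : ∀ x y, Γ.dist (q x) (q y) = f (x - y))
    (hdense : ∀ w, ∃ x, Γ.dist w (q x) ≤ R) : IsCoarselyHelly (R + 1) f := by
  intro s r _ hr
  have hr_ceil : r ≤ ⌈r⌉₊ := Nat.le_ceil r
  obtain ⟨w, hw⟩ := hΓ.2 (fun x : s ↦ q x) (fun _ ↦ ⌈r⌉₊) fun x y ↦ by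
    have hxy : (Γ.dist (q x) (q y) : ℝ) ≤ ⌈r⌉₊ + ⌈r⌉₊ := by
      linarith [hq x y, hr x x.2 y y.2]
    exact_mod_cast hxy
  obtain ⟨z, hz⟩ := hdense w
  refine ⟨z, fun x hx ↦ ?_⟩
  have hr₀ : 0 ≤ r := by
    have hxx := hq x x
    rw [SimpleGraph.dist_self] at hxx
    linarith [hr x hx x hx]
  have hxz : Γ.dist (q x) (q z) ≤ ⌈r⌉₊ + R := by
    have htri := hΓ.1.dist_triangle (u := q x) (v := w) (w := q z)
    rw [Γ.dist_comm (u := q x) (v := w)] at htri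
    exact htri.trans (add_le_add (hw ⟨x, hx⟩) hz)
  have hxz' : (Γ.dist (q x) (q z) : ℝ) ≤ ⌈r⌉₊ + R := mod_cast hxz
  rw [← hq]
  linarith [Nat.ceil_lt_add_one hr₀]

end Graph

section OrbitLength

variable {G V : Type*} [Group G] {Γ : SimpleGraph V} {act : G →* Equiv.Perm V}

theorem dist_act_act (hΓ : Γ.Connected)
    (hact : ∀ (g : G) (u v : V), Γ.Adj u v → Γ.Adj (act g u) (act g v)) (g : G) (u v : V) :
    Γ.dist (act g u) (act g v) = Γ.dist u v := by
  have hle (h : G) (x y : V) : Γ.dist (act h x) (act h y) ≤ Γ.dist x y :=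
    dist_map_le hΓ ⟨act h, hact h _ _⟩ x y
  exact le_antisymm (hle g u v) (by simpa using hle g⁻¹ (act g u) (act g v))

/-- The displacement `g ↦ d(v, g v)` of the vertex `v`, for an action by graph automorphisms. -/
noncomputable def orbitLength (hΓ : Γ.Connected)
    (hact : ∀ (g : G) (u v : V), Γ.Adj u v → Γ.Adj (act g u) (act g v)) (v : V) :
    GroupSeminorm G where
  toFun g := Γ.dist v (act g v)
  map_one' := by simp
  mul_le' g h := by
    rw [← dist_act_act hΓ hact g v (act h v), map_mul, Equiv.Perm.mul_apply]
    exact_mod_cast hΓ.dist_triangle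
  inv' g := by
    rw [← dist_act_act hΓ hact g v (act g⁻¹ v), Γ.dist_comm]
    simp

theorem orbitLength_apply (hΓ : Γ.Connected)
    (hact : ∀ (g : G) (u v : V), Γ.Adj u v → Γ.Adj (act g u) (act g v)) (v : V) (g : G) :
    orbitLength hΓ hact v g = Γ.dist v (act g v) :=
  rfl

theorem dist_act_act_eq_orbitLength (hΓ : Γ.Connected)
    (hact : ∀ (g : G) (u v : V), Γ.Adj u v → Γ.Adj (act g u) (act g v)) (v : V) (g h : G) :
    Γ.dist (act g v) (act h v) = orbitLength hΓ hact v (h⁻¹ * g) := by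
  rw [← dist_act_act hΓ hact h⁻¹, Γ.dist_comm, orbitLength_apply]
  simp

theorem exists_forall_dist_act_le (hΓ : Γ.Connected)
    (hact : ∀ (g : G) (u v : V), Γ.Adj u v → Γ.Adj (act g u) (act g v)) {S : Finset V}
    (hS : ∀ v, ∃ g, act g v ∈ S) (A : Subgroup G) [A.FiniteIndex] (v : V) :
    ∃ R, ∀ w, ∃ a ∈ A, Γ.dist w (act a v) ≤ R := by
  obtain ⟨R, hR⟩ := (finite_range fun x : (G ⧸ A) × S ↦
    Γ.dist (act x.1.out⁻¹ x.2) v).bddAbove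
  refine ⟨R, fun w ↦ ?_⟩
  obtain ⟨g, hg⟩ := hS w
  obtain ⟨a, ha⟩ := QuotientGroup.mk_out_eq_mul A g
  refine ⟨a, a.2, ?_⟩
  rw [← dist_act_act hΓ hact (a : G)⁻¹]
  have hR' := hR ⟨((g : G ⧸ A), ⟨act g w, hg⟩), rfl⟩
  simpa [ha, ← Equiv.Perm.mul_apply, ← map_mul, ← map_inv] using hR'

end OrbitLength

/-- The length function on an additive group obtained by restricting a length function on `G`
along a homomorphism. -/
def pullbackSeminorm {G X : Type*} [Group G] [AddGroup X] (ℓ : GroupSeminorm G)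
    (τ : Multiplicative X →* G) : AddGroupSeminorm X where
  toFun x := ℓ (τ (.ofAdd x))
  map_zero' := by simp
  add_le' x y := by simpa using map_mul_le_add ℓ _ _
  neg' x := by simp

theorem pullbackSeminorm_apply_le_of_conj {G X : Type*} [Group G] [AddGroup X] (ℓ : GroupSeminorm G)
    (τ : Multiplicative X →* G) {g : G} {x y : X} (h : τ (.ofAdd y) = g * τ (.ofAdd x) * g⁻¹) :
    pullbackSeminorm ℓ τ y ≤ pullbackSeminorm ℓ τ x + 2 * ℓ g := by
  calc ℓ (τ (.ofAdd y)) = ℓ (g * τ (.ofAdd x) * g⁻¹) := by rw [h]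
    _ ≤ ℓ g + ℓ (τ (.ofAdd x)) + ℓ g⁻¹ :=
      (map_mul_le_add ℓ _ _).trans (by gcongr; exact map_mul_le_add ℓ _ _)
    _ = ℓ (τ (.ofAdd x)) + 2 * ℓ g := by rw [map_inv_eq_map]; ring

theorem IsHellyGroup.exists_groupSeminorm {G : Type*} [Group G] (hG : IsHellyGroup G) {ι : Type}
    [Fintype ι] {τ : Multiplicative (ι → ℤ) →* G} (hτ : Function.Injective τ)
    [τ.range.FiniteIndex] :
    ∃ ℓ : GroupSeminorm G, (∃ R, IsCoarselyHelly R (pullbackSeminorm ℓ τ)) ∧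
      ∃ M, ∀ a, ‖a‖ ≤ M * pullbackSeminorm ℓ τ a + M := by
  obtain ⟨V, Γ, act, hΓ, hact, hproper, S, hS⟩ := hG
  obtain ⟨v⟩ := hΓ.1.nonempty
  let ℓ := orbitLength hΓ.1 hact v
  let q (a : ι → ℤ) : V := act (τ (.ofAdd a)) v
  have hq (a b : ι → ℤ) : (Γ.dist (q a) (q b) : ℝ) = pullbackSeminorm ℓ τ (a - b) := by
    rw [dist_act_act_eq_orbitLength hΓ.1 hact, ← map_inv, ← map_mul, ← ofAdd_neg, ← ofAdd_add,
      neg_add_eq_sub]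
    rfl
  obtain ⟨R, hR⟩ := exists_forall_dist_act_le hΓ.1 hact hS τ.range v
  have hdense (w : V) : ∃ a, Γ.dist w (q a) ≤ R :=
    have ⟨_, ⟨a, rfl⟩, ha⟩ := hR w
    ⟨a.toAdd, ha⟩
  refine ⟨ℓ, ⟨R + 1, isCoarselyHelly_of_isHellyGraph hΓ hq hdense⟩, ?_⟩
  have hfin : {a : ι → ℤ | pullbackSeminorm ℓ τ a ≤ (2 * R + 1 : ℕ)}.Finite :=
    ((hproper v (2 * R + 1)).preimage (hτ.comp Multiplicative.ofAdd.injective).injOn).subset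
      fun _ ha ↦ Nat.cast_le (α := ℝ).1 ha
  obtain ⟨M, hM⟩ := (hfin.image norm).bddAbove
  refine ⟨M, fun a ↦ ?_⟩
  have hdist := dist_le_mul_dist_add_one hΓ.1 hdense (M := M) (fun a b hab ↦ by
    rw [dist_eq_norm]
    refine hM (mem_image_of_mem _ ?_)
    rw [mem_ofPred_eq, ← hq]
    exact_mod_cast hab) a 0
  rwa [hq, sub_zero, dist_zero_right, mul_add, mul_one] at hdist

section Conjugation

variable {ι : Type*} [Fintype ι] [DecidableEq ι]

theorem exists_generalLinearGroup_of_linearEquiv {R : Type*} [CommRing R]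
    (φ : (ι → R) ≃ₗ[R] (ι → R)) :
    ∃ g : Matrix.GeneralLinearGroup ι R, ∀ x, g.1 *ᵥ x = φ x := by
  obtain ⟨g, hg⟩ := Matrix.GeneralLinearGroup.toLin.surjective
    (LinearMap.GeneralLinearGroup.ofLinearEquiv φ)
  exact ⟨g, fun x ↦ DFunLike.congr_fun (congrArg Units.val hg) x⟩

theorem apply_mulVec_eq_of_forall_le {G R α : Type*} [Group G] [CommRing R] [PartialOrder α]
    {p : (ι → R) → α} {σ : G →* Matrix.GeneralLinearGroup ι R}
    (h : ∀ g x, p ((σ g).1 *ᵥ x) ≤ p x) (g : G) (x : ι → R) : p ((σ g).1 *ᵥ x) = p x := by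
  refine (h g x).antisymm ?_
  have hinv := h g⁻¹ ((σ g).1 *ᵥ x)
  rwa [Matrix.mulVec_mulVec, ← Units.val_mul, ← map_mul, inv_mul_cancel, map_one, Units.val_one,
    Matrix.one_mulVec] at hinv

theorem norm_conj_mulVec {R : Type*} [SeminormedCommRing R] {p : (ι → R) → ℝ}
    {φ σ : Matrix.GeneralLinearGroup ι R} (hφ : ∀ x, ‖φ.1 *ᵥ x‖ = p x)
    (hσ : ∀ x, p (σ.1 *ᵥ x) = p x) (x : ι → R) :
    ‖(φ * σ * φ⁻¹ : Matrix.GeneralLinearGroup ι R).1 *ᵥ x‖ = ‖x‖ := by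
  rw [Units.val_mul, Units.val_mul, ← Matrix.mulVec_mulVec, ← Matrix.mulVec_mulVec, hφ, hσ, ← hφ,
    Matrix.mulVec_mulVec, ← Units.val_mul, mul_inv_cancel, Units.val_one, Matrix.one_mulVec]

end Conjugation

theorem map_intCast_mulVec_intCastPi {ι : Type*} [Fintype ι] [DecidableEq ι]
    (g : Matrix.GeneralLinearGroup ι ℤ) (a : ι → ℤ) :
    (Matrix.GeneralLinearGroup.map (Int.castRingHom ℝ) g).1 *ᵥ intCastPi ι a =
      intCastPi ι (g.1 *ᵥ a) :=
  funext fun i ↦ ((Int.castRingHom ℝ).map_mulVec g.1 a i).symm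

theorem exists_norm_conj_mulVec_eq_of_isCoarselyHelly {G : Type*} [Group G] {n : ℕ}
    {ℓ : AddGroupSeminorm (Fin n → ℤ)} {R M B : ℝ} (hR : IsCoarselyHelly R ℓ)
    (hM : ∀ a, ‖a‖ ≤ M * ℓ a + B) {σ : G →* Matrix.GeneralLinearGroup (Fin n) ℤ} {C : G → ℝ}
    (hσ : ∀ g a, ℓ ((σ g).1 *ᵥ a) ≤ ℓ a + C g) :
    ∃ φ : Matrix.GeneralLinearGroup (Fin n) ℝ, ∀ (g : G) (x : Fin n → ℝ),
      ‖(φ * Matrix.GeneralLinearGroup.map (Int.castRingHom ℝ) (σ g) * φ⁻¹).1 *ᵥ x‖ = ‖x‖ := by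
  let p := stableSeminorm ℓ
  have hp_le (g : G) (x : Fin n → ℝ) :
      p ((Matrix.GeneralLinearGroup.map (Int.castRingHom ℝ) (σ g)).1 *ᵥ x) ≤ p x :=
    stableSeminorm_map_le (L := Matrix.mulVecLin _) (map_intCast_mulVec_intCastPi (σ g)) (hσ g) x
  obtain ⟨φ, hφ⟩ : ∃ φ : (Fin n → ℝ) ≃ₗ[ℝ] (Fin n → ℝ), ∀ x, ‖φ x‖ = p x := by
    have hpi := exists_linearEquiv_pi_of_isCoarselyHelly p
      (fun _ ↦ eq_zero_of_stableSeminorm_eq_zero hM) fun _ ↦ isCoarselyHelly_stableSeminorm hR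
    rwa [finrank_fin_fun] at hpi
  obtain ⟨Φ, hΦ⟩ := exists_generalLinearGroup_of_linearEquiv φ
  refine ⟨Φ, fun g ↦ norm_conj_mulVec (fun x ↦ ?_) (apply_mulVec_eq_of_forall_le
    (σ := (Matrix.GeneralLinearGroup.map (Int.castRingHom ℝ)).comp σ) hp_le g)⟩
  rw [hΦ, hφ]

/-- If a virtually `ℤⁿ` group is Helly, then its point group can be conjugated into the
group of linear isometries of `ℝⁿ` with the supremum norm. -/
theorem helly_point_group_conj_into_linfty_isometries
    {G : Type*} [Group G] (n : ℕ) (A : Subgroup G) (hA : A.Normal)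
    (hFI : A.FiniteIndex) (e : A ≃* Multiplicative (Fin n → ℤ))
    (ρ : G →* Matrix.GeneralLinearGroup (Fin n) ℤ)
    (hρ : ∀ (g : G) (a : A),
      Multiplicative.toAdd (e ⟨g * (a : G) * g⁻¹, hA.conj_mem (a : G) a.2 g⟩) =
        Matrix.mulVec (ρ g : Matrix (Fin n) (Fin n) ℤ) (Multiplicative.toAdd (e a)))
    (hHelly : IsHellyGroup G) :
    ∃ φ : Matrix.GeneralLinearGroup (Fin n) ℝ,
      ∀ (g : G) (x : Fin n → ℝ),
        ‖Matrix.mulVec ((φ * Matrix.GeneralLinearGroup.map (Int.castRingHom ℝ) (ρ g) * φ⁻¹ :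
            Matrix.GeneralLinearGroup (Fin n) ℝ) : Matrix (Fin n) (Fin n) ℝ) x‖ = ‖x‖ := by
  let τ : Multiplicative (Fin n → ℤ) →* G := A.subtype.comp e.symm.toMonoidHom
  have hτ : Function.Injective τ := A.subtype_injective.comp e.symm.injective
  have hτ_range : τ.range = A := by
    rw [MonoidHom.range_comp, MonoidHom.range_eq_top.2 e.symm.surjective, ← MonoidHom.range_eq_map,
      A.range_subtype]
  have : τ.range.FiniteIndex := hτ_range ▸ hFI
  have hτ_conj (g : G) (a : Fin n → ℤ) : τ (.ofAdd ((ρ g).1 *ᵥ a)) = g * τ (.ofAdd a) * g⁻¹ := by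
    have hconj := hρ g (e.symm (.ofAdd a))
    rw [e.apply_symm_apply, toAdd_ofAdd] at hconj
    rw [← hconj, ofAdd_toAdd]
    exact congrArg Subtype.val (e.symm_apply_apply _)
  obtain ⟨ℓ, ⟨R, hR⟩, M, hM⟩ := hHelly.exists_groupSeminorm hτ
  exact exists_norm_conj_mulVec_eq_of_isCoarselyHelly hR hM fun g a ↦
    pullbackSeminorm_apply_le_of_conj ℓ τ (hτ_conj g a)
end

section
/- Let G be a group with a normal subgroup A of finite index and a fixed group isomorphism between A and ℤⁿ, and let ρ : G → GL(n, ℤ) be the conjugation action. Suppose there exists φ ∈ GL(n, ℝ) such that φ ρ(g) φ⁻¹ is a linear isometry of (Fin n → ℝ, ‖·‖∞) for every g ∈ G. Then there is a homomorphism from G to the group of (affine) isometries of (Fin n → ℝ, ‖·‖∞) whose induced action is proper (for every R ≥ 0 the set {g ∈ G : ‖g·0‖∞ ≤ R} is finite) and cocompact (there exists R ≥ 0 such that every point of ℝⁿ lies within ‖·‖∞-distance R of the orbit of 0). -/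
/-!
Comparing a transversal `S` of `A` with its right translates `S * g⁻¹` gives a crossed homomorphism
`G → A` which restricts to `a ↦ a ^ [G : A]` on `A`. Over a field of characteristic zero the index
can be divided out, so an equivariant homomorphism from `A` to a representation `V` of `G` extends
to a crossed homomorphism `G → V`. This is the translation part of an affine action on `V`, which is
by isometries as soon as the representation is. Properness and cocompactness then only need to be
checked on `A`, whose orbit of `0` is a lattice.
-/

section FiniteIndex

variable {G : Type*} [Group G] (A : Subgroup G) [A.FiniteIndex]

open Subgroup.leftTransversals MulOpposite IsMulCommutative in
theorem exists_crossedHom_eq_pow_index [A.Normal] [IsMulCommutative A] :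
    ∃ c : G → A, (∀ g h, c (g * h) = c g * MulAut.conjNormal g (c h)) ∧
      ∀ a : A, c a = a ^ A.index := by
  let S : A.LeftTransversal := default
  let δ : A.LeftTransversal → A.LeftTransversal → A := fun T T' ↦ diff (MonoidHom.id A) T T'
  have conj_δ (g : G) (T : A.LeftTransversal) :
      δ (op g⁻¹ • T) (op g⁻¹ • S) = MulAut.conjNormal g (δ T S) := by
    ext
    simp [δ, Subgroup.smul_diff_smul', MulAut.conjNormal_apply]
  refine ⟨fun g ↦ δ (op g⁻¹ • S) S, fun g h ↦ ?_, fun a ↦ ?_⟩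
  · calc
      δ (op (g * h)⁻¹ • S) S = δ (op g⁻¹ • op h⁻¹ • S) S := by
        rw [mul_inv_rev, op_mul, mul_smul]
      _ = δ (op g⁻¹ • op h⁻¹ • S) (op g⁻¹ • S) * δ (op g⁻¹ • S) S :=
        (diff_mul_diff _ _ _ _).symm
      _ = δ (op g⁻¹ • S) S * MulAut.conjNormal g (δ (op h⁻¹ • S) S) := by
        rw [conj_δ, mul_comm']
  · calc
      δ (op (a : G)⁻¹ • S) S = (δ S (op ((a⁻¹ : A) : G) • S))⁻¹ := (diff_inv _ _ _).symm
      _ = a ^ A.index := by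
        simp only [δ, Subgroup.smul_diff', diff_self, one_mul, inv_pow, inv_inv]

theorem finite_setOf_dist_le_of_finiteIndex {X : Type*} [PseudoMetricSpace X] (f : G →* X ≃ᵢ X)
    (x : X) (hA : ∀ R, {a : A | dist (f a x) x ≤ R}.Finite) (R : ℝ) :
    {g : G | dist (f g x) x ≤ R}.Finite := by
  let s : G ⧸ A → G := Quotient.out
  let B (q : G ⧸ A) : Set A := {a | dist (f a x) x ≤ R + dist x (f (s q) x)}
  have finite_iUnion : (⋃ q, (fun a : A ↦ s q * a) '' B q).Finite :=
    Set.finite_iUnion fun q ↦ (hA _).image _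
  refine finite_iUnion.subset fun g (hg : dist (f g x) x ≤ R) ↦ ?_
  obtain ⟨a, ha⟩ := QuotientGroup.mk_out_eq_mul A g
  have hg_eq : s g * (a⁻¹ : A) = g := by simp [s, ha]
  refine Set.mem_iUnion.2 ⟨g, a⁻¹, ?_, hg_eq⟩
  calc
    dist (f (a⁻¹ : A) x) x = dist (f g x) (f (s g) x) := by
      rw [← (f (s g)).dist_eq, ← IsometryEquiv.mul_apply, ← map_mul, hg_eq]
    _ ≤ dist (f g x) x + dist x (f (s g) x) := dist_triangle _ _ _
    _ ≤ R + dist x (f (s g) x) := by gcongr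

end FiniteIndex

section Extension

variable {G : Type*} [Group G] (A : Subgroup G) [A.FiniteIndex] [A.Normal] [IsMulCommutative A]
  {k V : Type*}

theorem exists_crossedHom_extending [DivisionRing k] [CharZero k] [AddCommGroup V] [Module k V]
    (L : G → V →ₗ[k] V) (θ : A →* Multiplicative V)
    (hθ : ∀ g a, (θ (MulAut.conjNormal g a)).toAdd = L g (θ a).toAdd) :
    ∃ c : G → V, (∀ g h, c (g * h) = c g + L g (c h)) ∧ ∀ a : A, c a = (θ a).toAdd := by
  obtain ⟨c, hc, hcA⟩ := exists_crossedHom_eq_pow_index A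
  have index_ne_zero : (A.index : k) ≠ 0 := Nat.cast_ne_zero.2 Subgroup.FiniteIndex.index_ne_zero
  refine ⟨fun g ↦ (A.index : k)⁻¹ • (θ (c g)).toAdd, fun g h ↦ ?_, fun a ↦ ?_⟩
  · simp only [hc, map_mul, toAdd_mul, hθ, smul_add, map_smul]
  · simp only [hcA, map_pow, toAdd_pow, ← Nat.cast_smul_eq_nsmul k, inv_smul_smul₀ index_ne_zero]

theorem exists_isometricAction_extending [DivisionRing k] [CharZero k]
    [SeminormedAddCommGroup V] [Module k V] (L : G →* V ≃ₗᵢ[k] V) (θ : A →* Multiplicative V)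
    (hθ : ∀ g a, (θ (MulAut.conjNormal g a)).toAdd = L g (θ a).toAdd) :
    ∃ f : G →* V ≃ᵢ V, ∀ a : A, f a 0 = (θ a).toAdd := by
  obtain ⟨c, hc, hcA⟩ :=
    exists_crossedHom_extending A (fun g ↦ (L g).toLinearEquiv.toLinearMap) θ hθ
  refine ⟨MonoidHom.mk' (fun g ↦ (L g).toIsometryEquiv.trans (.addLeft (c g))) fun g h ↦ ?_, ?_⟩
  · ext x
    simp [hc, add_assoc]
  · intro a
    simp [hcA]

theorem exists_proper_cocompact_isometricAction [DivisionRing k] [CharZero k]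
    [SeminormedAddCommGroup V] [Module k V] (L : G →* V ≃ₗᵢ[k] V) (θ : A →* Multiplicative V)
    (hθ : ∀ g a, (θ (MulAut.conjNormal g a)).toAdd = L g (θ a).toAdd)
    (proper : ∀ R : ℝ, {a | ‖(θ a).toAdd‖ ≤ R}.Finite)
    (cobounded : ∃ R : ℝ, 0 ≤ R ∧ ∀ x, ∃ a, ‖x - (θ a).toAdd‖ ≤ R) :
    ∃ f : G →* V ≃ᵢ V, (∀ R : ℝ, {g | ‖f g 0‖ ≤ R}.Finite) ∧
      ∃ R : ℝ, 0 ≤ R ∧ ∀ x, ∃ g, ‖x - f g 0‖ ≤ R := by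
  obtain ⟨f, hf⟩ := exists_isometricAction_extending A L θ hθ
  obtain ⟨R, hR, hdense⟩ := cobounded
  refine ⟨f, ?_, R, hR, fun x ↦ ?_⟩
  · simpa only [dist_zero_right] using
      finite_setOf_dist_le_of_finiteIndex A f 0 (by simpa only [hf, dist_zero_right] using proper)
  · obtain ⟨a, ha⟩ := hdense x
    exact ⟨a, by rwa [hf]⟩

end Extension

open Module Matrix

section GeneralLinearGroup

variable {ι R V : Type*} [Fintype ι]

theorem linearCombination_intCast [Ring R] [AddCommGroup V] [Module R V] (v : ι → V)
    (z : ι → ℤ) :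
    Fintype.linearCombination R v (fun i ↦ (z i : R)) = Fintype.linearCombination ℤ v z := by
  simp only [Fintype.linearCombination_apply, Int.cast_smul_eq_zsmul]

theorem toLin'_intCast_linearCombination [DecidableEq ι] [CommRing R]
    [AddCommGroup V] [Module R V] (b : Basis ι R V) (M : GL ι ℤ) (z : ι → ℤ) :
    (GeneralLinearGroup.toLin' b (GeneralLinearGroup.map (Int.castRingHom R) M)).toLinearEquiv
      (Fintype.linearCombination ℤ b z) = Fintype.linearCombination ℤ b (M.1 *ᵥ z) := by
  have repr_eq : b.repr (Fintype.linearCombination ℤ b z) = fun i ↦ (z i : R) := by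
    rw [← linearCombination_intCast (R := R), Fintype.linearCombination_apply, b.repr_sum_self]
  rw [GeneralLinearGroup.toLin'_apply, repr_eq, ← linearCombination_intCast (R := R)]
  congr 1
  ext i
  exact ((Int.castRingHom R).map_mulVec M.1 z i).symm

theorem toLin'_map_basisFun [DecidableEq ι] [CommRing R] (P M : GL ι R) :
    GeneralLinearGroup.toLin' ((Pi.basisFun R ι).map (GeneralLinearGroup.toLin P).toLinearEquiv) M =
      GeneralLinearGroup.toLin (P * M * P⁻¹) := by
  simp only [GeneralLinearGroup.toLin', Basis.map_equivFun, Pi.basisFun_equivFun, map_mul, map_inv]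
  rfl

end GeneralLinearGroup

section Lattice

variable {ι V : Type*} [Fintype ι] [NormedAddCommGroup V] [NormedSpace ℝ V] (b : Basis ι ℝ V)

theorem finite_setOf_norm_linearCombination_int_le (R : ℝ) :
    {z : ι → ℤ | ‖Fintype.linearCombination ℤ b z‖ ≤ R}.Finite := by
  have : FiniteDimensional ℝ V := b.finiteDimensional_of_finite
  have : ProperSpace V := FiniteDimensional.proper ℝ V
  have injective : Function.Injective (Fintype.linearCombination ℤ b) :=
    (b.linearIndependent.restrict_scalars' ℤ).fintypeLinearCombination_injective
  refine ((ZSpan.setFinite_inter b (Metric.isBounded_closedBall (x := 0) (r := R))).preimage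
    injective.injOn).subset fun z hz ↦ ⟨mem_closedBall_zero_iff.2 hz, ?_⟩
  exact (Fintype.range_linearCombination ℤ b).le (LinearMap.mem_range_self _ z)

theorem exists_norm_sub_linearCombination_int_le (x : V) :
    ∃ z : ι → ℤ, ‖x - Fintype.linearCombination ℤ b z‖ ≤ ∑ i, ‖b i‖ := by
  obtain ⟨z, hz⟩ : (ZSpan.floor b x : V) ∈ LinearMap.range (Fintype.linearCombination ℤ b) :=
    (Fintype.range_linearCombination ℤ b).ge (ZSpan.floor b x).2
  exact ⟨z, by simpa only [hz, ← ZSpan.fract_apply] using ZSpan.norm_fract_le b x⟩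

end Lattice

theorem proper_cocompact_linfty_action_of_point_group_conj_general
    {G ι V : Type*} [Group G] [Fintype ι] [DecidableEq ι] [NormedAddCommGroup V] [NormedSpace ℝ V]
    (b : Basis ι ℝ V) (A : Subgroup G) [A.Normal] [A.FiniteIndex]
    (e : A ≃* Multiplicative (ι → ℤ)) (ρ : G →* GL ι ℤ)
    (hρ : ∀ g a, (e (MulAut.conjNormal g a)).toAdd = (ρ g).1 *ᵥ (e a).toAdd)
    (hb : ∀ g x, ‖(GeneralLinearGroup.toLin' b
      (GeneralLinearGroup.map (Int.castRingHom ℝ) (ρ g))).toLinearEquiv x‖ = ‖x‖) :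
    ∃ f : G →* V ≃ᵢ V, (∀ R : ℝ, {g | ‖f g 0‖ ≤ R}.Finite) ∧
      ∃ R : ℝ, 0 ≤ R ∧ ∀ x, ∃ g, ‖x - f g 0‖ ≤ R := by
  have : IsMulCommutative A := .of_comm fun a a' ↦ e.injective (by simp only [map_mul, mul_comm])
  let L : G →* V ≃ₗᵢ[ℝ] V :=
    MonoidHom.mk' (fun g ↦ ⟨_, hb g⟩) fun g h ↦ by ext x; simp
  let θ : A →* Multiplicative V :=
    (Fintype.linearCombination ℤ b).toAddMonoidHom.toMultiplicative.comp e.toMonoidHom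
  refine exists_proper_cocompact_isometricAction A L θ (fun g a ↦ ?_) (fun R ↦ ?_)
    ⟨∑ i, ‖b i‖, by positivity, fun x ↦ ?_⟩
  · exact (congrArg _ (hρ g a)).trans (toLin'_intCast_linearCombination b (ρ g) _).symm
  · exact (finite_setOf_norm_linearCombination_int_le b R).preimage e.injective.injOn
  · obtain ⟨z, hz⟩ := exists_norm_sub_linearCombination_int_le b x
    exact ⟨e.symm (Multiplicative.ofAdd z), by simpa [θ] using hz⟩

/-- If the point group of a virtually `ℤⁿ` group can be conjugated into the group of linear
isometries of `ℝⁿ` with the supremum norm, then the group acts properly and cocompactly by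
(affine) isometries on `ℝⁿ` with the supremum norm. -/
theorem proper_cocompact_linfty_action_of_point_group_conj
    {G : Type*} [Group G] (n : ℕ) (A : Subgroup G) (hA : A.Normal)
    (hFI : A.FiniteIndex) (e : A ≃* Multiplicative (Fin n → ℤ))
    (ρ : G →* Matrix.GeneralLinearGroup (Fin n) ℤ)
    (hρ : ∀ (g : G) (a : A),
      Multiplicative.toAdd (e ⟨g * (a : G) * g⁻¹, hA.conj_mem (a : G) a.2 g⟩) =
        Matrix.mulVec (ρ g : Matrix (Fin n) (Fin n) ℤ) (Multiplicative.toAdd (e a)))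
    (hφ : ∃ φ : Matrix.GeneralLinearGroup (Fin n) ℝ,
      ∀ (g : G) (x : Fin n → ℝ),
        ‖Matrix.mulVec ((φ * Matrix.GeneralLinearGroup.map (Int.castRingHom ℝ) (ρ g) * φ⁻¹ :
            Matrix.GeneralLinearGroup (Fin n) ℝ) : Matrix (Fin n) (Fin n) ℝ) x‖ = ‖x‖) :
    ∃ f : G →* ((Fin n → ℝ) ≃ᵢ ((Fin n) → ℝ)),
      (∀ R : ℝ, 0 ≤ R → {g : G | ‖(f g) 0‖ ≤ R}.Finite) ∧
      (∃ R : ℝ, 0 ≤ R ∧ ∀ x : Fin n → ℝ, ∃ g : G, ‖x - (f g) 0‖ ≤ R) := by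
  obtain ⟨φ, hφ⟩ := hφ
  obtain ⟨f, hproper, hcocompact⟩ := proper_cocompact_linfty_action_of_point_group_conj_general
    ((Pi.basisFun ℝ (Fin n)).map (GeneralLinearGroup.toLin φ).toLinearEquiv) A e ρ hρ
    fun g x ↦ by rw [toLin'_map_basisFun]; exact hφ g x
  exact ⟨f, fun R _ ↦ hproper R, hcocompact⟩
end

section
/- Let G be a group acting properly and cocompactly by graph automorphisms on a Helly graph. If G has a nilpotent subgroup of finite index, then G has an abelian subgroup of finite index. -/
/-!
Put on the group the displacement length `dist p (g • p)`. In a nilpotent group the commutator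
`⁅a, b⁆`, when it is central modulo a finite subgroup, satisfies
`⁅a, b⁆ ^ (m * m) = ⁅a ^ m, b ^ m⁆` up to that finite subgroup, so that its powers grow sublinearly.
An action that is uniformly proper on a coarsely Helly space forbids this unless `⁅a, b⁆` has finite
order, and it also bounds the orders of the finite subgroups. Climbing up the lower central series,
the commutator subgroup is finite, and the centre of a finitely generated group with finite
commutator subgroup has finite index.

Both restrictions on the action come from one fixed point argument. A radius function `f` that an
isometry `σ` changes by at most `C` can be replaced by the iterated averages of `f` and its
conjugate `v ↦ ⨆ w, (dist v w - f w)`, which are moved by at most `C` as well and converge to a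
radius function equal to its conjugate; at a coarse centre `x` of such a function the value is
bounded, hence so is `dist x (σ x)`. The functions `f` used are mean distances to orbit segments.
-/

open scoped BigOperators commutatorElement

section RadiusFunction

variable {X : Type*} [PseudoMetricSpace X]

/-- `f` is a radius function if any two of the balls `B(v, f v)` formally intersect. These are the
functions from which the injective hull of `X` is built. -/
def IsRadiusFunction (f : X → ℝ) : Prop :=
  ∀ u v, dist u v ≤ f u + f v

/-- `X` is coarsely Helly with constant `δ`: the balls of a pairwise formally intersecting family
have a common point once their radii are enlarged by `δ`. It suffices to consider families with one
ball at every point, as `(xᵢ, rᵢ)` extends to the radius function `v ↦ ⨅ i, (dist v xᵢ + rᵢ)`. -/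
def CoarselyHelly (X : Type*) [PseudoMetricSpace X] (δ : ℝ) : Prop :=
  ∀ f : X → ℝ, IsRadiusFunction f → ∃ x, ∀ v, dist x v ≤ f v + δ

/-- The conjugate of `f`: the smallest radius at `u` whose ball formally intersects all the balls
`B(v, f v)`. The supremum is junk unless it is bounded, as it is for radius functions. -/
noncomputable def conjugate (f : X → ℝ) (u : X) : ℝ :=
  ⨆ v, (dist u v - f v)

/-- The mean of `f` and its conjugate. Iterating it drives a radius function towards its
conjugate. -/
noncomputable def conjugateMean (f : X → ℝ) (u : X) : ℝ :=
  (f u + conjugate f u) / 2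

theorem CoarselyHelly.nonempty {δ : ℝ} (hX : CoarselyHelly X δ) : Nonempty X := by
  by_contra hempty
  rw [not_nonempty_iff] at hempty
  exact isEmptyElim (hX isEmptyElim isEmptyElim).choose

theorem conjugate_le [Nonempty X] {f : X → ℝ} {u : X} {c : ℝ} (h : ∀ v, dist u v ≤ c + f v) :
    conjugate f u ≤ c :=
  ciSup_le fun v => sub_le_iff_le_add.2 (h v)

namespace IsRadiusFunction

variable {f g : X → ℝ}

theorem nonneg (hf : IsRadiusFunction f) (u : X) : 0 ≤ f u := by
  linarith [hf u u, dist_self u]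

theorem dist_le_conjugate_add (hf : IsRadiusFunction f) (u v : X) :
    dist u v ≤ conjugate f u + f v := by
  have hbdd : BddAbove (Set.range fun w => dist u w - f w) :=
    ⟨f u, Set.forall_mem_range.2 fun w => sub_le_iff_le_add.2 (hf u w)⟩
  exact sub_le_iff_le_add.1 (le_ciSup hbdd v)

theorem conjugate_le_self (hf : IsRadiusFunction f) (u : X) : conjugate f u ≤ f u :=
  have : Nonempty X := ⟨u⟩
  conjugate_le (hf u)

theorem conjugate_anti (hg : IsRadiusFunction g) (hgf : ∀ u, g u ≤ f u) (u : X) :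
    conjugate f u ≤ conjugate g u :=
  have : Nonempty X := ⟨u⟩
  conjugate_le fun v => by linarith [hg.dist_le_conjugate_add u v, hgf v]

theorem conjugateMean_le (hf : IsRadiusFunction f) (u : X) : conjugateMean f u ≤ f u := by
  unfold conjugateMean
  linarith [hf.conjugate_le_self u]

protected theorem conjugateMean (hf : IsRadiusFunction f) : IsRadiusFunction (conjugateMean f) := by
  intro u v
  unfold conjugateMean
  linarith [hf.dist_le_conjugate_add u v, hf.dist_le_conjugate_add v u, dist_comm u v]

theorem iterate_conjugateMean (hf : IsRadiusFunction f) (j : ℕ) :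
    IsRadiusFunction (conjugateMean^[j] f) :=
  Function.Iterate.rec IsRadiusFunction hf (fun _ h => h.conjugateMean) j

theorem iterate_conjugateMean_le (hf : IsRadiusFunction f) (j : ℕ) (u : X) :
    (conjugateMean^[j] f) u ≤ f u := by
  induction j with
  | zero => exact le_rfl
  | succ j ih =>
    rw [Function.iterate_succ_apply']
    exact ((hf.iterate_conjugateMean j).conjugateMean_le u).trans ih

theorem conjugateMean_sub_conjugate_le (hf : IsRadiusFunction f) (u : X) :
    conjugateMean f u - conjugate (conjugateMean f) u ≤ (f u - conjugate f u) / 2 := by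
  have hanti := hf.conjugateMean.conjugate_anti hf.conjugateMean_le u
  unfold conjugateMean at hanti ⊢
  linarith

theorem iterate_conjugateMean_sub_conjugate_le (hf : IsRadiusFunction f) (j : ℕ) (u : X) :
    (conjugateMean^[j] f) u - conjugate (conjugateMean^[j] f) u ≤ 2 * f u / 2 ^ j := by
  induction j with
  | zero =>
    have := hf.dist_le_conjugate_add u u
    simp only [Function.iterate_zero, id_eq, pow_zero, div_one]
    linarith [dist_self u]
  | succ j ih =>
    rw [Function.iterate_succ_apply', pow_succ, ← div_div]
    exact ((hf.iterate_conjugateMean j).conjugateMean_sub_conjugate_le u).trans (by gcongr)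

theorem abs_conjugate_apply_sub_le (hf : IsRadiusFunction f) (σ : X ≃ᵢ X) {C : ℝ}
    (hσ : ∀ u, |f (σ u) - f u| ≤ C) (u : X) : |conjugate f (σ u) - conjugate f u| ≤ C := by
  have : Nonempty X := ⟨u⟩
  have hσ' := fun v => abs_le.1 (hσ v)
  have hle : conjugate f (σ u) ≤ C + conjugate f u := conjugate_le fun v => by
    obtain ⟨w, rfl⟩ := σ.surjective v
    linarith [σ.dist_eq u w, hf.dist_le_conjugate_add u w, (hσ' w).1]
  have hge : conjugate f u ≤ conjugate f (σ u) + C := conjugate_le fun w => by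
    linarith [σ.dist_eq u w, hf.dist_le_conjugate_add (σ u) (σ w), (hσ' w).2]
  exact abs_sub_le_iff.2 ⟨by linarith, by linarith⟩

theorem abs_conjugateMean_apply_sub_le (hf : IsRadiusFunction f) (σ : X ≃ᵢ X) {C : ℝ}
    (hσ : ∀ u, |f (σ u) - f u| ≤ C) (u : X) : |conjugateMean f (σ u) - conjugateMean f u| ≤ C := by
  have hself := abs_le.1 (hσ u)
  have hconj := abs_le.1 (hf.abs_conjugate_apply_sub_le σ hσ u)
  unfold conjugateMean
  exact abs_le.2 ⟨by linarith, by linarith⟩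

theorem abs_iterate_conjugateMean_apply_sub_le (hf : IsRadiusFunction f) (σ : X ≃ᵢ X) {C : ℝ}
    (hσ : ∀ u, |f (σ u) - f u| ≤ C) (j : ℕ) (u : X) :
    |(conjugateMean^[j] f) (σ u) - (conjugateMean^[j] f) u| ≤ C := by
  induction j generalizing u with
  | zero => exact hσ u
  | succ j ih =>
    rw [Function.iterate_succ_apply']
    exact (hf.iterate_conjugateMean j).abs_conjugateMean_apply_sub_le σ ih u

theorem exists_forall_dist_apply_le {δ : ℝ} (hX : CoarselyHelly X δ) (hf : IsRadiusFunction f)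
    (hLip : LipschitzWith 1 f) :
    ∃ x, ∀ (σ : X ≃ᵢ X) (C : ℝ), (∀ u, |f (σ u) - f u| ≤ C) → dist x (σ x) ≤ 2 * δ + 2 + C := by
  obtain ⟨p⟩ := hX.nonempty
  obtain ⟨j, hj⟩ := pow_unbounded_of_one_lt (2 * (2 * f p + δ)) one_lt_two
  have hg := hf.iterate_conjugateMean j
  set g := conjugateMean^[j] f
  obtain ⟨x, hx⟩ := hX g hg
  have : Nonempty X := ⟨x⟩
  have hconj : conjugate g x ≤ δ := conjugate_le fun v => by linarith [hx v]
  have hgap : g x - conjugate g x ≤ 1 := by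
    refine (hf.iterate_conjugateMean_sub_conjugate_le j x).trans ?_
    rw [div_le_one (by positivity)]
    have hfx : f x ≤ f p + dist x p := by simpa using hLip.le_add_mul x p
    linarith [hx p, hf.iterate_conjugateMean_le j p]
  refine ⟨x, fun σ C hσ => ?_⟩
  have hgσ := abs_le.1 (hf.abs_iterate_conjugateMean_apply_sub_le σ hσ j x)
  linarith [hg x (σ x)]

end IsRadiusFunction

/-- The mean distance to the points `c i`, `i ∈ s`; it is a radius function when `s` is
nonempty. -/
noncomputable def meanDist {ι : Type*} (s : Finset ι) (c : ι → X) (u : X) : ℝ :=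
  𝔼 i ∈ s, dist (c i) u

variable {ι : Type*} {s : Finset ι}

theorem isRadiusFunction_meanDist (hs : s.Nonempty) (c : ι → X) :
    IsRadiusFunction (meanDist s c) := by
  intro u v
  simp only [meanDist, ← Finset.expect_add_distrib]
  exact Finset.le_expect hs fun i _ => dist_triangle_left u v (c i)

theorem lipschitzWith_meanDist (hs : s.Nonempty) (c : ι → X) :
    LipschitzWith 1 (meanDist s c) := by
  refine LipschitzWith.of_le_add fun u v => ?_
  rw [← Finset.expect_const hs (dist u v)]
  simp only [meanDist, ← Finset.expect_add_distrib]
  exact Finset.expect_le_expect fun i _ => dist_comm u v ▸ dist_triangle (c i) v u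

end RadiusFunction

/-! ### Uniformly proper isometric actions -/

section Action

theorem abs_apply_pow_smul_sub_le {M X : Type*} [Monoid M] [MulAction M X] {f : X → ℝ} {z : M}
    {C : ℝ} (hz : ∀ u, |f (z • u) - f u| ≤ C) (k : ℕ) (u : X) : |f (z ^ k • u) - f u| ≤ k * C := by
  induction k with
  | zero => simp
  | succ k ih =>
    rw [pow_succ', mul_smul]
    push_cast
    linarith [hz (z ^ k • u), abs_sub_le (f (z • z ^ k • u)) (f (z ^ k • u)) (f u)]

variable {G X : Type*} [Group G] [PseudoMetricSpace X] [MulAction G X]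

/-- The action of `G` on `X` is uniformly proper: the number of elements that move a point by at
most `R` is bounded in terms of `R` alone. -/
def UniformlyProper (G X : Type*) [PseudoMetricSpace X] [SMul G X] : Prop :=
  ∀ R : ℝ, ∃ M : ℕ, ∀ x : X, {g : G | dist x (g • x) ≤ R}.encard ≤ M

/-- An element `z` is distorted for the length `ℓ` if its stable length `lim ℓ (z ^ n) / n` is
zero. By subadditivity the limit is an infimum, which is how it is expressed here. -/
def IsDistorted (ℓ : GroupSeminorm G) (z : G) : Prop :=
  ∀ ε : ℝ, 0 < ε → ∃ n : ℕ, 0 < n ∧ ℓ (z ^ n) ≤ ε * n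

theorem UniformlyProper.subgroup (hG : UniformlyProper G X) (H : Subgroup G) :
    UniformlyProper H X := fun R =>
  (hG R).imp fun _ hM x =>
    (Set.encard_le_encard_of_injOn (f := ((↑) : H → G)) (fun _ h => h)
      Subtype.val_injective.injOn).trans (hM x)

variable [IsIsometricSMul G X]

/-- The displacement of the base point `p`, as a length on the group. -/
def displacement (p : X) : GroupSeminorm G where
  toFun g := dist p (g • p)
  map_one' := by rw [one_smul, dist_self]
  mul_le' g h := by
    rw [← dist_smul g p (h • p), mul_smul]
    exact dist_triangle _ _ _
  inv' g := by rw [← dist_smul g, smul_inv_smul, dist_comm]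

theorem uniformlyProper_of_finite_representatives
    (hproper : ∀ (x : X) (R : ℝ), {g : G | dist x (g • x) ≤ R}.Finite)
    {S : Set X} (hS : S.Finite) (hSG : ∀ x, ∃ g : G, g • x ∈ S) : UniformlyProper G X := by
  intro R
  have hfin : (⋃ s ∈ S, {g : G | dist s (g • s) ≤ R}).Finite := hS.biUnion fun s _ => hproper s R
  refine ⟨(⋃ s ∈ S, {g : G | dist s (g • s) ≤ R}).ncard, fun x => ?_⟩
  obtain ⟨a, ha⟩ := hSG x
  rw [hfin.cast_ncard_eq]
  refine Set.encard_le_encard_of_injOn (f := MulAut.conj a) (fun g hg => ?_)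
    (MulAut.conj a).injective.injOn
  refine Set.mem_biUnion ha ?_
  rw [Set.mem_ofPred_eq, MulAut.conj_apply, mul_smul, inv_smul_smul, mul_smul, dist_smul]
  exact hg

theorem exists_dist_smul_le_of_finite_representatives
    {S : Set X} (hS : S.Finite) (hSG : ∀ x, ∃ g : G, g • x ∈ S) (p : X) :
    ∃ D, ∀ x, ∃ g : G, dist (g • p) x ≤ D := by
  obtain ⟨D, hD⟩ := (hS.image (dist p)).bddAbove
  refine ⟨D, fun x => ?_⟩
  obtain ⟨g, hg⟩ := hSG x
  refine ⟨g⁻¹, ?_⟩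
  rw [← dist_smul g, smul_inv_smul]
  exact hD (Set.mem_image_of_mem _ hg)

theorem closure_dist_smul_le_eq_top {p : X} {c D : ℝ} (hc : 0 ≤ c)
    (hchain : ∀ x y : X, Relation.ReflTransGen (fun u v => dist u v ≤ c) x y)
    (hD : ∀ x, ∃ g : G, dist (g • p) x ≤ D) :
    Subgroup.closure {g : G | dist p (g • p) ≤ 2 * D + c} = ⊤ := by
  set T := {g : G | dist p (g • p) ≤ 2 * D + c}
  have mem_of_close : ∀ {u v : X} {g h : G}, dist u v ≤ c → dist (h • p) u ≤ D →
      dist (g • p) v ≤ D → h ∈ Subgroup.closure T → g ∈ Subgroup.closure T := by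
    intro u v g h huv hh hg hmem
    have hstep : h⁻¹ * g ∈ T := by
      rw [Set.mem_ofPred_eq, ← dist_smul h, smul_smul, mul_inv_cancel_left]
      linarith [dist_triangle4 (h • p) u v (g • p), dist_comm v (g • p)]
    simpa using mul_mem hmem (Subgroup.subset_closure hstep)
  have hD₀ : 0 ≤ D := (hD p).elim fun _ h => dist_nonneg.trans h
  have reach : ∀ x, ∃ h ∈ Subgroup.closure T, dist (h • p) x ≤ D := by
    intro x
    induction hchain p x with
    | refl => exact ⟨1, one_mem _, by rwa [one_smul, dist_self]⟩
    | @tail u v _ huv ih =>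
      obtain ⟨h, hmem, hh⟩ := ih
      obtain ⟨g, hg⟩ := hD v
      exact ⟨g, mem_of_close huv hh hg hmem, hg⟩
  refine (Subgroup.eq_top_iff' _).2 fun g => ?_
  obtain ⟨h, hmem, hh⟩ := reach (g • p)
  exact mem_of_close (by rwa [dist_self]) hh (by rwa [dist_self]) hmem

theorem exists_encard_almost_invariant_le {δ : ℝ} (hX : CoarselyHelly X δ)
    (hG : UniformlyProper G X) :
    ∃ M : ℕ, ∀ f : X → ℝ, IsRadiusFunction f → LipschitzWith 1 f →
      {g : G | ∀ u, |f (g • u) - f u| ≤ 1}.encard ≤ M := by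
  obtain ⟨M, hM⟩ := hG (2 * δ + 2 + 1)
  refine ⟨M, fun f hf hLip => ?_⟩
  obtain ⟨x, hx⟩ := hf.exists_forall_dist_apply_le hX hLip
  exact (Set.encard_le_encard fun g hg => hx (IsometryEquiv.constSMul g) 1 hg).trans (hM x)

theorem meanDist_orbit_smul (H : Subgroup G) [Fintype H] (p : X) {k : G} (hk : k ∈ H) (u : X) :
    meanDist Finset.univ (fun h : H => h • p) (k • u) =
      meanDist Finset.univ (fun h : H => h • p) u := by
  refine (Fintype.expect_equiv (Equiv.mulLeft (⟨k, hk⟩ : H)) _ _ fun h => ?_).symm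
  change dist (h • p) u = dist ((⟨k, hk⟩ * h : H) • p) (k • u)
  rw [mul_smul]
  exact (dist_smul k (h • p) u).symm

theorem exists_card_finite_subgroup_le {δ : ℝ} (hX : CoarselyHelly X δ)
    (hG : UniformlyProper G X) :
    ∃ M : ℕ, ∀ H : Subgroup G, Finite H → Nat.card H ≤ M := by
  obtain ⟨M, hM⟩ := exists_encard_almost_invariant_le hX hG
  obtain ⟨p⟩ := hX.nonempty
  refine ⟨M, fun H hH => ?_⟩
  have := Fintype.ofFinite H
  let f := meanDist Finset.univ fun h : H => h • p
  have hinv : (H : Set G) ⊆ {g | ∀ u, |f (g • u) - f u| ≤ 1} := fun k hk u => by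
    have heq : f (k • u) = f u := meanDist_orbit_smul H p hk u
    rw [heq, sub_self, abs_zero]
    exact zero_le_one
  have hcard : (H : Set G).encard ≤ M := (Set.encard_le_encard hinv).trans
    (hM f (isRadiusFunction_meanDist Finset.univ_nonempty _)
      (lipschitzWith_meanDist Finset.univ_nonempty _))
  rw [← (Set.toFinite (H : Set G)).cast_ncard_eq] at hcard
  exact_mod_cast hcard

theorem abs_meanDist_pow_smul_sub_le (p : X) (z : G) (n : ℕ) (u : X) :
    |meanDist (Finset.range n) (fun i => z ^ i • p) (z • u) -
        meanDist (Finset.range n) (fun i => z ^ i • p) u| ≤ dist p (z ^ n • p) / n := by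
  have hshift : ∀ i, dist (z ^ (i + 1) • p) (z • u) = dist (z ^ i • p) u := fun i => by
    rw [pow_succ', mul_smul, dist_smul]
  have htelescope : ∑ i ∈ Finset.range n, dist (z ^ i • p) u + dist p (z • u) =
      ∑ i ∈ Finset.range n, dist (z ^ i • p) (z • u) + dist (z ^ n • p) (z • u) := by
    rw [← Finset.sum_range_succ, Finset.sum_range_succ']
    simp only [hshift, pow_zero, one_smul]
  simp only [meanDist, Finset.expect_eq_sum_div_card, Finset.card_range]
  rw [← sub_div, abs_div, Nat.abs_cast]
  gcongr
  have hdiff : ∑ i ∈ Finset.range n, dist (z ^ i • p) (z • u) -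
      ∑ i ∈ Finset.range n, dist (z ^ i • p) u = dist p (z • u) - dist (z ^ n • p) (z • u) := by
    linarith
  rw [hdiff]
  exact abs_dist_sub_le _ _ _

theorem IsDistorted.isOfFinOrder {δ : ℝ} (hX : CoarselyHelly X δ) (hG : UniformlyProper G X)
    {p : X} {z : G} (hz : IsDistorted (displacement p) z) : IsOfFinOrder z := by
  obtain ⟨M, hM⟩ := exists_encard_almost_invariant_le hX hG
  obtain ⟨n, hn, hzn⟩ := hz (1 / (M + 1)) (by positivity)
  have hs : (Finset.range n).Nonempty := Finset.nonempty_range_iff.2 hn.ne'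
  let f := meanDist (Finset.range n) fun i => z ^ i • p
  have hstep : ∀ u, |f (z • u) - f u| ≤ 1 / (M + 1) := fun u =>
    (abs_meanDist_pow_smul_sub_le p z n u).trans
      (div_le_of_le_mul₀ n.cast_nonneg (by positivity) hzn)
  have hpow : (z ^ ·) '' Set.Iic M ⊆ {g | ∀ u, |f (g • u) - f u| ≤ 1} := by
    rintro _ ⟨k, hk, rfl⟩ u
    refine (abs_apply_pow_smul_sub_le hstep k u).trans ?_
    rw [mul_one_div, div_le_one (by positivity)]
    exact_mod_cast Nat.le_succ_of_le hk
  by_contra hz_inf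
  have hcard := (Set.encard_le_encard hpow).trans
    (hM f (isRadiusFunction_meanDist hs _) (lipschitzWith_meanDist hs _))
  rw [(injective_pow_iff_not_isOfFinOrder.2 hz_inf).encard_image, ← Finset.coe_Iic,
    Set.encard_coe_eq_coe_finsetCard, Nat.card_Iic] at hcard
  exact absurd (Nat.cast_le.1 hcard) (Nat.not_succ_le_self M)

end Action

/-! ### Lengths on nilpotent groups -/

section Nilpotent

variable {G : Type*} [Group G]

theorem commutatorElement_pow_pow {a b : G} (ha : Commute ⁅a, b⁆ a) (hb : Commute ⁅a, b⁆ b)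
    (m n : ℕ) : ⁅a ^ m, b ^ n⁆ = ⁅a, b⁆ ^ (m * n) := by
  have hab : SemiconjBy a b (⁅a, b⁆ * b) := by
    simp [SemiconjBy, commutatorElement_def]
  have hban : SemiconjBy (b ^ n) (⁅a, b⁆ ^ n * a) a := by
    have := (hab.pow_right n).eq
    rw [hb.mul_pow] at this
    rw [SemiconjBy, this, ← mul_assoc, ((hb.pow_right n).pow_left n).eq]
  have key := (hban.pow_right m).eq
  rw [(ha.pow_left n).mul_pow, ← pow_mul, ← mul_assoc,
    ← ((hb.pow_right n).pow_left (n * m)).eq] at key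
  rw [commutatorElement_def, ← key, mul_comm m n]
  group

theorem map_pow_le_natCast_mul (ℓ : GroupSeminorm G) (x : G) (m : ℕ) : ℓ (x ^ m) ≤ m * ℓ x := by
  induction m with
  | zero => simp
  | succ m ih =>
    rw [pow_succ]
    push_cast
    linarith [map_mul_le_add ℓ (x ^ m) x]

theorem map_commutatorElement_le (ℓ : GroupSeminorm G) (a b : G) : ℓ ⁅a, b⁆ ≤ 2 * (ℓ a + ℓ b) := by
  rw [commutatorElement_def]
  linarith [map_mul_le_add ℓ (a * b * a⁻¹) b⁻¹, map_mul_le_add ℓ (a * b) a⁻¹,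
    map_mul_le_add ℓ a b, map_inv_eq_map ℓ a, map_inv_eq_map ℓ b]

theorem commutatorElement_pow_div_mem {L : Subgroup G} [L.Normal] {a b : G} (hab : ⁅a, b⁆ ∈ L)
    (m n : ℕ) : ⁅a, b⁆ ^ (m * n) / ⁅a ^ m, b ^ n⁆ ∈ ⁅L, (⊤ : Subgroup G)⁆ := by
  let π := QuotientGroup.mk' ⁅L, (⊤ : Subgroup G)⁆
  have hcomm : ∀ x, Commute ⁅π a, π b⁆ (π x) := fun x => by
    rw [← map_commutatorElement, ← commutatorElement_eq_one_iff_commute, ← map_commutatorElement]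
    exact (QuotientGroup.eq_one_iff _).2
      (Subgroup.commutator_mem_commutator hab (Subgroup.mem_top x))
  rw [← QuotientGroup.eq_one_iff]
  change π _ = 1
  rw [map_div, map_pow, map_commutatorElement, map_commutatorElement, map_pow, map_pow,
    commutatorElement_pow_pow (hcomm a) (hcomm b), div_self']

theorem isDistorted_commutatorElement (ℓ : GroupSeminorm G) {L : Subgroup G} [L.Normal]
    (hL : Finite (⁅L, (⊤ : Subgroup G)⁆ : Subgroup G)) {a b : G} (hab : ⁅a, b⁆ ∈ L) :
    IsDistorted ℓ ⁅a, b⁆ := by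
  intro ε hε
  obtain ⟨C, hC⟩ := ((Set.toFinite ((⁅L, (⊤ : Subgroup G)⁆ : Subgroup G) : Set G)).image ℓ).bddAbove
  have hbound : ∀ m : ℕ, ℓ (⁅a, b⁆ ^ (m * m)) ≤ C + m * (2 * (ℓ a + ℓ b)) := fun m => by
    have hrem : ℓ (⁅a, b⁆ ^ (m * m) / ⁅a ^ m, b ^ m⁆) ≤ C :=
      hC (Set.mem_image_of_mem ℓ (commutatorElement_pow_div_mem hab m m))
    have hmul := map_mul_le_add ℓ (⁅a, b⁆ ^ (m * m) / ⁅a ^ m, b ^ m⁆) ⁅a ^ m, b ^ m⁆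
    rw [div_mul_cancel] at hmul
    linarith [map_commutatorElement_le ℓ (a ^ m) (b ^ m), map_pow_le_natCast_mul ℓ a m,
      map_pow_le_natCast_mul ℓ b m]
  have hC₀ : 0 ≤ C := by simpa using hC (Set.mem_image_of_mem ℓ (one_mem _))
  obtain ⟨m, hm⟩ := exists_nat_ge ((C + 2 * (ℓ a + ℓ b)) / ε)
  rw [div_le_iff₀ hε] at hm
  refine ⟨(m + 1) * (m + 1), by positivity, (hbound (m + 1)).trans ?_⟩
  calc C + (m + 1 : ℕ) * (2 * (ℓ a + ℓ b))
      ≤ (m + 1 : ℕ) * C + (m + 1 : ℕ) * (2 * (ℓ a + ℓ b)) := by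
        gcongr
        exact le_mul_of_one_le_left hC₀ (by simp)
    _ = (m + 1 : ℕ) * (C + 2 * (ℓ a + ℓ b)) := by ring
    _ ≤ (m + 1 : ℕ) * ((m + 1 : ℕ) * ε) := by
        gcongr
        exact hm.trans (by gcongr; simp)
    _ = ε * ((m + 1) * (m + 1) : ℕ) := by push_cast; ring

theorem exists_finite_subgroup_forall_isOfFinOrder_mem {M : ℕ}
    (hM : ∀ H : Subgroup G, Finite H → Nat.card H ≤ M) (L : Subgroup G) [L.Normal]
    (hL : Finite (⁅L, (⊤ : Subgroup G)⁆ : Subgroup G)) :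
    ∃ H : Subgroup G, Finite H ∧ ∀ z ∈ L, IsOfFinOrder z → z ∈ H := by
  let 𝓗 := {H : Subgroup G | Finite H ∧ ⁅L, (⊤ : Subgroup G)⁆ ≤ H ∧ H ≤ L}
  have hbdd : BddAbove ((fun H : Subgroup G => Nat.card H) '' 𝓗) :=
    ⟨M, Set.forall_mem_image.2 fun H hH => hM H hH.1⟩
  have hne : 𝓗.Nonempty := ⟨_, hL, le_rfl, Subgroup.commutator_le_left L ⊤⟩
  obtain ⟨H, ⟨hfin, hle, hHL⟩, hcard⟩ := Nat.sSup_mem (hne.image _) hbdd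
  have : H.Normal := Subgroup.commutator_top_right_le_iff.1
    ((Subgroup.commutator_mono hHL le_rfl).trans hle)
  refine ⟨H, hfin, fun z hzL hz => ?_⟩
  have hsup_fin : Finite (H ⊔ Subgroup.zpowers z : Subgroup G) := by
    have : Finite (Subgroup.zpowers z) := finite_zpowers.2 hz
    rw [← SetLike.coe_sort_coe, Subgroup.normal_mul]
    exact ((Set.toFinite (H : Set G)).mul (Set.toFinite (Subgroup.zpowers z : Set G))).to_subtype
  have hsup : H ⊔ Subgroup.zpowers z ∈ 𝓗 :=
    ⟨hsup_fin, hle.trans le_sup_left, sup_le hHL (Subgroup.zpowers_le.2 hzL)⟩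
  have heq : H = H ⊔ Subgroup.zpowers z := Subgroup.eq_of_le_of_card_ge le_sup_left
    ((le_csSup hbdd (Set.mem_image_of_mem _ hsup)).trans hcard.ge)
  rw [heq]
  exact Subgroup.mem_sup_right (Subgroup.mem_zpowers z)

variable {ℓ : GroupSeminorm G} {M : ℕ}

theorem finite_commutator_top_of_finite_commutator_commutator_top
    (hℓ : ∀ z, IsDistorted ℓ z → IsOfFinOrder z)
    (hM : ∀ H : Subgroup G, Finite H → Nat.card H ≤ M) (K : Subgroup G) [K.Normal]
    (hK : Finite (⁅⁅K, (⊤ : Subgroup G)⁆, (⊤ : Subgroup G)⁆ : Subgroup G)) :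
    Finite (⁅K, (⊤ : Subgroup G)⁆ : Subgroup G) := by
  obtain ⟨H, hH, hmem⟩ := exists_finite_subgroup_forall_isOfFinOrder_mem hM _ hK
  refine Finite.Set.subset (H : Set G) (Subgroup.commutator_le.2 fun a ha b hb => ?_)
  have hab := Subgroup.commutator_mem_commutator ha hb
  exact hmem _ hab (hℓ _ (isDistorted_commutatorElement ℓ hK hab))

theorem finite_commutator_of_isNilpotent [Group.IsNilpotent G]
    (hℓ : ∀ z, IsDistorted ℓ z → IsOfFinOrder z)
    (hM : ∀ H : Subgroup G, Finite H → Nat.card H ≤ M) : Finite (commutator G) := by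
  have descend : ∀ n, Finite ((⊤ : Subgroup G).lowerCentralSeries (n + 1)) →
      Finite (commutator G) := by
    intro n
    induction n with
    | zero => exact id
    | succ n ih =>
      intro h
      exact ih (finite_commutator_top_of_finite_commutator_commutator_top hℓ hM _ h)
  obtain ⟨n, hn⟩ := Subgroup.nilpotent_iff_lowerCentralSeries.1 ‹Group.IsNilpotent G›
  refine descend n ?_
  rw [Subgroup.lowerCentralSeries_succ, hn, Subgroup.commutator_bot_left]
  infer_instance

theorem finiteIndex_center_of_finite_commutator [Group.FG G] [Finite (commutator G)] :
    (Subgroup.center G).FiniteIndex := by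
  have : Finite (commutatorSet G) := Finite.Set.subset (commutator G : Set G) <| by
    rw [commutator_eq_closure]
    exact Subgroup.subset_closure
  infer_instance

theorem CoarselyHelly.finiteIndex_center {X : Type*} [PseudoMetricSpace X] [MulAction G X]
    [IsIsometricSMul G X] {δ : ℝ} (hX : CoarselyHelly X δ) (hG : UniformlyProper G X)
    [Group.FG G] [Group.IsNilpotent G] : (Subgroup.center G).FiniteIndex := by
  obtain ⟨p⟩ := hX.nonempty
  obtain ⟨M, hM⟩ := exists_card_finite_subgroup_le hX hG
  have : Finite (commutator G) :=
    finite_commutator_of_isNilpotent (fun _ hz => IsDistorted.isOfFinOrder hX hG (p := p) hz) hM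
  exact finiteIndex_center_of_finite_commutator

end Nilpotent

/-! ### Helly graphs as coarsely Helly spaces -/

section Graph

variable {V : Type*} {Γ : SimpleGraph V}

/-- The path metric of a connected graph, as a metric space structure on its vertices. -/
noncomputable abbrev pathMetricSpace (hΓ : Γ.Connected) : MetricSpace V where
  dist u v := Γ.dist u v
  dist_self u := by simp
  dist_comm u v := by rw [SimpleGraph.dist_comm]
  dist_triangle u v w := by exact_mod_cast hΓ.dist_triangle
  eq_of_dist_eq_zero h := hΓ.dist_eq_zero_iff.1 (by exact_mod_cast h)

theorem reflTransGen_dist_le_one (hΓ : Γ.Connected) (u v : V) :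
    letI := pathMetricSpace hΓ
    Relation.ReflTransGen (fun x y : V => dist x y ≤ 1) u v := by
  refine Relation.ReflTransGen.mono (fun x y hxy => ?_) u v
    ((SimpleGraph.reachable_iff_reflTransGen u v).1 (hΓ u v))
  exact Nat.cast_le_one.2 (SimpleGraph.dist_eq_one_iff_adj.2 hxy).le

theorem IsHellyGraph.coarselyHelly {V : Type} {Γ : SimpleGraph V} (hΓ : IsHellyGraph Γ) :
    letI := pathMetricSpace hΓ.1
    CoarselyHelly V 1 := by
  let _ := pathMetricSpace hΓ.1
  intro f hf
  obtain ⟨x, hx⟩ := hΓ.2 (fun v : V => v) (fun v => ⌈f v⌉₊) fun u v => by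
    have : (Γ.dist u v : ℝ) ≤ ⌈f u⌉₊ + ⌈f v⌉₊ :=
      (hf u v).trans (add_le_add (Nat.le_ceil _) (Nat.le_ceil _))
    exact_mod_cast this
  exact ⟨x, fun v => (Nat.cast_le.2 (hx v)).trans (Nat.ceil_lt_add_one (hf.nonneg v)).le⟩

namespace IsProperCocompactGraphAction

variable {G : Type*} [Group G] {act : G →* Equiv.Perm V}

theorem isIsometricSMul (hact : IsProperCocompactGraphAction Γ act) (hΓ : Γ.Connected) :
    letI := pathMetricSpace hΓ
    letI := MulAction.compHom V act
    IsIsometricSMul G V := by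
  let _ := pathMetricSpace hΓ
  let _ := MulAction.compHom V act
  have dist_le : ∀ (g : G) (u v : V), Γ.dist (g • u) (g • v) ≤ Γ.dist u v := by
    intro g u v
    obtain ⟨w, hw⟩ := hΓ.exists_walk_length_eq_dist u v
    let φ : Γ →g Γ := ⟨act g, hact.1 g _ _⟩
    rw [← hw, ← w.length_map φ]
    exact SimpleGraph.dist_le (w.map φ)
  refine ⟨fun g => Isometry.of_dist_eq fun u v => Nat.cast_inj.2 (le_antisymm (dist_le g u v) ?_)⟩
  simpa only [inv_smul_smul] using dist_le g⁻¹ (g • u) (g • v)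

theorem finite_dist_smul_le (hact : IsProperCocompactGraphAction Γ act) (hΓ : Γ.Connected) :
    letI := pathMetricSpace hΓ
    letI := MulAction.compHom V act
    ∀ (v : V) (R : ℝ), {g : G | dist v (g • v) ≤ R}.Finite :=
  fun v R => (hact.2.1 v ⌊R⌋₊).subset fun _ hg => Nat.le_floor hg

theorem uniformlyProper (hact : IsProperCocompactGraphAction Γ act) (hΓ : Γ.Connected) :
    letI := pathMetricSpace hΓ
    letI := MulAction.compHom V act
    UniformlyProper G V := by
  let _ := pathMetricSpace hΓ
  let _ := MulAction.compHom V act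
  have := hact.isIsometricSMul hΓ
  obtain ⟨S, hS⟩ := hact.2.2
  exact uniformlyProper_of_finite_representatives (hact.finite_dist_smul_le hΓ) S.finite_toSet hS

theorem groupFG (hact : IsProperCocompactGraphAction Γ act) (hΓ : Γ.Connected) : Group.FG G := by
  let _ := pathMetricSpace hΓ
  let _ := MulAction.compHom V act
  have := hact.isIsometricSMul hΓ
  obtain ⟨p⟩ := hΓ.nonempty
  obtain ⟨S, hS⟩ := hact.2.2
  obtain ⟨D, hD⟩ := exists_dist_smul_le_of_finite_representatives S.finite_toSet hS p
  exact Group.fg_iff.2 ⟨_, closure_dist_smul_le_eq_top zero_le_one (reflTransGen_dist_le_one hΓ) hD,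
    hact.finite_dist_smul_le hΓ p _⟩

end IsProperCocompactGraphAction

end Graph

theorem virtually_nilpotent_helly_is_virtually_abelian_general
    {G X : Type*} [Group G] [Group.FG G] [PseudoMetricSpace X] [MulAction G X] [IsIsometricSMul G X]
    {δ : ℝ} (hX : CoarselyHelly X δ) (hG : UniformlyProper G X)
    (hnilp : ∃ N : Subgroup G, N.FiniteIndex ∧ Group.IsNilpotent N) :
    ∃ A : Subgroup G, A.FiniteIndex ∧ ∀ a b : A, a * b = b * a := by
  obtain ⟨N, hN, hnil⟩ := hnilp
  have : IsIsometricSMul N X := ⟨fun n => isometry_smul X (n : G)⟩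
  have hcenter : (Subgroup.center N).FiniteIndex := hX.finiteIndex_center (hG.subgroup N)
  refine ⟨(Subgroup.center N).map N.subtype, ⟨?_⟩, ?_⟩
  · rw [Subgroup.index_map_subtype]
    exact mul_ne_zero hcenter.index_ne_zero hN.index_ne_zero
  · rintro ⟨_, a, -, rfl⟩ ⟨_, b, hb, rfl⟩
    exact Subtype.ext (congrArg N.subtype (Subgroup.mem_center_iff.1 hb a))

/-- A virtually nilpotent group acting properly and cocompactly on a Helly graph is
virtually abelian. -/
theorem virtually_nilpotent_helly_is_virtually_abelian
    {G : Type*} [Group G]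
    (hHelly : ∃ (V : Type) (Γ : SimpleGraph V) (act : G →* Equiv.Perm V),
      IsHellyGraph Γ ∧ IsProperCocompactGraphAction Γ act)
    (hnilp : ∃ N : Subgroup G, N.FiniteIndex ∧ Group.IsNilpotent N) :
    ∃ A : Subgroup G, A.FiniteIndex ∧ ∀ a b : A, a * b = b * a := by
  obtain ⟨V, Γ, act, hΓ, hact⟩ := hHelly
  let _ := pathMetricSpace hΓ.1
  let _ := MulAction.compHom V act
  have := hact.isIsometricSMul hΓ.1
  have := hact.groupFG hΓ.1
  exact virtually_nilpotent_helly_is_virtually_abelian_general hΓ.coarselyHelly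
    (hact.uniformlyProper hΓ.1) hnilp
end

section
/- Let d be a metric on ℤ and K ≥ 1, A ≥ 0, C ≥ 0 constants such that |m − n|/K − A ≤ d(m, n) ≤ K|m − n| + A for all m, n ∈ ℤ, and such that d(m, n) − C ≤ d(k + m, k + n) ≤ d(m, n) + C for all k, m, n ∈ ℤ. Then there exists L ∈ [1/K, K] such that d(0, n)/|n| tends to L as n tends to +∞ and also as n tends to −∞. -/
/-!
By rough invariance and the triangle inequality, `n ↦ d 0 (n • g)` is subadditive on `ℕ` up to the
additive constant `C`, so Fekete's lemma gives it a linear growth rate. Symmetry together with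
rough invariance gives `|d 0 (-x) - d 0 x| ≤ C`, an error that disappears after division by `|n|`;
hence negative multiples of `g` grow at the same rate.
-/

open Filter Topology

section DivAtTop

variable {α 𝕜 : Type*} [Field 𝕜] [LinearOrder 𝕜] [IsStrictOrderedRing 𝕜] [TopologicalSpace 𝕜]
  [OrderTopology 𝕜] {l : Filter α} {r u v : α → 𝕜} {L : 𝕜}

theorem tendsto_div_of_abs_sub_le {C : 𝕜} (hr : Tendsto r l atTop)
    (hu : Tendsto (fun x => u x / r x) l (𝓝 L)) (huv : ∀ᶠ x in l, |v x - u x| ≤ C) :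
    Tendsto (fun x => v x / r x) l (𝓝 L) := by
  have herr : Tendsto (fun x => (v x - u x) / r x) l (𝓝 0) :=
    tendsto_bdd_div_atTop_nhds_zero (huv.mono fun _ h => (abs_le.1 h).1)
      (huv.mono fun _ h => (abs_le.1 h).2) hr
  simpa only [← add_div, add_sub_cancel, add_zero] using hu.add herr

theorem tendsto_mul_add_const_div (hr : Tendsto r l atTop) (a b : 𝕜) :
    Tendsto (fun x => (a * r x + b) / r x) l (𝓝 a) := by
  have hmul : Tendsto (fun x => a * r x / r x) l (𝓝 a) :=
    tendsto_const_nhds.congr' <| (hr.eventually_ne_atTop 0).mono fun _ hx =>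
      (mul_div_cancel_right₀ a hx).symm
  exact tendsto_div_of_abs_sub_le hr hmul (C := |b|) (by simp)

theorem le_of_tendsto_div_of_mul_sub_le [l.NeBot] {a b : 𝕜} (hr : Tendsto r l atTop)
    (hu : Tendsto (fun x => u x / r x) l (𝓝 L)) (h : ∀ᶠ x in l, a * r x - b ≤ u x) : a ≤ L := by
  refine le_of_tendsto_of_tendsto (tendsto_mul_add_const_div hr a (-b)) hu ?_
  filter_upwards [h, hr.eventually_ge_atTop 0] with x hx hrx
  rw [← sub_eq_add_neg]
  exact div_le_div_of_nonneg_right hx hrx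

theorem le_of_tendsto_div_of_le_mul_add [l.NeBot] {a b : 𝕜} (hr : Tendsto r l atTop)
    (hu : Tendsto (fun x => u x / r x) l (𝓝 L)) (h : ∀ᶠ x in l, u x ≤ a * r x + b) : L ≤ a := by
  refine le_of_tendsto_of_tendsto hu (tendsto_mul_add_const_div hr a b) ?_
  filter_upwards [h, hr.eventually_ge_atTop 0] with x hx hrx
  exact div_le_div_of_nonneg_right hx hrx

end DivAtTop

theorem exists_tendsto_div_of_roughly_subadditive {u : ℕ → ℝ} {C : ℝ}
    (hu : ∀ m n, u (m + n) ≤ u m + u n + C) (hbdd : BddBelow (Set.range fun n => u n / n)) :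
    ∃ L, Tendsto (fun n => u n / n) atTop (𝓝 L) := by
  have hsub : Subadditive fun n => u n + C := fun m n => by linarith [hu m n]
  have hbdd' : BddBelow (Set.range fun n : ℕ => (u n + C) / n) := by
    simp only [add_div]
    exact hbdd.range_add (tendsto_const_div_atTop_nhds_zero_nat C).bddBelow_range
  exact ⟨hsub.lim, tendsto_div_of_abs_sub_le tendsto_natCast_atTop_atTop
    (hsub.tendsto_lim hbdd') (C := |C|) (by simp)⟩

theorem tendsto_natAbs_cofinite_atTop : Tendsto Int.natAbs cofinite atTop := by
  rw [← tendsto_natCast_atTop_iff (R := ℤ)]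
  simpa only [Function.comp_def, Int.natCast_natAbs, Int.cofinite_eq, tendsto_sup] using
    And.intro tendsto_abs_atBot_atTop tendsto_abs_atTop_atTop

theorem tendsto_div_abs_cofinite_of_roughly_even {f : ℤ → ℝ} {C L : ℝ}
    (heven : ∀ n, |f (-n) - f n| ≤ C)
    (hf : Tendsto (fun n : ℕ => f n / n) atTop (𝓝 L)) :
    Tendsto (fun n : ℤ => f n / |(n : ℝ)|) cofinite (𝓝 L) := by
  have hnatAbs := hf.comp tendsto_natAbs_cofinite_atTop
  have hclose (n : ℤ) : |f n - f n.natAbs| ≤ C := by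
    rcases n.natAbs_eq with hn | hn
    · rw [← hn, sub_self, abs_zero]
      exact (abs_nonneg _).trans (heven 0)
    · simpa only [← hn] using heven n.natAbs
  have hcast (n : ℤ) : |(n : ℝ)| = n.natAbs := by rw [Nat.cast_natAbs, Int.cast_abs]
  simp only [hcast]
  exact tendsto_div_of_abs_sub_le
    (tendsto_natCast_atTop_atTop.comp tendsto_natAbs_cofinite_atTop) hnatAbs (.of_forall hclose)

theorem nonneg_of_symm_of_triangle {α : Type*} {d : α → α → ℝ} (hsymm : ∀ x y, d x y = d y x)
    (htri : ∀ x y z, d x z ≤ d x y + d y z) (x y : α) : 0 ≤ d x y := by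
  linarith [htri x x x, htri x y x, hsymm x y]

section RoughlyInvariant

variable {G : Type*} {d : G → G → ℝ} {C : ℝ}

theorem add_nsmul_le_of_roughly_invariant [AddMonoid G] (htri : ∀ x y z, d x z ≤ d x y + d y z)
    (hinv : ∀ k x y, d (k + x) (k + y) ≤ d x y + C) (g : G) (m n : ℕ) :
    d 0 ((m + n) • g) ≤ d 0 (m • g) + d 0 (n • g) + C := by
  have hshift := hinv (m • g) 0 (n • g)
  rw [add_zero, ← add_nsmul] at hshift
  linarith [htri 0 (m • g) ((m + n) • g)]

theorem exists_tendsto_nsmul_div_of_roughly_invariant [AddMonoid G]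
    (hnonneg : ∀ x, 0 ≤ d 0 x) (htri : ∀ x y z, d x z ≤ d x y + d y z)
    (hinv : ∀ k x y, d (k + x) (k + y) ≤ d x y + C) (g : G) :
    ∃ L, Tendsto (fun n : ℕ => d 0 (n • g) / n) atTop (𝓝 L) := by
  refine exists_tendsto_div_of_roughly_subadditive
    (add_nsmul_le_of_roughly_invariant htri hinv g) ⟨0, ?_⟩
  rintro _ ⟨n, rfl⟩
  exact div_nonneg (hnonneg (n • g)) n.cast_nonneg

theorem abs_neg_sub_le_of_roughly_invariant [AddGroup G] (hsymm : ∀ x y, d x y = d y x)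
    (hinv : ∀ k x y, d (k + x) (k + y) ≤ d x y + C) (x : G) : |d 0 (-x) - d 0 x| ≤ C := by
  have hle (y : G) : d 0 (-y) ≤ d 0 y + C := by
    simpa only [neg_add_cancel, add_zero, hsymm y 0] using hinv (-y) y 0
  have hge := hle (-x)
  rw [neg_neg] at hge
  rw [abs_le]
  constructor <;> linarith [hle x]

theorem exists_tendsto_zsmul_div_abs_of_roughly_invariant [AddGroup G]
    (hsymm : ∀ x y, d x y = d y x) (htri : ∀ x y z, d x z ≤ d x y + d y z)
    (hinv : ∀ k x y, d (k + x) (k + y) ≤ d x y + C) (g : G) :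
    ∃ L, Tendsto (fun n : ℤ => d 0 (n • g) / |(n : ℝ)|) cofinite (𝓝 L) := by
  obtain ⟨L, hL⟩ := exists_tendsto_nsmul_div_of_roughly_invariant
    (nonneg_of_symm_of_triangle hsymm htri 0) htri hinv g
  refine ⟨L, tendsto_div_abs_cofinite_of_roughly_even (f := fun n => d 0 (n • g)) (C := C)
    (fun n => ?_) (by simpa only [natCast_zsmul] using hL)⟩
  simpa only [neg_zsmul] using abs_neg_sub_le_of_roughly_invariant hsymm hinv (n • g)

theorem rough_invariant_metric_on_int_has_linear_growth_rate_general [AddGroup G]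
    (hsymm : ∀ x y, d x y = d y x) (htri : ∀ x y z, d x z ≤ d x y + d y z)
    (hinv : ∀ k x y, d (k + x) (k + y) ≤ d x y + C) (g : G) {a b A : ℝ}
    (hbounds : ∀ n : ℤ, a * |(n : ℝ)| - A ≤ d 0 (n • g) ∧ d 0 (n • g) ≤ b * |(n : ℝ)| + A) :
    ∃ L, a ≤ L ∧ L ≤ b ∧
      Tendsto (fun n : ℤ => d 0 (n • g) / |(n : ℝ)|) atTop (𝓝 L) ∧
      Tendsto (fun n : ℤ => d 0 (n • g) / |(n : ℝ)|) atBot (𝓝 L) := by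
  obtain ⟨L, hL⟩ := exists_tendsto_zsmul_div_abs_of_roughly_invariant hsymm htri hinv g
  rw [Int.cofinite_eq, tendsto_sup] at hL
  obtain ⟨hbot, htop⟩ := hL
  have habs : Tendsto (fun n : ℤ => |(n : ℝ)|) atTop atTop :=
    tendsto_abs_atTop_atTop.comp tendsto_intCast_atTop_atTop
  exact ⟨L, le_of_tendsto_div_of_mul_sub_le habs htop (.of_forall fun n => (hbounds n).1),
    le_of_tendsto_div_of_le_mul_add habs htop (.of_forall fun n => (hbounds n).2), htop, hbot⟩

end RoughlyInvariant

/-- If `d` is a metric on `ℤ` such that the identity is a `(K, A)`-quasi-isometry from `ℤ`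
with its standard metric to `(ℤ, d)`, and `d` is roughly translation-invariant with
constant `C`, then `d(0, n)/|n|` tends to a limit `L ∈ [1/K, K]` as `n → ±∞`. -/
theorem rough_invariant_metric_on_int_has_linear_growth_rate
    (d : ℤ → ℤ → ℝ)
    (hrefl : ∀ m : ℤ, d m m = 0)
    (hpos : ∀ m n : ℤ, m ≠ n → 0 < d m n)
    (hsymm : ∀ m n : ℤ, d m n = d n m)
    (htri : ∀ k m n : ℤ, d k n ≤ d k m + d m n)
    (K A C : ℝ) (hK : 1 ≤ K) (hA : 0 ≤ A) (hC : 0 ≤ C)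
    (hqi : ∀ m n : ℤ, (|m - n| : ℝ) / K - A ≤ d m n ∧ d m n ≤ K * (|m - n| : ℝ) + A)
    (hinv : ∀ k m n : ℤ, d m n - C ≤ d (k + m) (k + n) ∧ d (k + m) (k + n) ≤ d m n + C) :
    ∃ L : ℝ, 1 / K ≤ L ∧ L ≤ K ∧
      Filter.Tendsto (fun n : ℤ => d 0 n / |(n : ℝ)|) Filter.atTop (nhds L) ∧
      Filter.Tendsto (fun n : ℤ => d 0 n / |(n : ℝ)|) Filter.atBot (nhds L) := by
  simpa only [smul_eq_mul, mul_one] using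
    rough_invariant_metric_on_int_has_linear_growth_rate_general hsymm htri
      (fun k m n => (hinv k m n).2) 1 (a := 1 / K) (b := K) (A := A)
      fun n => by simpa [div_eq_inv_mul] using hqi 0 n
end

section
/- Let d be a proper, left-invariant metric on the group ℤⁿ which is C₀-roughly geodesic for some C₀ > 0. Then there exist a norm N on ℝⁿ = (Fin n → ℝ) and a constant C ≥ 0 such that the inclusion ℤⁿ ↪ ℝⁿ is a C-rough isometry from (ℤⁿ, d) to (ℝⁿ, N). Moreover, for every ℤ-linear automorphism f of ℤⁿ which is a rough isometry of (ℤⁿ, d) (for some constant), the induced ℝ-linear automorphism of ℝⁿ is an isometry of (ℝⁿ, N), i.e., N(f(r)) = N(r) for all r ∈ ℝⁿ. -/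
/-!
Let `ℓ` be the distance to `0`. The crux is that `2 * ℓ z ≤ ℓ (2 • z) + D` for some constant `D`.
By a discrete Hobby–Rice theorem, a consequence of Fan's combinatorial lemma on the cross-polytope,
the steps of a rough geodesic from `0` to `2 • z` can be distributed over two classes, with a
number of switches depending only on the dimension, such that each class contains about half of
the steps and its increments add up to about `z`. As pieces of a rough geodesic can be
translated freely and concatenated, at the cost of a constant for each switch, `ℓ z` exceeds half
the length of the geodesic by at most a constant.

Hence the limit of `ℓ (k • z) / k` stays within `D` of `ℓ z`, and it extends to a seminorm on the
real vector space, which is a norm because balls are finite. Two seminorms which differ by a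
bounded amount on the lattice are equal, so rough isometries act isometrically.
-/

section AlternatingColourings

variable {α κ : Type*}

/-- The key by which indices are sorted: by colour, ties being broken by the index itself. -/
def colourKey (c : α → κ) (i : α) : κ ×ₗ α := toLex (c i, i)

lemma colourKey_injective (c : α → κ) : Function.Injective (colourKey c) :=
  fun _ _ h => (Prod.ext_iff.1 (toLex.injective h)).2

variable [LinearOrder α] [LinearOrder κ]

/-- Fan's alternating simplices: when the indices in `I` are listed by increasing colour `c`,
their signs `s` read `ε, -ε, ε, …`. -/
def IsAlternating (c : α → κ) (s : α → ℤˣ) (ε : ℤˣ) (I : Finset α) : Prop :=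
  ∀ i ∈ I, s i = ε * (-1) ^ {j ∈ I | colourKey c j < colourKey c i}.card

instance (c : α → κ) (s : α → ℤˣ) (ε : ℤˣ) (I : Finset α) : Decidable (IsAlternating c s ε I) :=
  inferInstanceAs (Decidable (∀ i ∈ I, _))

/-- The indicator of `IsAlternating`, with values in `ZMod 2` so that sums of it count alternating
simplices modulo two. -/
def alternatingIndicator (c : α → κ) (s : α → ℤˣ) (ε : ℤˣ) (I : Finset α) : ZMod 2 :=
  if IsAlternating c s ε I then 1 else 0

variable {c c' : α → κ} {s s' : α → ℤˣ} {ε : ℤˣ} {I : Finset α} {M : α}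

lemma IsAlternating.congr (h : IsAlternating c s ε I) (hc : ∀ i ∈ I, c i = c' i)
    (hs : ∀ i ∈ I, s i = s' i) : IsAlternating c' s' ε I := by
  intro i hi
  rw [← hs i hi, h i hi]
  congr 3
  exact Finset.filter_congr fun j hj => by simp only [colourKey, hc i hi, hc j hj]

lemma alternatingIndicator_congr (hc : ∀ i ∈ I, c i = c' i) (hs : ∀ i ∈ I, s i = s' i) :
    alternatingIndicator c s ε I = alternatingIndicator c' s' ε I :=
  if_congr ⟨fun h => h.congr hc hs, fun h => h.congr (fun i hi => (hc i hi).symm)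
    fun i hi => (hs i hi).symm⟩ rfl rfl

lemma alternatingIndicator_neg (c : α → κ) (s : α → ℤˣ) (ε : ℤˣ) (I : Finset α) :
    alternatingIndicator c (-s) (-ε) I = alternatingIndicator c s ε I :=
  if_congr (by simp only [IsAlternating, Pi.neg_apply, neg_mul, neg_inj]) rfl rfl

lemma isAlternating_insert_of_lt (h : ∀ j ∈ I, colourKey c j < colourKey c M) :
    IsAlternating c s ε (insert M I) ↔ IsAlternating c s ε I ∧ s M = ε * (-1) ^ I.card := by
  have below_max : {j ∈ insert M I | colourKey c j < colourKey c M} = I := by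
    rw [Finset.filter_insert, if_neg (lt_irrefl _), Finset.filter_true_of_mem h]
  have below_of_mem : ∀ i ∈ I, {j ∈ insert M I | colourKey c j < colourKey c i} =
      {j ∈ I | colourKey c j < colourKey c i} := fun i hi => by
    rw [Finset.filter_insert, if_neg (h i hi).not_gt]
  rw [IsAlternating, Finset.forall_mem_insert, below_max, and_comm]
  refine and_congr_left' (forall₂_congr fun i hi => ?_)
  rw [below_of_mem i hi]

lemma alternatingIndicator_insert_of_lt (h : ∀ j ∈ I, colourKey c j < colourKey c M) :
    alternatingIndicator c s ε (insert M I) =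
      if s M = ε * (-1) ^ I.card then alternatingIndicator c s ε I else 0 := by
  rw [alternatingIndicator, alternatingIndicator, ← ite_and]
  exact if_congr (by rw [isAlternating_insert_of_lt h, and_comm]) rfl rfl

theorem sum_alternatingIndicator_erase (c : α → κ) (s : α → ℤˣ) (I : Finset α) :
    ∑ i ∈ I, alternatingIndicator c s 1 (I.erase i) =
      alternatingIndicator c s 1 I + alternatingIndicator c s (-1) I := by
  induction I using Finset.induction_on_max_value (colourKey c) with
  | empty => simp [alternatingIndicator, IsAlternating, CharTwo.add_self_eq_zero]
  | insert M I hM hmax ih =>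
    have hlt : ∀ j ∈ I, colourKey c j < colourKey c M := fun j hj =>
      (hmax j hj).lt_of_ne fun h => hM (colourKey_injective c h ▸ hj)
    have inner_facets : ∀ i ∈ I, alternatingIndicator c s 1 ((insert M I).erase i) =
        if s M = -(-1) ^ I.card then alternatingIndicator c s 1 (I.erase i) else 0 := by
      intro i hi
      rw [Finset.erase_insert_of_ne (ne_of_mem_of_not_mem hi hM).symm,
        alternatingIndicator_insert_of_lt fun j hj => hlt j (Finset.mem_of_mem_erase hj),
        ← Finset.card_erase_add_one hi, pow_succ, mul_neg_one, neg_neg, one_mul]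
    rw [Finset.sum_insert hM, Finset.erase_insert hM, Finset.sum_congr rfl inner_facets,
      alternatingIndicator_insert_of_lt hlt, alternatingIndicator_insert_of_lt hlt,
      one_mul, neg_one_mul]
    rcases eq_or_ne (s M) ((-1) ^ I.card) with h | h
    · simp [h, units_ne_neg_self]
    · rw [Int.units_ne_iff_eq_neg] at h
      simp only [h, neg_units_ne_self, if_true, if_false, ih, zero_add]
      rw [← add_assoc, CharTwo.add_self_eq_zero, zero_add]

end AlternatingColourings

section Flags

variable {m : ℕ}

/-- A complete flag of faces of the `m`-dimensional cross-polytope, whose nonempty faces are the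
nonzero sign vectors: `x.1 j` is the step at which the coordinate `j` becomes nonzero and `x.2 j`
tells whether its sign is then positive. -/
abbrev SignedFlag (m : ℕ) : Type := Equiv.Perm (Fin m) × (Fin m → Bool)

/-- The `i`-th face of a flag, with `i + 1` nonzero coordinates. -/
def flagFace (x : SignedFlag m) (i : ℕ) : Fin m → SignType :=
  fun j => if (x.1 j : ℕ) ≤ i then bif x.2 j then 1 else -1 else 0

lemma flagFace_ne_zero (x : SignedFlag m) {i : ℕ} (hi : i < m) : flagFace x i ≠ 0 := by
  intro h
  have h_entry := congrFun h (x.1.symm ⟨i, hi⟩)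
  cases hx : x.2 (x.1.symm ⟨i, hi⟩) <;> simp [flagFace, hx] at h_entry

/-- The flags which add the coordinates from `d` on in their order and with positive sign. The first
`d` faces of such flags triangulate the `(d - 1)`-dimensional sphere. -/
def flagsFixedFrom (m d : ℕ) : Finset (SignedFlag m) :=
  {x | ∀ j : Fin m, d ≤ (j : ℕ) → x.1 j = j ∧ x.2 j = true}

lemma mem_flagsFixedFrom {d : ℕ} {x : SignedFlag m} :
    x ∈ flagsFixedFrom m d ↔ ∀ j : Fin m, d ≤ (j : ℕ) → x.1 j = j ∧ x.2 j = true := by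
  simp only [flagsFixedFrom, Finset.mem_filter_univ]

lemma val_lt_of_mem_flagsFixedFrom {d : ℕ} {x : SignedFlag m} (hx : x ∈ flagsFixedFrom m d)
    {j : Fin m} (h : (x.1 j : ℕ) < d) : (j : ℕ) < d := by
  by_contra! hj
  rw [(mem_flagsFixedFrom.1 hx j hj).1] at h
  exact hj.not_gt h

/-- The flags in `flagsFixedFrom m (D + 1)` whose first `D + 1` faces lie in the closed upper
hemisphere, the one where the last free coordinate `D` is nonnegative. -/
def upperFlags (D : Fin m) : Finset (SignedFlag m) :=
  {x ∈ flagsFixedFrom m (D + 1) | x.2 D = true}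

lemma filter_upperFlags_apply_eq (D : Fin m) :
    {x ∈ upperFlags D | x.1 D = D} = flagsFixedFrom m D := by
  ext x
  simp only [upperFlags, Finset.mem_filter, mem_flagsFixedFrom]
  constructor
  · rintro ⟨⟨h_above, h_sign⟩, h_perm⟩ j hj
    rcases hj.eq_or_lt with hj | hj
    · rw [← Fin.ext hj]
      exact ⟨h_perm, h_sign⟩
    · exact h_above j hj
  · exact fun h => ⟨⟨fun j hj => h j (by omega), (h D le_rfl).2⟩, (h D le_rfl).1⟩

/-- The flag whose first `d` faces are opposite to those of `x`. -/
def antipodalFlag (d : ℕ) (x : SignedFlag m) : SignedFlag m :=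
  (x.1, fun j => if (j : ℕ) < d then !x.2 j else x.2 j)

lemma antipodalFlag_antipodalFlag (d : ℕ) (x : SignedFlag m) :
    antipodalFlag d (antipodalFlag d x) = x := by
  refine Prod.ext rfl (funext fun j => ?_)
  by_cases h : (j : ℕ) < d <;> simp [antipodalFlag, h]

lemma antipodalFlag_mem {d : ℕ} {x : SignedFlag m} (hx : x ∈ flagsFixedFrom m d) :
    antipodalFlag d x ∈ flagsFixedFrom m d := by
  rw [mem_flagsFixedFrom] at hx ⊢
  exact fun j hj => by simpa [antipodalFlag, hj.not_gt] using hx j hj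

lemma flagFace_antipodalFlag {d i : ℕ} {x : SignedFlag m} (hx : x ∈ flagsFixedFrom m d)
    (hi : i < d) : flagFace (antipodalFlag d x) i = -flagFace x i := by
  funext j
  simp only [flagFace, antipodalFlag, Pi.neg_apply]
  by_cases hj : (x.1 j : ℕ) ≤ i
  · have hjd : (j : ℕ) < d := val_lt_of_mem_flagsFixedFrom hx (hj.trans_lt hi)
    cases x.2 j <;> simp [hj, hjd]
  · simp [hj]

lemma flagFace_swap_mul {a b : Fin m} (hab : (b : ℕ) = a + 1) (x : SignedFlag m) {i : ℕ}
    (hi : i ≠ a) : flagFace (Equiv.swap a b * x.1, x.2) i = flagFace x i := by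
  funext j
  refine if_congr ?_ rfl rfl
  rw [Equiv.Perm.mul_apply, Equiv.swap_apply_def]
  split_ifs with ha hb <;> simp_all only [ne_eq] <;> omega

/-- The flag obtained by changing the sign of the coordinate which `x` adds at step `D`. -/
def flipAt (D : Fin m) (x : SignedFlag m) : SignedFlag m :=
  (x.1, Function.update x.2 (x.1.symm D) (!x.2 (x.1.symm D)))

lemma flagFace_flipAt (D : Fin m) (x : SignedFlag m) {i : ℕ} (hi : i < D) :
    flagFace (flipAt D x) i = flagFace x i := by
  funext j
  rcases eq_or_ne j (x.1.symm D) with rfl | hj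
  · simp [flagFace, flipAt, hi.not_ge]
  · simp [flagFace, flipAt, hj]

lemma flipAt_mem_upperFlags {D : Fin m} {x : SignedFlag m} (hx : x ∈ upperFlags D)
    (hD : x.1 D ≠ D) : flipAt D x ∈ upperFlags D := by
  simp only [upperFlags, Finset.mem_filter] at hx ⊢
  have hne : D ≠ x.1.symm D := fun h => hD (x.1.symm_apply_eq.1 h.symm).symm
  have hlt : (x.1.symm D : ℕ) < D + 1 := val_lt_of_mem_flagsFixedFrom hx.1 (by simp)
  refine ⟨mem_flagsFixedFrom.2 fun j hj => ?_, by simpa [flipAt, hne] using hx.2⟩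
  have hj' : j ≠ x.1.symm D := fun h => hj.not_gt (h ▸ hlt)
  simpa [flipAt, hj'] using mem_flagsFixedFrom.1 hx.1 j hj

end Flags

section FanParity

variable {m : ℕ} {κ : Type*} [LinearOrder κ] {c : (Fin m → SignType) → κ}
  {s : (Fin m → SignType) → ℤˣ}

/-- The indicator that the faces of the flag `x` indexed by `I` form an alternating simplex for the
colouring `c` with signs `s`. -/
def flagIndicator (c : (Fin m → SignType) → κ) (s : (Fin m → SignType) → ℤˣ) (ε : ℤˣ)
    (I : Finset ℕ) (x : SignedFlag m) : ZMod 2 :=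
  alternatingIndicator (fun i => c (flagFace x i)) (fun i => s (flagFace x i)) ε I

lemma flagIndicator_congr {I : Finset ℕ} {x y : SignedFlag m} (ε : ℤˣ)
    (h : ∀ i ∈ I, flagFace x i = flagFace y i) :
    flagIndicator c s ε I x = flagIndicator c s ε I y :=
  alternatingIndicator_congr (fun i hi => by rw [h i hi]) fun i hi => by rw [h i hi]

lemma flagIndicator_antipodalFlag (hc : ∀ A, A ≠ 0 → c (-A) = c A)
    (hs : ∀ A, A ≠ 0 → s (-A) = -s A) {d : ℕ} (hd : d ≤ m) {x : SignedFlag m}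
    (hx : x ∈ flagsFixedFrom m d) (ε : ℤˣ) :
    flagIndicator c s (-ε) (Finset.range d) (antipodalFlag d x) =
      flagIndicator c s ε (Finset.range d) x := by
  rw [flagIndicator, flagIndicator, ← alternatingIndicator_neg]
  have face_ne : ∀ i ∈ Finset.range d, flagFace x i ≠ 0 := fun i hi =>
    flagFace_ne_zero x ((Finset.mem_range.1 hi).trans_le hd)
  have face_neg : ∀ i ∈ Finset.range d, flagFace (antipodalFlag d x) i = -flagFace x i :=
    fun i hi => flagFace_antipodalFlag hx (Finset.mem_range.1 hi)
  rw [neg_neg]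
  exact alternatingIndicator_congr (fun i hi => by rw [face_neg i hi, hc _ (face_ne i hi)])
    fun i hi => by rw [Pi.neg_apply, face_neg i hi, hs _ (face_ne i hi), neg_neg]

lemma sum_flagsFixedFrom_eq_sum_upperFlags (hc : ∀ A, A ≠ 0 → c (-A) = c A)
    (hs : ∀ A, A ≠ 0 → s (-A) = -s A) (D : Fin m) :
    ∑ x ∈ flagsFixedFrom m (D + 1), flagIndicator c s 1 (Finset.range (D + 1)) x =
      ∑ x ∈ upperFlags D, (flagIndicator c s 1 (Finset.range (D + 1)) x +
        flagIndicator c s (-1) (Finset.range (D + 1)) x) := by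
  rw [Finset.sum_add_distrib, upperFlags,
    ← Finset.sum_filter_add_sum_filter_not _ fun x : SignedFlag m => x.2 D = true]
  congr 1
  have mem_iff : ∀ x : SignedFlag m, (antipodalFlag (D + 1) x).2 D = true ↔ ¬ x.2 D = true :=
    fun x => by simp [antipodalFlag]
  refine Finset.sum_nbij' (antipodalFlag (D + 1)) (antipodalFlag (D + 1))
    (fun x hx => ?_) (fun x hx => ?_) (fun x _ => antipodalFlag_antipodalFlag _ x)
    (fun x _ => antipodalFlag_antipodalFlag _ x) fun x hx => ?_
  · rw [Finset.mem_filter] at hx ⊢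
    exact ⟨antipodalFlag_mem hx.1, (mem_iff x).2 hx.2⟩
  · rw [Finset.mem_filter] at hx ⊢
    exact ⟨antipodalFlag_mem hx.1, fun h => (mem_iff x).1 h hx.2⟩
  · exact (flagIndicator_antipodalFlag hc hs D.isLt (Finset.mem_filter.1 hx).1 1).symm

-- A flag omitting its `i`-th face extends to a complete flag in exactly two ways.
lemma sum_upperFlags_erase_eq_zero {D : Fin m} {i : ℕ} (hi : i < D) :
    ∑ x ∈ upperFlags D, flagIndicator c s 1 ((Finset.range (D + 1)).erase i) x = 0 := by
  let a : Fin m := ⟨i, hi.trans D.isLt⟩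
  let b : Fin m := ⟨i + 1, (Nat.succ_le_of_lt hi).trans_lt D.isLt⟩
  have hab : a ≠ b := by simp [a, b]
  refine Finset.sum_involution (fun x _ => (Equiv.swap a b * x.1, x.2)) (fun x _ => ?_)
    (fun x _ _ h => ?_) (fun x hx => ?_) fun x _ => ?_
  · rw [flagIndicator_congr (x := (Equiv.swap a b * x.1, x.2)) (y := x) 1 fun k hk =>
      flagFace_swap_mul (by rfl) x (Finset.ne_of_mem_erase hk), CharTwo.add_self_eq_zero]
  · exact hab (Equiv.swap_eq_one_iff.1 (mul_eq_right.1 (congrArg Prod.fst h)))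
  · simp only [upperFlags, Finset.mem_filter] at hx ⊢
    refine ⟨mem_flagsFixedFrom.2 fun j hj => ?_, hx.2⟩
    have hxj := mem_flagsFixedFrom.1 hx.1 j hj
    refine ⟨?_, hxj.2⟩
    rw [Equiv.Perm.mul_apply, hxj.1]
    exact Equiv.swap_apply_of_ne_of_ne (Fin.ne_of_gt (by simp only [a, Fin.lt_def]; omega))
      (Fin.ne_of_gt (by simp only [b, Fin.lt_def]; omega))
  · simp [← mul_assoc]

lemma sum_upperFlags_range (D : Fin m) :
    ∑ x ∈ upperFlags D, flagIndicator c s 1 (Finset.range D) x =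
      ∑ x ∈ flagsFixedFrom m D, flagIndicator c s 1 (Finset.range D) x := by
  rw [← Finset.sum_filter_add_sum_filter_not _ fun x : SignedFlag m => x.1 D = D,
    filter_upperFlags_apply_eq, add_eq_left]
  refine Finset.sum_involution (fun x _ => flipAt D x) (fun x _ => ?_) (fun x _ _ h => ?_)
    (fun x hx => ?_) fun x _ => ?_
  · rw [flagIndicator_congr (x := flipAt D x) (y := x) 1 fun k hk =>
      flagFace_flipAt D x (Finset.mem_range.1 hk), CharTwo.add_self_eq_zero]
  · have h_sign := congrFun (congrArg Prod.snd h) (x.1.symm D)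
    simp [flipAt] at h_sign
  · rw [Finset.mem_filter] at hx ⊢
    exact ⟨flipAt_mem_upperFlags hx.1 hx.2, hx.2⟩
  · simp [flipAt]

lemma sum_flagIndicator_succ (hc : ∀ A, A ≠ 0 → c (-A) = c A) (hs : ∀ A, A ≠ 0 → s (-A) = -s A)
    (D : Fin m) :
    ∑ x ∈ flagsFixedFrom m (D + 1), flagIndicator c s 1 (Finset.range (D + 1)) x =
      ∑ x ∈ flagsFixedFrom m D, flagIndicator c s 1 (Finset.range D) x := by
  have boundary : ∀ x : SignedFlag m, flagIndicator c s 1 (Finset.range (D + 1)) x +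
      flagIndicator c s (-1) (Finset.range (D + 1)) x =
      ∑ i ∈ Finset.range (D + 1), flagIndicator c s 1 ((Finset.range (D + 1)).erase i) x :=
    fun _ => (sum_alternatingIndicator_erase _ _ _).symm
  have erase_last : (Finset.range (D + 1)).erase D = Finset.range D := by
    rw [Finset.range_add_one, Finset.erase_insert Finset.notMem_range_self]
  rw [sum_flagsFixedFrom_eq_sum_upperFlags hc hs, Finset.sum_congr rfl fun x _ => boundary x,
    Finset.sum_comm, Finset.sum_range_succ, erase_last, sum_upperFlags_range,
    Finset.sum_eq_zero fun i hi => sum_upperFlags_erase_eq_zero (Finset.mem_range.1 hi), zero_add]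

theorem sum_flagIndicator_eq_one (hc : ∀ A, A ≠ 0 → c (-A) = c A)
    (hs : ∀ A, A ≠ 0 → s (-A) = -s A) {d : ℕ} (hd : d ≤ m) :
    ∑ x ∈ flagsFixedFrom m d, flagIndicator c s 1 (Finset.range d) x = 1 := by
  induction d with
  | zero =>
    have single : flagsFixedFrom m 0 = {(1, fun _ => true)} := by
      ext x
      simp only [mem_flagsFixedFrom, zero_le, true_imp_iff, Finset.mem_singleton, Prod.ext_iff,
        Equiv.ext_iff, funext_iff, forall_and, Equiv.Perm.one_apply]
    rw [single, Finset.sum_singleton]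
    simp [flagIndicator, alternatingIndicator, IsAlternating]
  | succ d ih => rw [sum_flagIndicator_succ hc hs ⟨d, hd⟩, ih (Nat.le_of_succ_le hd)]

lemma exists_isAlternating_flag (hc : ∀ A, A ≠ 0 → c (-A) = c A)
    (hs : ∀ A, A ≠ 0 → s (-A) = -s A) :
    ∃ x : SignedFlag m, IsAlternating (fun i => c (flagFace x i)) (fun i => s (flagFace x i)) 1
      (Finset.range m) := by
  by_contra! h
  have h_sum := sum_flagIndicator_eq_one hc hs le_rfl
  exact zero_ne_one ((Finset.sum_eq_zero fun x _ => if_neg (h x)).symm.trans h_sum)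

end FanParity

/-- The face relation of the cross-polytope: `A` arises from `B` by replacing entries by zero. -/
def IsFace {α : Type*} (A B : α → SignType) : Prop := ∀ j, A j = 0 ∨ A j = B j

lemma isFace_flagFace {m i k : ℕ} (x : SignedFlag m) (h : i ≤ k) :
    IsFace (flagFace x i) (flagFace x k) := by
  intro j
  by_cases hj : (x.1 j : ℕ) ≤ i
  · exact Or.inr (by simp only [flagFace, hj, hj.trans h, if_true])
  · exact Or.inl (if_neg hj)

-- Of two indices of the same colour which are consecutive in the sorted order, the signs differ.
lemma IsAlternating.exists_eq_and_ne {κ : Type*} [LinearOrder κ] {c : ℕ → κ} {s : ℕ → ℤˣ} {ε : ℤˣ}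
    {m : ℕ} (h : IsAlternating c s ε (Finset.range m)) {t : Finset κ}
    (hc : ∀ i < m, c i ∈ t) (ht : t.card < m) :
    ∃ i k, i < k ∧ k < m ∧ c i = c k ∧ s i ≠ s k := by
  classical
  have repeated : ∃ k, k < m ∧ ∃ i < k, c i = c k := by
    obtain ⟨i, hi, k, hk, hne, heq⟩ := Finset.exists_ne_map_eq_of_card_lt_of_maps_to
      (s := Finset.range m) (by rwa [Finset.card_range]) fun i hi => hc i (by simpa using hi)
    rw [Finset.mem_range] at hi hk
    rcases hne.lt_or_gt with hlt | hlt
    · exact ⟨k, hk, i, hlt, heq⟩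
    · exact ⟨i, hi, k, hlt, heq.symm⟩
  obtain ⟨hkm, i, hik, hcik⟩ := Nat.find_spec repeated
  have first_repeat : ∀ {l}, l < Nat.find repeated → ∀ {i}, i < l → c i ≠ c l := fun hl _ hi heq =>
    Nat.find_min repeated hl ⟨hl.trans hkm, _, hi, heq⟩
  set k := Nat.find repeated
  have below_insert : {l ∈ Finset.range m | colourKey c l < colourKey c k} =
      insert i {l ∈ Finset.range m | colourKey c l < colourKey c i} := by
    ext l
    have only_i : c l = c i → l < k → ¬ l < i → l = i := fun heq hlk hli =>
      by_contra fun hne => first_repeat hlk (by omega) heq.symm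
    simp only [Finset.mem_filter, Finset.mem_range, Finset.mem_insert, colourKey,
      Prod.Lex.toLex_lt_toLex, hcik]
    grind
  refine ⟨i, k, hik, hkm, hcik, ?_⟩
  rw [h i (Finset.mem_range.2 (hik.trans hkm)), h k (Finset.mem_range.2 hkm), below_insert,
    Finset.card_insert_of_notMem (by simp), pow_succ, mul_neg_one, mul_neg]
  exact units_ne_neg_self _

theorem octahedral_tucker {m : ℕ} {κ : Type*} (c : (Fin m → SignType) → κ)
    (s : (Fin m → SignType) → ℤˣ) {t : Finset κ} (ht : t.card < m)
    (hct : ∀ A, A ≠ 0 → c A ∈ t) (hc : ∀ A, A ≠ 0 → c (-A) = c A)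
    (hs : ∀ A, A ≠ 0 → s (-A) = -s A) :
    ∃ A B, A ≠ 0 ∧ IsFace A B ∧ c A = c B ∧ s A ≠ s B := by
  classical
  let _ : LinearOrder κ := IsWellOrder.linearOrder WellOrderingRel
  obtain ⟨x, hx⟩ := exists_isAlternating_flag hc hs
  obtain ⟨i, k, hik, hkm, hcik, hsik⟩ := hx.exists_eq_and_ne
    (fun i hi => hct _ (flagFace_ne_zero x hi)) ht
  exact ⟨flagFace x i, flagFace x k, flagFace_ne_zero x (hik.trans hkm), isFace_flagFace x hik.le,
    hcik, hsik⟩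

lemma IsFace.neg {α : Type*} {A B : α → SignType} (h : IsFace A B) : IsFace (-A) (-B) := fun j =>
  (h j).imp (fun hj => by rw [Pi.neg_apply, hj, neg_zero]) fun hj => by simp only [Pi.neg_apply, hj]

lemma IsFace.ne_zero {α : Type*} {A B : α → SignType} (h : IsFace A B) {j : α} (hj : A j ≠ 0) :
    B j ≠ 0 :=
  (h j).resolve_left hj ▸ hj

theorem octahedral_tucker_nat {m : ℕ} {κ : Type*} (c : (ℕ → SignType) → κ)
    (s : (ℕ → SignType) → ℤˣ) {t : Finset κ} (ht : t.card < m)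
    (hct : ∀ A, (∃ j < m, A j ≠ 0) → c A ∈ t) (hc : ∀ A, (∃ j < m, A j ≠ 0) → c (-A) = c A)
    (hs : ∀ A, (∃ j < m, A j ≠ 0) → s (-A) = -s A) :
    ∃ A B : ℕ → SignType, (∃ j < m, A j ≠ 0) ∧ IsFace A B ∧ c A = c B ∧ s A ≠ s B := by
  let extendZero (A : Fin m → SignType) : ℕ → SignType := Function.extend Fin.val A 0
  have extendZero_val (A : Fin m → SignType) (j : Fin m) : extendZero A j = A j :=
    Fin.val_injective.extend_apply A 0 j
  have extendZero_neg (A : Fin m → SignType) : extendZero (-A) = -extendZero A := by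
    simpa only [neg_zero] using Function.extend_neg Fin.val A 0
  have extendZero_ne (A : Fin m → SignType) (hA : A ≠ 0) : ∃ j < m, extendZero A j ≠ 0 := by
    obtain ⟨j, hj⟩ := Function.ne_iff.1 hA
    exact ⟨j, j.isLt, by rwa [extendZero_val]⟩
  obtain ⟨A, B, hA, hAB, hcAB, hsAB⟩ := octahedral_tucker (fun A => c (extendZero A))
    (fun A => s (extendZero A)) ht (fun A hA => hct _ (extendZero_ne A hA))
    (fun A hA => by rw [extendZero_neg, hc _ (extendZero_ne A hA)])
    (fun A hA => by rw [extendZero_neg, hs _ (extendZero_ne A hA)])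
  refine ⟨extendZero A, extendZero B, extendZero_ne A hA, fun j => ?_, hcAB, hsAB⟩
  by_cases hj : ∃ a : Fin m, a = j
  · obtain ⟨a, rfl⟩ := hj
    simpa only [extendZero_val] using hAB a
  · exact Or.inl (Function.extend_apply' _ _ j hj)

section SignChanges

/-- The number of indices below `k` after which the subset `p` of `ℕ` switches between membership
and non-membership. -/
def numSwitches (p : ℕ → Bool) (k : ℕ) : ℕ := Nat.count (fun j => p j ≠ p (j + 1)) k

/-- For `s ≠ 0`, the maximal number of sign changes in a sequence obtained from
`A 0, …, A (k - 1), s` by replacing the zeros by signs. -/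
def maxSwitches (A : ℕ → SignType) : ℕ → SignType → ℕ
  | 0, _ => 0
  | k + 1, s => if A k = s then maxSwitches A k s else maxSwitches A k (-s) + 1

variable {A B : ℕ → SignType} {k : ℕ} {s : SignType}

lemma maxSwitches_succ (A : ℕ → SignType) (k : ℕ) (s : SignType) :
    maxSwitches A (k + 1) s =
      if A k = s then maxSwitches A k s else maxSwitches A k (-s) + 1 := rfl

lemma maxSwitches_le (A : ℕ → SignType) (k : ℕ) (s : SignType) : maxSwitches A k s ≤ k := by
  induction k generalizing s with
  | zero => exact le_rfl
  | succ k ih =>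
    rw [maxSwitches_succ]
    split_ifs
    exacts [(ih s).trans k.le_succ, Nat.succ_le_succ (ih _)]

lemma maxSwitches_neg (A : ℕ → SignType) (k : ℕ) (s : SignType) :
    maxSwitches (-A) k s = maxSwitches A k (-s) := by
  induction k generalizing s with
  | zero => rfl
  | succ k ih => simp only [maxSwitches_succ, ih, Pi.neg_apply, neg_eq_iff_eq_neg]

lemma maxSwitches_le_neg_add_one (A : ℕ → SignType) (k : ℕ) (s : SignType) :
    maxSwitches A k s ≤ maxSwitches A k (-s) + 1 := by
  induction k generalizing s with
  | zero => exact Nat.zero_le _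
  | succ k ih =>
    have h_neg := ih (-s)
    simp only [maxSwitches_succ, neg_neg] at h_neg ⊢
    split_ifs with h h' <;> try omega
    rw [← h', h]
    omega

lemma IsFace.maxSwitches_le (h : IsFace A B) (k : ℕ) (hs : s ≠ 0) :
    maxSwitches B k s ≤ maxSwitches A k s := by
  induction k generalizing s with
  | zero => exact le_rfl
  | succ k ih =>
    have ih_same := ih hs
    have ih_neg := ih (SignType.neg_eq_zero_iff.not.2 hs)
    have A_le := maxSwitches_le_neg_add_one A k s
    rw [maxSwitches_succ, maxSwitches_succ]
    rcases h k with hA | hAB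
    · rw [hA, if_neg hs.symm]
      split_ifs <;> omega
    · rw [hAB]
      split_ifs <;> omega

lemma maxSwitches_ne_neg (hA : ∃ j < k, A j ≠ 0) (hs : s ≠ 0) :
    maxSwitches A k s ≠ maxSwitches A k (-s) := by
  have eq_zero_of_ne_of_ne_neg : ∀ a s : SignType, s ≠ 0 → a ≠ s → a ≠ -s → a = 0 := by decide
  have neg_ne : -s ≠ s := SignType.neg_eq_self_iff.not.2 hs
  induction k with
  | zero => simp at hA
  | succ k ih =>
    rw [maxSwitches_succ, maxSwitches_succ, neg_neg]
    rcases eq_or_ne (A k) s with h | h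
    · simp [h, neg_ne.symm]
    rcases eq_or_ne (A k) (-s) with h' | h'
    · simp [h', neg_ne]
    have hAk : A k = 0 := eq_zero_of_ne_of_ne_neg _ _ hs h h'
    have hA' : ∃ j < k, A j ≠ 0 := by
      obtain ⟨j, hj, hne⟩ := hA
      exact ⟨j, (Nat.lt_succ_iff_lt_or_eq.1 hj).resolve_right (by rintro rfl; exact hne hAk), hne⟩
    simpa [h, h'] using (ih hA').symm

lemma count_eq_zero_le_maxSwitches (A : ℕ → SignType) (k : ℕ) (hs : s ≠ 0) :
    Nat.count (A · = 0) k ≤ maxSwitches A k s := by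
  induction k generalizing s with
  | zero => simp
  | succ k ih =>
    have ih_same := ih hs
    have ih_neg := ih (SignType.neg_eq_zero_iff.not.2 hs)
    rw [Nat.count_succ, maxSwitches_succ]
    rcases eq_or_ne (A k) s with h | h
    · simpa [h, hs] using ih_same
    · rw [if_neg h]
      split_ifs <;> omega

lemma numSwitches_add_le_maxSwitches (A : ℕ → SignType) (k : ℕ) (hs : s ≠ 0) :
    numSwitches (fun j => decide (A j = 1)) k + (if (A k = 1 ↔ s = 1) then 0 else 1) ≤
      maxSwitches A (k + 1) s := by
  have neg_eq_one : ∀ s : SignType, s ≠ 0 → (-s = 1 ↔ ¬ s = 1) := by decide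
  induction k generalizing s with
  | zero =>
    simp only [numSwitches, Nat.count_zero, maxSwitches]
    split_ifs <;> simp_all
  | succ k ih =>
    have ih_same := ih hs
    have ih_neg := ih (SignType.neg_eq_zero_iff.not.2 hs)
    simp only [neg_eq_one s hs] at ih_neg
    rw [maxSwitches_succ, numSwitches, Nat.count_succ, ← numSwitches]
    simp only [ne_eq, decide_eq_decide]
    rcases eq_or_ne (A (k + 1)) s with h | h
    · simp only [h, if_true]
      split_ifs at ih_same ⊢ <;> omega
    · simp only [h, if_false]
      split_ifs at ih_neg ⊢ <;> first | omega | tauto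

end SignChanges

section Halving

variable {m : ℕ} {W : ℝ} {v : ℕ → ℝ} {A B : ℕ → SignType}

/-- The total weight of the positive entries among the first `m` entries of a sign vector. -/
def positiveWeight (m : ℕ) (v : ℕ → ℝ) (A : ℕ → SignType) : ℝ :=
  ∑ j ∈ Finset.range m with A j = 1, v j

lemma positiveWeight_add_neg (m : ℕ) (v : ℕ → ℝ) (A : ℕ → SignType) :
    positiveWeight m v A + positiveWeight m v (-A) + ∑ j ∈ Finset.range m with A j = 0, v j =
      ∑ j ∈ Finset.range m, v j := by
  simp only [positiveWeight, Finset.sum_filter, ← Finset.sum_add_distrib, Pi.neg_apply]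
  refine Finset.sum_congr rfl fun j _ => ?_
  cases h : A j <;> simp

lemma IsFace.positiveWeight_le (h : IsFace A B) (hv : ∀ j < m, 0 ≤ v j) :
    positiveWeight m v A ≤ positiveWeight m v B :=
  Finset.sum_le_sum_of_subset_of_nonneg
    (fun j hj => by
      obtain ⟨hjm, hj⟩ := Finset.mem_filter.1 hj
      exact Finset.mem_filter.2 ⟨hjm, (h j).resolve_left (by simp [hj]) ▸ hj⟩)
    fun j hj _ => hv j (Finset.mem_range.1 (Finset.mem_filter.1 hj).1)

lemma IsFace.positiveWeight_add_neg_le (h : IsFace A B) (hv : ∀ j < m, 0 ≤ v j) :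
    positiveWeight m v A + positiveWeight m v (-B) ≤ ∑ j ∈ Finset.range m, v j := by
  have zeros_nonneg : 0 ≤ ∑ j ∈ Finset.range m with B j = 0, v j :=
    Finset.sum_nonneg fun j hj => hv j (Finset.mem_range.1 (Finset.mem_filter.1 hj).1)
  linarith [h.positiveWeight_le hv, positiveWeight_add_neg m v B]

/-- The positive entries of `A` carry more than half of the weight `v` of the first `m` indices. -/
def IsPositiveMajority (m : ℕ) (v : ℕ → ℝ) (A : ℕ → SignType) : Prop :=
  (∑ j ∈ Finset.range m, v j) / 2 < positiveWeight m v A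

lemma IsFace.not_isPositiveMajority_neg (h : IsFace A B) (hv : ∀ j < m, 0 ≤ v j)
    (hA : IsPositiveMajority m v A) : ¬ IsPositiveMajority m v (-B) := by
  intro hB
  rw [IsPositiveMajority] at hA hB
  linarith [h.positiveWeight_add_neg_le hv]

/-- One of the two signs in `A` carries more than half of the weight `v`. -/
def HasMajority (m : ℕ) (v : ℕ → ℝ) (A : ℕ → SignType) : Prop :=
  IsPositiveMajority m v A ∨ IsPositiveMajority m v (-A)

lemma hasMajority_neg : HasMajority m v (-A) ↔ HasMajority m v A := by
  rw [HasMajority, neg_neg, or_comm, HasMajority]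

lemma sum_filter_eq_zero_le {K : ℕ} {s : SignType} (hvW : ∀ j < m, v j ≤ W) (hW : 0 ≤ W)
    (hs : s ≠ 0) (hK : maxSwitches A m s ≤ K) :
    ∑ j ∈ Finset.range m with A j = 0, v j ≤ K * W := by
  have zeros_le : {j ∈ Finset.range m | A j = 0}.card ≤ K := by
    rw [← Nat.count_eq_card_filter_range]
    exact (count_eq_zero_le_maxSwitches A m hs).trans hK
  calc ∑ j ∈ Finset.range m with A j = 0, v j
      ≤ {j ∈ Finset.range m | A j = 0}.card • W := Finset.sum_le_card_nsmul _ _ _ fun j hj =>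
        hvW j (Finset.mem_range.1 (Finset.mem_filter.1 hj).1)
    _ ≤ K * W := by
        rw [nsmul_eq_mul]
        gcongr

lemma abs_positiveWeight_sub_half_le {K : ℕ} {s : SignType} (hvW : ∀ j < m, v j ≤ W) (hW : 0 ≤ W)
    (hs : s ≠ 0) (hK : maxSwitches A m s ≤ K) (hA : ¬ HasMajority m v A) :
    |positiveWeight m v A - (∑ j ∈ Finset.range m, v j) / 2| ≤ K * W := by
  simp only [HasMajority, IsPositiveMajority, not_or, not_lt] at hA
  have zeros_le := sum_filter_eq_zero_le hvW hW hs hK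
  have total := positiveWeight_add_neg m v A
  rw [abs_le]
  constructor <;> linarith

lemma numSwitches_le_of_maxSwitches_le {K : ℕ} {s : SignType} (hs : s ≠ 0)
    (hK : maxSwitches A m s ≤ K) : numSwitches (fun j => decide (A j = 1)) (m - 1) ≤ K := by
  cases m with
  | zero => simp [numSwitches]
  | succ k =>
    exact (Nat.le_add_right _ _).trans ((numSwitches_add_le_maxSwitches A k hs).trans hK)

variable {ι : Type*} {w : ι → ℕ → ℝ}

open Classical in
/-- An index of a weight for which one sign in `A` has the majority, if there is one. -/
noncomputable def majorityIndex (m : ℕ) (w : ι → ℕ → ℝ) (A : ℕ → SignType) : Option ι :=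
  if h : ∃ i, HasMajority m (w i) A then some h.choose else none

lemma majorityIndex_neg (A : ℕ → SignType) : majorityIndex m w (-A) = majorityIndex m w A := by
  unfold majorityIndex
  congr! 2 <;> simp only [hasMajority_neg]

lemma hasMajority_of_majorityIndex_eq_some {i : ι} (h : majorityIndex m w A = some i) :
    HasMajority m (w i) A := by
  rw [majorityIndex] at h
  split_ifs at h with hA
  exact Option.some.inj h ▸ hA.choose_spec

lemma not_hasMajority_of_majorityIndex_eq_none (h : majorityIndex m w A = none) (i : ι) :
    ¬ HasMajority m (w i) A := by
  rw [majorityIndex] at h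
  split_ifs at h with hA
  exact not_exists.1 hA i

/-- The colouring to which Tucker's lemma is applied: the index of a weight with a majority or, if
there is none, the smaller of the two maximal numbers of sign changes. -/
noncomputable def majorityColour (m : ℕ) (w : ι → ℕ → ℝ) (A : ℕ → SignType) : ι ⊕ ℕ :=
  match majorityIndex m w A with
  | some i => Sum.inl i
  | none => Sum.inr (min (maxSwitches A m 1) (maxSwitches A m (-1)))

open Classical in
/-- The signs accompanying `majorityColour`: which sign has the majority or, if no weight has one,
which last sign allows for fewer sign changes. -/
noncomputable def majoritySign (m : ℕ) (w : ι → ℕ → ℝ) (A : ℕ → SignType) : ℤˣ :=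
  match majorityIndex m w A with
  | some i => if IsPositiveMajority m (w i) A then 1 else -1
  | none => if maxSwitches A m 1 < maxSwitches A m (-1) then 1 else -1

lemma majorityColour_neg (A : ℕ → SignType) :
    majorityColour m w (-A) = majorityColour m w A := by
  simp only [majorityColour, majorityIndex_neg, maxSwitches_neg, neg_neg, min_comm]

lemma isPositiveMajority_neg_iff_not (hv : ∀ j < m, 0 ≤ v j) (h : HasMajority m v A) :
    IsPositiveMajority m v (-A) ↔ ¬ IsPositiveMajority m v A :=
  ⟨fun h_neg h_pos => IsFace.not_isPositiveMajority_neg (fun _ => Or.inr rfl) hv h_pos h_neg,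
    h.resolve_left⟩

lemma majoritySign_neg (hw : ∀ i, ∀ j < m, 0 ≤ w i j) (hA : ∃ j < m, A j ≠ 0) :
    majoritySign m w (-A) = -majoritySign m w A := by
  rw [majoritySign, majoritySign, majorityIndex_neg]
  cases h : majorityIndex m w A with
  | some i =>
    have neg_iff :=
      isPositiveMajority_neg_iff_not (hw i) (hasMajority_of_majorityIndex_eq_some h)
    by_cases h_pos : IsPositiveMajority m (w i) A <;> simp [neg_iff, h_pos]
  | none =>
    have h_ne : maxSwitches A m 1 ≠ maxSwitches A m (-1) := maxSwitches_ne_neg hA one_ne_zero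
    simp only [maxSwitches_neg, neg_neg]
    split_ifs <;> first | omega | simp

lemma IsFace.isPositiveMajority_iff (h : IsFace A B) (hv : ∀ j < m, 0 ≤ v j)
    (hA : HasMajority m v A) (hB : HasMajority m v B) :
    IsPositiveMajority m v A ↔ IsPositiveMajority m v B := by
  constructor
  · exact fun h_pos => hB.resolve_right (h.not_isPositiveMajority_neg hv h_pos)
  · intro h_pos
    refine hA.resolve_right fun h_neg => h.neg.not_isPositiveMajority_neg hv h_neg ?_
    rwa [neg_neg]

lemma IsFace.maxSwitches_lt_iff (h : IsFace A B) (hA : ∃ j < m, A j ≠ 0)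
    (h_min : min (maxSwitches A m 1) (maxSwitches A m (-1)) =
      min (maxSwitches B m 1) (maxSwitches B m (-1))) :
    maxSwitches A m 1 < maxSwitches A m (-1) ↔ maxSwitches B m 1 < maxSwitches B m (-1) := by
  have hB : ∃ j < m, B j ≠ 0 := hA.imp fun j hj => ⟨hj.1, h.ne_zero hj.2⟩
  have A_ne : maxSwitches A m 1 ≠ maxSwitches A m (-1) := maxSwitches_ne_neg hA one_ne_zero
  have B_ne : maxSwitches B m 1 ≠ maxSwitches B m (-1) := maxSwitches_ne_neg hB one_ne_zero
  have le_pos : maxSwitches B m 1 ≤ maxSwitches A m 1 := h.maxSwitches_le m one_ne_zero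
  have le_neg : maxSwitches B m (-1) ≤ maxSwitches A m (-1) := h.maxSwitches_le m (by decide)
  omega

lemma IsFace.majoritySign_eq (h : IsFace A B) (hw : ∀ i, ∀ j < m, 0 ≤ w i j)
    (hA : ∃ j < m, A j ≠ 0) (h_colour : majorityColour m w A = majorityColour m w B) :
    majoritySign m w A = majoritySign m w B := by
  classical
  rw [majorityColour, majorityColour] at h_colour
  rw [majoritySign, majoritySign]
  cases hiA : majorityIndex m w A <;> cases hiB : majorityIndex m w B <;>
    simp only [hiA, hiB, reduceCtorEq, Sum.inl.injEq, Sum.inr.injEq] at h_colour ⊢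
  · exact if_congr (h.maxSwitches_lt_iff hA h_colour) rfl rfl
  · subst h_colour
    exact if_congr (h.isPositiveMajority_iff (hw _) (hasMajority_of_majorityIndex_eq_some hiA)
      (hasMajority_of_majorityIndex_eq_some hiB)) rfl rfl

lemma majorityColour_mem [Fintype ι] {K : ℕ} (hA : ∃ j < m, A j ≠ 0)
    (hK : ∀ s ≠ 0, maxSwitches A m s ≤ K → ∃ i, HasMajority m (w i) A) :
    majorityColour m w A ∈ Finset.univ.disjSum (Finset.Ioo K m) := by
  rw [majorityColour]
  cases h : majorityIndex m w A with
  | some i => exact Finset.inl_mem_disjSum.2 (Finset.mem_univ i)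
  | none =>
    have lt_maxSwitches : ∀ s ≠ 0, K < maxSwitches A m s := fun s hs =>
      not_le.1 fun hle => not_exists.2 (not_hasMajority_of_majorityIndex_eq_none h) (hK s hs hle)
    have h_ne : maxSwitches A m 1 ≠ maxSwitches A m (-1) := maxSwitches_ne_neg hA one_ne_zero
    refine Finset.inr_mem_disjSum.2 (Finset.mem_Ioo.2 ⟨lt_min (lt_maxSwitches _ one_ne_zero)
      (lt_maxSwitches _ (by decide)), ?_⟩)
    have le_pos := maxSwitches_le A m 1
    have le_neg := maxSwitches_le A m (-1)
    omega

lemma exists_maxSwitches_le_forall_not_hasMajority [Fintype ι] (hw : ∀ i, ∀ j < m, 0 ≤ w i j) :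
    ∃ A, ∃ s ≠ 0, maxSwitches A m s ≤ Fintype.card ι ∧ ∀ i, ¬ HasMajority m (w i) A := by
  rcases le_or_gt m (Fintype.card ι) with hm | hm
  · refine ⟨0, 1, one_ne_zero, (maxSwitches_le 0 m 1).trans hm, fun i => ?_⟩
    have sum_nonneg := Finset.sum_nonneg fun j hj => hw i j (Finset.mem_range.1 hj)
    simp only [HasMajority, IsPositiveMajority, positiveWeight, neg_zero, or_self, not_lt,
      Pi.zero_apply, zero_ne_one, Finset.filter_false, Finset.sum_empty]
    exact div_nonneg sum_nonneg zero_le_two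
  by_contra! h
  have card_colours : (Finset.univ.disjSum (Finset.Ioo (Fintype.card ι) m)
      : Finset (ι ⊕ ℕ)).card < m := by
    rw [Finset.card_disjSum, Finset.card_univ, Nat.card_Ioo]
    omega
  obtain ⟨A, B, hA, hAB, h_colour, h_sign⟩ := octahedral_tucker_nat (majorityColour m w)
    (majoritySign m w) card_colours (fun A hA => majorityColour_mem hA (h A))
    (fun A _ => majorityColour_neg A) fun A => majoritySign_neg hw
  exact h_sign (hAB.majoritySign_eq hw hA h_colour)

/-- A discrete Hobby–Rice theorem. -/
theorem exists_halving [Fintype ι] (hw : ∀ i, ∀ j < m, 0 ≤ w i j) (hwW : ∀ i, ∀ j < m, w i j ≤ W)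
    (hW : 0 ≤ W) :
    ∃ p : ℕ → Bool, numSwitches p (m - 1) ≤ Fintype.card ι ∧
      ∀ i, |∑ j ∈ Finset.range m with p j, w i j - (∑ j ∈ Finset.range m, w i j) / 2| ≤
        Fintype.card ι * W := by
  obtain ⟨A, s, hs, h_switches, hA⟩ := exists_maxSwitches_le_forall_not_hasMajority hw
  refine ⟨fun j => decide (A j = 1), numSwitches_le_of_maxSwitches_le hs h_switches, fun i => ?_⟩
  simpa only [positiveWeight, decide_eq_true_eq] using
    abs_positiveWeight_sub_half_le (hwW i) hW hs h_switches (hA i)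

end Halving

section RoughGeodesics

variable {G : Type*} [AddCommGroup G] {ℓ : AddGroupSeminorm G} {C : ℝ}

/-- The increments of the path `g` of `m` steps satisfy the upper bound in the definition of a
`C`-rough isometric embedding. -/
def IsRoughPath (ℓ : AddGroupSeminorm G) (C : ℝ) (m : ℕ) (g : ℕ → G) : Prop :=
  ∀ a b, a ≤ b → b ≤ m → ℓ (g b - g a) ≤ b - a + C

/-- Rough geodesics for a length function, sampled at integer times: every element is reached
from `0` by a rough path with about as many steps as its length. -/
def HasRoughGeodesics (ℓ : AddGroupSeminorm G) (C : ℝ) : Prop :=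
  ∀ z, ∃ (m : ℕ) (g : ℕ → G), m ≤ ℓ z + 1 ∧ g 0 = 0 ∧ g m = z ∧ IsRoughPath ℓ C m g

/-- The sum of the increments of `g` over the set `p` of steps, among the first `m` ones. -/
def selectedSum (g : ℕ → G) (p : ℕ → Bool) (m : ℕ) : G :=
  ∑ j ∈ Finset.range m with p j, (g (j + 1) - g j)

lemma selectedSum_succ (g : ℕ → G) (p : ℕ → Bool) (m : ℕ) :
    selectedSum g p (m + 1) = selectedSum g p m + if p m then g (m + 1) - g m else 0 := by
  simp only [selectedSum, Finset.sum_filter, Finset.sum_range_succ]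

lemma IsRoughPath.nonneg {m : ℕ} {g : ℕ → G} (h : IsRoughPath ℓ C m g) : 0 ≤ C := by
  simpa using h 0 0 le_rfl (Nat.zero_le m)

-- While `p` does not switch, its current interval may be prolonged up to any time `r`.
lemma IsRoughPath.map_selectedSum_add_le {m : ℕ} {g : ℕ → G} (h : IsRoughPath ℓ C m g)
    (p : ℕ → Bool) {k r : ℕ} (hkr : k ≤ r) (hrm : r ≤ m) :
    ℓ (selectedSum g p k + if p k then g r - g k else 0) ≤
      Nat.count (p ·) k + (if p k then (r : ℝ) - k else 0) + C * (numSwitches p k + 1) := by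
  induction k generalizing r with
  | zero =>
    cases h0 : p 0
    · simpa [selectedSum, numSwitches, h0] using h.nonneg
    · simpa [selectedSum, numSwitches, h0] using h 0 r hkr hrm
  | succ k ih =>
    have ih_r := ih (k.le_succ.trans hkr) hrm
    have ih_succ := ih (k.le_add_right 1) (hkr.trans hrm)
    have h_interval := h (k + 1) r hkr hrm
    have hC := h.nonneg
    rw [selectedSum_succ, Nat.count_succ, numSwitches, Nat.count_succ, ← numSwitches]
    rcases hk : p k with _ | _ <;> rcases p (k + 1) with _ | _ <;>
      simp only [hk, if_true, if_false, Bool.false_eq_true, add_zero, ne_eq,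
        not_true_eq_false, not_false_eq_true, reduceCtorEq, Nat.cast_add, Nat.cast_one]
        at ih_r ih_succ h_interval ⊢
    · exact ih_r
    · linarith [map_add_le_add ℓ (selectedSum g p k) (g r - g (k + 1))]
    · linarith
    · rw [add_assoc, sub_add_sub_cancel']
      linarith

lemma IsRoughPath.map_selectedSum_le {m : ℕ} {g : ℕ → G} (h : IsRoughPath ℓ C m g)
    (p : ℕ → Bool) :
    ℓ (selectedSum g p m) ≤ Nat.count (p ·) m + C * (numSwitches p (m - 1) + 1) := by
  cases m with
  | zero => simpa [selectedSum, numSwitches] using h.nonneg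
  | succ k =>
    have h_last := h.map_selectedSum_add_le p k.le_succ le_rfl
    rw [← selectedSum_succ, Nat.cast_succ, add_sub_cancel_left] at h_last
    rwa [Nat.count_succ, Nat.cast_add, Nat.cast_ite, Nat.cast_one, Nat.cast_zero,
      Nat.add_sub_cancel]

end RoughGeodesics

section Doubling

variable {ι : Type*}

/-- The inclusion of the integer lattice in `ι → ℝ`. -/
def latticeCast : (ι → ℤ) →+ (ι → ℝ) := (Int.castAddHom ℝ).compLeft ι

lemma latticeCast_apply (z : ι → ℤ) (i : ι) : latticeCast z i = z i := rfl

lemma exists_vector_halving [Fintype ι] (v : ℕ → ι → ℝ) {m : ℕ} {R : ℝ} (hR : 0 ≤ R)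
    (hv : ∀ j < m, ‖v j‖ ≤ R) :
    ∃ p : ℕ → Bool, numSwitches p (m - 1) ≤ Fintype.card ι + 1 ∧
      |(Nat.count (p ·) m : ℝ) - m / 2| ≤ (Fintype.card ι + 1) * (2 * R + 1) ∧
      ‖∑ j ∈ Finset.range m with p j, v j - (2⁻¹ : ℝ) • ∑ j ∈ Finset.range m, v j‖ ≤
        (1 + R) * ((Fintype.card ι + 1) * (2 * R + 1)) := by
  -- One weight counts the steps; the others are the coordinates, translated to be nonnegative.
  let w : Option ι → ℕ → ℝ := fun o j => o.elim 1 fun i => R + v j i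
  have abs_le : ∀ j < m, ∀ i, |v j i| ≤ R := fun j hj i =>
    (norm_le_pi_norm (v j) i).trans (hv j hj)
  have w_nonneg : ∀ o, ∀ j < m, 0 ≤ w o j := by
    rintro (_ | i) j hj
    · exact zero_le_one
    · exact neg_le_iff_add_nonneg'.1 (neg_le_of_abs_le (abs_le j hj i))
  have w_le : ∀ o, ∀ j < m, w o j ≤ 2 * R + 1 := by
    rintro (_ | i) j hj <;> simp only [w, Option.elim]
    · linarith
    · linarith [le_of_abs_le (abs_le j hj i)]
  obtain ⟨p, h_switches, h_half⟩ := exists_halving w_nonneg w_le (by linarith)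
  rw [Fintype.card_option] at h_switches h_half
  set E : ℝ := (Fintype.card ι + 1) * (2 * R + 1)
  have h_count : |(Nat.count (p ·) m : ℝ) - m / 2| ≤ E := by
    simpa [w, Nat.count_eq_card_filter_range, E] using h_half none
  have hE : 0 ≤ (1 + R) * E := mul_nonneg (by linarith) ((abs_nonneg _).trans h_count)
  refine ⟨p, h_switches, h_count, (pi_norm_le_iff_of_nonneg hE).2 fun i => ?_⟩
  have h_coord := h_half (some i)
  simp only [w, Option.elim, Finset.sum_add_distrib, Finset.sum_const, Finset.card_range,
    ← Nat.count_eq_card_filter_range, nsmul_eq_mul, Nat.cast_add, Nat.cast_one] at h_coord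
  simp only [Pi.sub_apply, Finset.sum_apply, Pi.smul_apply, smul_eq_mul, Real.norm_eq_abs]
  set a := ∑ j ∈ Finset.range m with p j, v j i
  set b := ∑ j ∈ Finset.range m, v j i
  calc |a - 2⁻¹ * b|
      = |(Nat.count (p ·) m * R + a - (m * R + b) / 2) - R * (Nat.count (p ·) m - m / 2)| := by
        ring_nf
    _ ≤ E + R * E := by
        refine (abs_sub _ _).trans (add_le_add h_coord ?_)
        rw [abs_mul, abs_of_nonneg hR]
        gcongr
    _ = (1 + R) * E := by ring

lemma norm_latticeCast [Fintype ι] (z : ι → ℤ) : ‖latticeCast z‖ = ‖z‖ := rfl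

lemma exists_forall_le_mul_norm [Fintype ι] (ℓ : AddGroupSeminorm (ι → ℤ)) :
    ∃ c, 0 ≤ c ∧ ∀ z, ℓ z ≤ c * ‖z‖ := by
  classical
  refine ⟨∑ i, ℓ (Pi.single i 1), Finset.sum_nonneg fun i _ => apply_nonneg ℓ _, fun z => ?_⟩
  have map_zsmul_le : ∀ (k : ℤ) (y : ι → ℤ), ℓ (k • y) ≤ |(k : ℝ)| * ℓ y := fun k y =>
    let _ := ℓ.toSeminormedAddCommGroup
    norm_zsmul_le k y
  calc ℓ z = ℓ (∑ i, z i • Pi.single i 1) := by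
        rw [← pi_eq_sum_univ']
    _ ≤ ∑ i, ℓ (z i • Pi.single i 1) :=
        Finset.le_sum_of_subadditive ℓ (map_zero ℓ).le (map_add_le_add ℓ) _ _
    _ ≤ ∑ i, |(z i : ℝ)| * ℓ (Pi.single i 1) := Finset.sum_le_sum fun i _ => map_zsmul_le _ _
    _ ≤ ∑ i, ‖z‖ * ℓ (Pi.single i 1) := by
        gcongr with i
        exact norm_le_pi_norm z i
    _ = (∑ i, ℓ (Pi.single i 1)) * ‖z‖ := by rw [← Finset.mul_sum, mul_comm]

lemma exists_two_mul_le_map_two_nsmul_add [Finite ι] {ℓ : AddGroupSeminorm (ι → ℤ)} {C : ℝ}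
    (hgeo : HasRoughGeodesics ℓ C) (hfin : ∀ R, {z | ℓ z ≤ R}.Finite) :
    ∃ D, ∀ z, 2 * ℓ z ≤ ℓ (2 • z) + D := by
  cases nonempty_fintype ι
  obtain ⟨R, hR_pos, hR⟩ := (hfin (1 + C)).isBounded.exists_pos_norm_le
  obtain ⟨c, hc, h_le_norm⟩ := exists_forall_le_mul_norm ℓ
  set E : ℝ := (Fintype.card ι + 1) * (2 * R + 1)
  refine ⟨1 + 2 * (E + C * (Fintype.card ι + 2) + c * ((1 + R) * E)), fun z => ?_⟩
  obtain ⟨m, g, hm, hg_zero, hg_last, hg⟩ := hgeo (2 • z)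
  have h_step : ∀ j < m, ‖latticeCast (g (j + 1) - g j)‖ ≤ R := fun j hj => by
    rw [norm_latticeCast]
    refine hR _ ?_
    simpa using hg j (j + 1) j.le_succ hj
  obtain ⟨p, h_switches, h_count, h_half⟩ := exists_vector_halving _ hR_pos.le h_step
  simp only [← map_sum] at h_half
  rw [Finset.sum_range_sub, hg_zero, hg_last, sub_zero, map_nsmul, ← Nat.cast_smul_eq_nsmul ℝ,
    Nat.cast_ofNat, inv_smul_smul₀ two_ne_zero, ← map_sub, norm_latticeCast] at h_half
  have h_selected : ℓ (selectedSum g p m) ≤ m / 2 + E + C * (Fintype.card ι + 2) := by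
    have h_switches' : (numSwitches p (m - 1) : ℝ) ≤ Fintype.card ι + 1 := mod_cast h_switches
    have := mul_le_mul_of_nonneg_left h_switches' hg.nonneg
    linarith [hg.map_selectedSum_le p, le_of_abs_le h_count]
  have h_near : ℓ z ≤ ℓ (selectedSum g p m) + c * ((1 + R) * E) :=
    calc ℓ z ≤ ℓ (selectedSum g p m) + ℓ (selectedSum g p m - z) := le_map_add_map_sub' ℓ _ _
      _ ≤ ℓ (selectedSum g p m) + c * ((1 + R) * E) := by
          gcongr
          exact (h_le_norm _).trans (mul_le_mul_of_nonneg_left h_half hc)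
  linarith

end Doubling

section Homogenization

open Filter Topology

variable {E : Type*} [SeminormedAddCommGroup E]

/-- A function on a normed space which is, up to a constant, a seminorm at large scale, except
that no homogeneity is required. -/
structure IsCoarseSeminorm_s7 (L : E → ℝ) (c : ℝ) : Prop where
  nonneg (x : E) : 0 ≤ L x
  add_le (x y : E) : L (x + y) ≤ L x + L y + c
  neg_le (x : E) : L (-x) ≤ L x + c
  le_norm (x : E) : L x ≤ c * (‖x‖ + 1)

/-- The rate of growth of `L` along the ray through `x`: the limit of `L (k • x) / k`. Unless
this converges, as it does for coarse seminorms, it is a junk value. -/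
noncomputable def homogenization (L : E → ℝ) (x : E) : ℝ :=
  limUnder atTop fun k : ℕ => L (k • x) / k

namespace IsCoarseSeminorm_s7

variable {L : E → ℝ} {c : ℝ} (h : IsCoarseSeminorm_s7 L c)

include h

lemma nonneg_const : 0 ≤ c := by
  simpa using (h.nonneg 0).trans (h.le_norm 0)

lemma tendsto_homogenization_s7 (x : E) :
    Tendsto (fun k : ℕ => L (k • x) / k) atTop (𝓝 (homogenization L x)) := by
  have h_subadditive : Subadditive fun k : ℕ => L (k • x) + c := fun k l => by
    simp only [add_smul]
    linarith [h.add_le (k • x) (l • x)]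
  have h_bddBelow : BddBelow (Set.range fun k : ℕ => (L (k • x) + c) / k) := by
    refine ⟨0, ?_⟩
    rintro _ ⟨k, rfl⟩
    have := h.nonneg (k • x)
    have := h.nonneg_const
    positivity
  refine tendsto_nhds_limUnder ⟨h_subadditive.lim, ?_⟩
  simpa only [← sub_div, add_sub_cancel_right, sub_zero] using
    (h_subadditive.tendsto_lim h_bddBelow).sub (tendsto_const_div_atTop_nhds_zero_nat c)

lemma tendsto_homogenization_comp {φ : ℕ → ℕ} (hφ : Tendsto φ atTop atTop) (x : E) :
    Tendsto (fun k => L (φ k • x) / φ k) atTop (𝓝 (homogenization L x)) :=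
  (h.tendsto_homogenization_s7 x).comp hφ

lemma homogenization_zero : homogenization L 0 = 0 := by
  refine tendsto_nhds_unique (h.tendsto_homogenization_s7 0) ?_
  simpa only [smul_zero] using tendsto_const_div_atTop_nhds_zero_nat (L 0)

lemma homogenization_add_le (x y : E) :
    homogenization L (x + y) ≤ homogenization L x + homogenization L y := by
  have h_sum := ((h.tendsto_homogenization_s7 x).add (h.tendsto_homogenization_s7 y)).add
    (tendsto_const_div_atTop_nhds_zero_nat c)
  rw [add_zero] at h_sum
  refine le_of_tendsto_of_tendsto' (h.tendsto_homogenization_s7 (x + y)) h_sum fun k => ?_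
  rw [← add_div, ← add_div, smul_add]
  gcongr
  exact h.add_le _ _

lemma homogenization_neg_le (x : E) : homogenization L (-x) ≤ homogenization L x := by
  have h_sum := (h.tendsto_homogenization_s7 x).add (tendsto_const_div_atTop_nhds_zero_nat c)
  rw [add_zero] at h_sum
  refine le_of_tendsto_of_tendsto' (h.tendsto_homogenization_s7 (-x)) h_sum fun k => ?_
  rw [← add_div, smul_neg]
  gcongr
  exact h.neg_le _

lemma homogenization_le_mul_norm (x : E) : homogenization L x ≤ c * ‖x‖ := by
  have h_bound := (tendsto_const_div_atTop_nhds_zero_nat c).const_add (c * ‖x‖)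
  rw [add_zero] at h_bound
  refine le_of_tendsto_of_tendsto (h.tendsto_homogenization_s7 x) h_bound ?_
  filter_upwards [eventually_gt_atTop 0] with k hk
  rw [div_le_iff₀ (mod_cast hk), add_mul, div_mul_cancel₀ _ (mod_cast hk.ne')]
  calc L (k • x) ≤ c * (‖k • x‖ + 1) := h.le_norm _
    _ ≤ c * (k * ‖x‖ + 1) := by
        have := h.nonneg_const
        gcongr
        exact norm_nsmul_le
    _ = c * ‖x‖ * k + c := by ring

lemma homogenization_nsmul (k : ℕ) (x : E) :
    homogenization L (k • x) = k * homogenization L x := by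
  rcases k.eq_zero_or_pos with rfl | hk
  · simp [h.homogenization_zero]
  have h_multiples := (h.tendsto_homogenization_comp
    (tendsto_id.atTop_mul_const' hk) x).const_mul (k : ℝ)
  refine tendsto_nhds_unique (h.tendsto_homogenization_s7 (k • x)) (h_multiples.congr fun l => ?_)
  have hk' : (k : ℝ) ≠ 0 := mod_cast hk.ne'
  rw [id, mul_smul, Nat.cast_mul]
  field_simp

end IsCoarseSeminorm_s7

lemma nonpos_of_forall_natCast_mul_le {r B : ℝ} (h : ∀ k : ℕ, k * r ≤ B) : r ≤ 0 := by
  by_contra! hr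
  obtain ⟨k, hk⟩ := exists_nat_gt (B / r)
  exact (h k).not_gt ((div_lt_iff₀ hr).1 hk)

variable [NormedSpace ℝ E]

lemma map_nonneg_smul_of_map_nsmul {N : AddGroupSeminorm E} {c : ℝ} (hc : ∀ x, N x ≤ c * ‖x‖)
    (hN : ∀ (k : ℕ) (x : E), N (k • x) = k * N x) {a : ℝ} (ha : 0 ≤ a) (x : E) :
    N (a • x) = a * N x := by
  refine sub_eq_zero.1 (abs_nonpos_iff.1 (nonpos_of_forall_natCast_mul_le
    (B := |c| * ‖x‖ + N x) fun k => ?_))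
  have h_floor : |k * a - ⌊k * a⌋₊| ≤ 1 := Nat.abs_sub_floor_le (by positivity)
  have h_round : |N (k • a • x) - N (⌊k * a⌋₊ • x)| ≤ |c| * ‖x‖ :=
    calc |N (k • a • x) - N (⌊k * a⌋₊ • x)| ≤ N (k • a • x - ⌊k * a⌋₊ • x) :=
          abs_sub_map_le_sub N _ _
      _ = N ((k * a - ⌊k * a⌋₊) • x) := by
          rw [sub_smul, mul_smul, Nat.cast_smul_eq_nsmul, Nat.cast_smul_eq_nsmul]
      _ ≤ |c| * ‖(k * a - ⌊k * a⌋₊) • x‖ := (hc _).trans (by gcongr; exact le_abs_self c)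
      _ ≤ |c| * ‖x‖ := by
          rw [norm_smul]
          gcongr
          exact mul_le_of_le_one_left (norm_nonneg x) h_floor
  have h_scale : |⌊k * a⌋₊ * N x - k * a * N x| ≤ N x := by
    rw [← sub_mul, abs_mul, abs_sub_comm, abs_of_nonneg (apply_nonneg N x)]
    exact mul_le_of_le_one_left (apply_nonneg N x) h_floor
  rw [hN, hN] at h_round
  calc k * |N (a • x) - a * N x| = |k * N (a • x) - k * a * N x| := by
        rw [mul_assoc, ← mul_sub, abs_mul, Nat.abs_cast]
    _ ≤ |c| * ‖x‖ + N x := (abs_sub_le _ _ _).trans (add_le_add h_round h_scale)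

lemma map_real_smul_of_map_nsmul {N : AddGroupSeminorm E} {c : ℝ} (hc : ∀ x, N x ≤ c * ‖x‖)
    (hN : ∀ (k : ℕ) (x : E), N (k • x) = k * N x) (a : ℝ) (x : E) :
    N (a • x) = |a| * N x := by
  rw [← map_nonneg_smul_of_map_nsmul hc hN (abs_nonneg a)]
  rcases abs_choice a with h | h <;> rw [h]
  rw [neg_smul, map_neg_eq_map]

/-- The homogenization of a coarse seminorm, as a bundled seminorm. -/
noncomputable def IsCoarseSeminorm_s7.toSeminorm {L : E → ℝ} {c : ℝ} (h : IsCoarseSeminorm_s7 L c) :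
    Seminorm ℝ E :=
  let N : AddGroupSeminorm E :=
    { toFun := homogenization L
      map_zero' := h.homogenization_zero
      add_le' := h.homogenization_add_le
      neg' x := (h.homogenization_neg_le x).antisymm <| by
        simpa only [neg_neg] using h.homogenization_neg_le (-x) }
  Seminorm.of N (map_add_le_add N)
    (map_real_smul_of_map_nsmul (N := N) h.homogenization_le_mul_norm h.homogenization_nsmul)

lemma IsCoarseSeminorm_s7.coe_toSeminorm {L : E → ℝ} {c : ℝ} (h : IsCoarseSeminorm_s7 L c) :
    ⇑h.toSeminorm = homogenization L := rfl

end Homogenization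

section SeminormsOnLattices

variable {E : Type*} [NormedAddCommGroup E] [NormedSpace ℝ E] [FiniteDimensional ℝ E]

lemma exists_forall_seminorm_le_mul_norm (p : Seminorm ℝ E) :
    ∃ c, 0 < c ∧ ∀ x, p x ≤ c * ‖x‖ :=
  p.bound_of_continuous_normedSpace p.convexOn.locallyLipschitz.continuous

variable {ι : Type*}

/-- The coordinatewise integer part of a vector. -/
noncomputable def latticeFloor (x : ι → ℝ) : ι → ℤ := fun i => ⌊x i⌋

lemma latticeFloor_latticeCast (z : ι → ℤ) : latticeFloor (latticeCast z) = z :=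
  funext fun i => Int.floor_intCast (z i)

lemma norm_sub_latticeFloor_le [Fintype ι] (x : ι → ℝ) :
    ‖x - latticeCast (latticeFloor x)‖ ≤ 1 := by
  refine (pi_norm_le_iff_of_nonneg zero_le_one).2 fun i => ?_
  rw [Pi.sub_apply, latticeCast_apply, latticeFloor, Int.self_sub_floor, Real.norm_eq_abs,
    Int.abs_fract]
  exact (Int.fract_lt_one _).le

lemma norm_latticeFloor_le [Fintype ι] (x : ι → ℝ) : ‖latticeFloor x‖ ≤ ‖x‖ + 1 :=
  calc ‖latticeFloor x‖ = ‖x - (x - latticeCast (latticeFloor x))‖ := by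
        rw [sub_sub_cancel, norm_latticeCast]
    _ ≤ ‖x‖ + 1 := (norm_sub_le _ _).trans (by gcongr; exact norm_sub_latticeFloor_le x)

lemma exists_forall_seminorm_sub_latticeFloor_le [Finite ι] (p : Seminorm ℝ (ι → ℝ)) :
    ∃ c, ∀ x, p (x - latticeCast (latticeFloor x)) ≤ c := by
  cases nonempty_fintype ι
  obtain ⟨c, hc, h_le_norm⟩ := exists_forall_seminorm_le_mul_norm p
  exact ⟨c, fun x => (h_le_norm _).trans
    (mul_le_of_le_one_right hc.le (norm_sub_latticeFloor_le x))⟩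

lemma seminorm_le_of_forall_latticeCast_le_add [Finite ι] {p q : Seminorm ℝ (ι → ℝ)} {C : ℝ}
    (h : ∀ z, p (latticeCast z) ≤ q (latticeCast z) + C) : p ≤ q := fun x => by
  obtain ⟨a, ha⟩ := exists_forall_seminorm_sub_latticeFloor_le p
  obtain ⟨b, hb⟩ := exists_forall_seminorm_sub_latticeFloor_le q
  refine sub_nonpos.1 (nonpos_of_forall_natCast_mul_le (B := a + b + C) fun k => ?_)
  set y := (k : ℝ) • x
  set z := latticeCast (latticeFloor y)
  have hp : p y - p z ≤ p (y - z) := (le_abs_self _).trans (abs_sub_map_le_sub p y z)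
  have hq : q z ≤ q y + q (y - z) := le_map_add_map_sub' q z y
  calc k * (p x - q x) = p y - q y := by
        rw [map_smul_eq_mul, map_smul_eq_mul, Real.norm_natCast, mul_sub]
    _ ≤ a + b + C := by linarith [h (latticeFloor y), ha y, hb y]

lemma seminorm_eq_of_forall_abs_sub_latticeCast_le [Finite ι] {p q : Seminorm ℝ (ι → ℝ)}
    {C : ℝ} (h : ∀ z, |p (latticeCast z) - q (latticeCast z)| ≤ C) : p = q :=
  le_antisymm
    (seminorm_le_of_forall_latticeCast_le_add fun z => sub_le_iff_le_add'.1 (le_of_abs_le (h z)))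
    (seminorm_le_of_forall_latticeCast_le_add fun z =>
      sub_le_iff_le_add'.1 (le_of_abs_le (abs_sub_comm (p _) (q _) ▸ h z)))

lemma seminorm_apply_linearMap_eq [Finite ι] {ℓ : (ι → ℤ) → ℝ} {N : Seminorm ℝ (ι → ℝ)} {D : ℝ}
    (hN : ∀ z, |ℓ z - N (latticeCast z)| ≤ D) {f : (ι → ℤ) → (ι → ℤ)} {C : ℝ}
    (hf : ∀ z, |ℓ (f z) - ℓ z| ≤ C) {F : (ι → ℝ) →ₗ[ℝ] (ι → ℝ)}
    (hF : ∀ z, F (latticeCast z) = latticeCast (f z)) (x : ι → ℝ) : N (F x) = N x := by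
  suffices h : N.comp F = N from DFunLike.congr_fun h x
  refine seminorm_eq_of_forall_abs_sub_latticeCast_le (C := D + C + D) fun z => ?_
  rw [Seminorm.comp_apply, hF]
  calc |N (latticeCast (f z)) - N (latticeCast z)|
      ≤ |N (latticeCast (f z)) - ℓ (f z)| + |ℓ (f z) - ℓ z| + |ℓ z - N (latticeCast z)| :=
        (abs_sub_le _ (ℓ z) _).trans (by gcongr; exact abs_sub_le _ _ _)
    _ ≤ D + C + D := by
        rw [abs_sub_comm (N _)]
        gcongr
        exacts [hN (f z), hf z, hN z]

lemma eq_zero_of_seminorm_eq_zero [Finite ι] {p : Seminorm ℝ (ι → ℝ)}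
    (hfin : ∀ R, {z | p (latticeCast z) ≤ R}.Finite) {x : ι → ℝ} (hx : p x = 0) : x = 0 := by
  cases nonempty_fintype ι
  obtain ⟨c, hc⟩ := exists_forall_seminorm_sub_latticeFloor_le p
  obtain ⟨B, hB⟩ := (hfin c).isBounded.exists_norm_le
  refine norm_le_zero_iff.1 (nonpos_of_forall_natCast_mul_le (B := B + 1) fun k => ?_)
  set y := (k : ℝ) • x
  have hy : p y = 0 := by rw [map_smul_eq_mul, hx, mul_zero]
  have h_floor : p (latticeCast (latticeFloor y)) ≤ c := by
    linarith [le_map_add_map_sub' p (latticeCast (latticeFloor y)) y, hc y]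
  calc k * ‖x‖ = ‖y‖ := by rw [norm_smul, Real.norm_natCast]
    _ ≤ ‖latticeCast (latticeFloor y)‖ + ‖y - latticeCast (latticeFloor y)‖ :=
        norm_le_norm_add_norm_sub' _ _
    _ ≤ B + 1 := add_le_add (hB _ h_floor) (norm_sub_latticeFloor_le y)

end SeminormsOnLattices

section StableSeminorm

open Filter Topology

variable {ι : Type*}

lemma norm_latticeFloor_add_sub_le [Fintype ι] (x y : ι → ℝ) :
    ‖latticeFloor (x + y) - (latticeFloor x + latticeFloor y)‖ ≤ 1 := by
  refine (pi_norm_le_iff_of_nonneg zero_le_one).2 fun i => ?_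
  rw [Int.norm_eq_abs]
  have h_lower := Int.le_floor_add (x i) (y i)
  have h_upper := Int.le_floor_add_floor (x i) (y i)
  simp only [latticeFloor, Pi.sub_apply, Pi.add_apply]
  exact_mod_cast abs_le.2 ⟨by linarith, by linarith⟩

lemma norm_latticeFloor_neg_add_le [Fintype ι] (x : ι → ℝ) :
    ‖latticeFloor (-x) + latticeFloor x‖ ≤ 1 := by
  refine (pi_norm_le_iff_of_nonneg zero_le_one).2 fun i => ?_
  rw [Int.norm_eq_abs]
  have h_lower := Int.ceil_le_floor_add_one (x i)
  have h_upper := Int.floor_le_ceil (x i)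
  simp only [latticeFloor, Pi.add_apply, Pi.neg_apply, Int.floor_neg]
  exact_mod_cast abs_le.2 ⟨by linarith, by linarith⟩

lemma exists_isCoarseSeminorm_latticeFloor [Fintype ι] (ℓ : AddGroupSeminorm (ι → ℤ)) :
    ∃ c, IsCoarseSeminorm_s7 (fun x => ℓ (latticeFloor x)) c := by
  obtain ⟨c, hc, h_le_norm⟩ := exists_forall_le_mul_norm ℓ
  have h_le : ∀ z, ‖z‖ ≤ 1 → ℓ z ≤ c := fun z hz =>
    (h_le_norm z).trans (mul_le_of_le_one_right hc hz)
  refine ⟨c, fun x => apply_nonneg ℓ _, fun x y => ?_, fun x => ?_, fun x => ?_⟩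
  · have h_sub := abs_sub_map_le_sub ℓ (latticeFloor (x + y)) (latticeFloor x + latticeFloor y)
    linarith [le_of_abs_le h_sub, h_le _ (norm_latticeFloor_add_sub_le x y),
      map_add_le_add ℓ (latticeFloor x) (latticeFloor y)]
  · have h_sub := abs_sub_map_le_sub ℓ (latticeFloor (-x)) (-latticeFloor x)
    rw [sub_neg_eq_add, map_neg_eq_map] at h_sub
    linarith [le_of_abs_le h_sub, h_le _ (norm_latticeFloor_neg_add_le x)]
  · exact (h_le_norm _).trans (by gcongr; exact norm_latticeFloor_le x)

lemma map_nsmul_le_mul {G : Type*} [AddCommGroup G] (ℓ : AddGroupSeminorm G) (k : ℕ) (z : G) :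
    ℓ (k • z) ≤ k * ℓ z :=
  let _ := ℓ.toSeminormedAddCommGroup
  norm_nsmul_le (n := k) (a := z)

lemma two_pow_mul_sub_le_map_nsmul {G : Type*} [AddCommGroup G] {ℓ : AddGroupSeminorm G} {D : ℝ}
    (hD : ∀ z, 2 * ℓ z ≤ ℓ (2 • z) + D) (k : ℕ) (z : G) :
    2 ^ k * (ℓ z - D) ≤ ℓ (2 ^ k • z) - D := by
  induction k with
  | zero => simp
  | succ k ih =>
    rw [pow_succ', pow_succ', mul_smul]
    linarith [hD (2 ^ k • z)]

lemma exists_seminorm_forall_abs_sub_le [Finite ι] {ℓ : AddGroupSeminorm (ι → ℤ)} {D : ℝ}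
    (hD : ∀ z, 2 * ℓ z ≤ ℓ (2 • z) + D) :
    ∃ N : Seminorm ℝ (ι → ℝ), ∀ z, |ℓ z - N (latticeCast z)| ≤ D := by
  cases nonempty_fintype ι
  obtain ⟨c, h⟩ := exists_isCoarseSeminorm_latticeFloor ℓ
  have hD_nonneg : 0 ≤ D := by simpa using hD 0
  refine ⟨h.toSeminorm, fun z => ?_⟩
  have h_lim : Tendsto (fun k : ℕ => ℓ (k • z) / k) atTop (𝓝 (h.toSeminorm (latticeCast z))) := by
    simpa only [← map_nsmul, latticeFloor_latticeCast, h.coe_toSeminorm] using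
      h.tendsto_homogenization_s7 (latticeCast z)
  have h_upper : h.toSeminorm (latticeCast z) ≤ ℓ z := le_of_tendsto' h_lim fun k =>
    div_le_of_le_mul₀ k.cast_nonneg (apply_nonneg ℓ z) (mul_comm (ℓ z) k ▸ map_nsmul_le_mul ℓ k z)
  have h_lower : ℓ z - D ≤ h.toSeminorm (latticeCast z) := by
    refine ge_of_tendsto' (h_lim.comp (tendsto_pow_atTop_atTop_of_one_lt one_lt_two))
      fun k => (le_div_iff₀ ?_).2 ?_
    · positivity
    · rw [Nat.cast_pow, Nat.cast_ofNat, mul_comm]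
      linarith [two_pow_mul_sub_le_map_nsmul hD k z]
  exact abs_sub_le_iff.2 ⟨by linarith, by linarith⟩

end StableSeminorm

section InvariantMetrics

variable {G : Type*} [AddCommGroup G] {d : G → G → ℝ}

/-- The length function of an invariant pseudometric, the distance to `0`. -/
def lengthOfMetric (d : G → G → ℝ) (hrefl : ∀ z, d z z = 0) (hsymm : ∀ z w, d z w = d w z)
    (htri : ∀ z w u, d z u ≤ d z w + d w u) (hinv : ∀ k z w, d (k + z) (k + w) = d z w) :
    AddGroupSeminorm G where
  toFun := d 0
  map_zero' := hrefl 0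
  add_le' z w := by simpa only [← hinv z 0 w, add_zero] using htri 0 z (z + w)
  neg' z := by rw [← hinv z 0 (-z), add_zero, add_neg_cancel, hsymm]

lemma lengthOfMetric_sub (hrefl : ∀ z, d z z = 0) (hsymm : ∀ z w, d z w = d w z)
    (htri : ∀ z w u, d z u ≤ d z w + d w u) (hinv : ∀ k z w, d (k + z) (k + w) = d z w)
    (z w : G) : lengthOfMetric d hrefl hsymm htri hinv (w - z) = d z w := by
  change d 0 (w - z) = d z w
  rw [← hinv z 0 (w - z), add_zero, add_sub_cancel]

lemma hasRoughGeodesics_lengthOfMetric (hrefl : ∀ z, d z z = 0) (hsymm : ∀ z w, d z w = d w z)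
    (htri : ∀ z w u, d z u ≤ d z w + d w u) (hinv : ∀ k z w, d (k + z) (k + w) = d z w) {C : ℝ}
    (hgeo : ∀ z, ∃ f : ℝ → G, f 0 = 0 ∧ f (d 0 z) = z ∧
      ∀ t ∈ Set.Icc 0 (d 0 z), ∀ t' ∈ Set.Icc 0 (d 0 z), d (f t) (f t') ≤ |t - t'| + C) :
    HasRoughGeodesics (lengthOfMetric d hrefl hsymm htri hinv) C := fun z => by
  obtain ⟨f, hf_zero, hf_last, hf⟩ := hgeo z
  have h_nonneg : 0 ≤ d 0 z := apply_nonneg (lengthOfMetric d hrefl hsymm htri hinv) z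
  refine ⟨⌈d 0 z⌉₊, fun k => f (min k (d 0 z)), (Nat.ceil_lt_add_one h_nonneg).le, ?_, ?_,
    fun a b hab _ => ?_⟩
  · simpa [h_nonneg] using hf_zero
  · simpa [Nat.le_ceil] using hf_last
  · rw [lengthOfMetric_sub]
    refine (hf _ ⟨by positivity, min_le_right _ _⟩ _ ⟨by positivity, min_le_right _ _⟩).trans ?_
    gcongr
    have hab' : (a : ℝ) ≤ b := mod_cast hab
    rw [abs_sub_comm, ← abs_of_nonneg (sub_nonneg.2 hab')]
    simpa using abs_min_sub_min_le_max (b : ℝ) (d 0 z) a (d 0 z)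

end InvariantMetrics

/-- Every proper, roughly geodesic, left-invariant metric `d` on `ℤⁿ` is roughly isometric,
via the inclusion `ℤⁿ ↪ ℝⁿ`, to a norm `N` on `ℝⁿ`; moreover every `ℤ`-linear automorphism
of `ℤⁿ` which is a rough isometry of `(ℤⁿ, d)` induces a linear isometry of `(ℝⁿ, N)`. -/
theorem proper_roughly_geodesic_invariant_metric_on_zn_roughly_isometric_to_norm
    (n : ℕ) (d : (Fin n → ℤ) → (Fin n → ℤ) → ℝ)
    (hrefl : ∀ z, d z z = 0)
    (hpos : ∀ z w, z ≠ w → 0 < d z w)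
    (hsymm : ∀ z w, d z w = d w z)
    (htri : ∀ z w u, d z u ≤ d z w + d w u)
    (hinv : ∀ k z w, d (k + z) (k + w) = d z w)
    (hproper : ∀ (z : Fin n → ℤ) (R : ℝ), {w : Fin n → ℤ | d z w ≤ R}.Finite)
    (C₀ : ℝ) (hC₀ : 0 < C₀)
    (hgeo : ∀ z w : Fin n → ℤ, ∃ f : ℝ → (Fin n → ℤ), f 0 = z ∧ f (d z w) = w ∧
      ∀ t t' : ℝ, t ∈ Set.Icc 0 (d z w) → t' ∈ Set.Icc 0 (d z w) →
        |t - t'| - C₀ ≤ d (f t) (f t') ∧ d (f t) (f t') ≤ |t - t'| + C₀) :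
    ∃ N : (Fin n → ℝ) → ℝ,
      -- `N` is a norm on `ℝⁿ`
      (∀ x, N x = 0 ↔ x = 0) ∧
      (∀ (a : ℝ) (x), N (a • x) = |a| * N x) ∧
      (∀ x y, N (x + y) ≤ N x + N y) ∧
      -- the inclusion `ℤⁿ ↪ ℝⁿ` is a rough isometry from `(ℤⁿ, d)` to `(ℝⁿ, N)`
      (∃ C : ℝ, 0 ≤ C ∧
        (∀ z w : Fin n → ℤ,
          |d z w - N ((fun i => (z i : ℝ)) - fun i => (w i : ℝ))| ≤ C) ∧
        (∀ x : Fin n → ℝ, ∃ z : Fin n → ℤ, N (x - fun i => (z i : ℝ)) ≤ C)) ∧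
      -- rough isometries of `(ℤⁿ, d)` in `GL(n, ℤ)` induce isometries of `(ℝⁿ, N)`
      (∀ f : (Fin n → ℤ) ≃ₗ[ℤ] (Fin n → ℤ),
        (∃ C' : ℝ, ∀ z w : Fin n → ℤ, |d (f z) (f w) - d z w| ≤ C') →
        ∀ fR : (Fin n → ℝ) ≃ₗ[ℝ] (Fin n → ℝ),
          (∀ z : Fin n → ℤ, fR (fun i => (z i : ℝ)) = fun i => ((f z) i : ℝ)) →
          ∀ x : Fin n → ℝ, N (fR x) = N x) := by
  let ℓ := lengthOfMetric d hrefl hsymm htri hinv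
  have h_geodesics : HasRoughGeodesics ℓ C₀ :=
    hasRoughGeodesics_lengthOfMetric hrefl hsymm htri hinv fun z => by
      obtain ⟨f, hf_zero, hf_last, hf⟩ := hgeo 0 z
      exact ⟨f, hf_zero, hf_last, fun t ht t' ht' => (hf t t' ht ht').2⟩
  have hℓ_finite : ∀ R, {z | ℓ z ≤ R}.Finite := hproper 0
  obtain ⟨D, hD⟩ := exists_two_mul_le_map_two_nsmul_add h_geodesics hℓ_finite
  obtain ⟨N, hN⟩ := exists_seminorm_forall_abs_sub_le hD
  obtain ⟨c, hc⟩ := exists_forall_seminorm_sub_latticeFloor_le N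
  have hN_finite : ∀ R, {z | N (latticeCast z) ≤ R}.Finite := fun R =>
    (hℓ_finite (R + D)).subset fun z hz =>
      (sub_le_iff_le_add.1 (le_of_abs_le (hN z))).trans (by rw [add_comm]; gcongr; exact hz)
  refine ⟨N, fun x => ⟨eq_zero_of_seminorm_eq_zero hN_finite, fun hx => hx ▸ map_zero N⟩,
    map_smul_eq_mul N, map_add_le_add N, ⟨max D c, ?_, fun z w => ?_,
      fun x => ⟨latticeFloor x, (hc x).trans (le_max_right D c)⟩⟩, ?_⟩
  · exact le_max_of_le_left ((abs_nonneg _).trans (hN 0))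
  · rw [hsymm, ← lengthOfMetric_sub hrefl hsymm htri hinv w z]
    exact map_sub latticeCast z w ▸ (hN (z - w)).trans (le_max_left D c)
  · rintro f ⟨C', hf⟩ fR hfR
    have hf_length : ∀ z, |ℓ (f z) - ℓ z| ≤ C' := fun z => by
      have h_dist := hf 0 z
      rwa [map_zero] at h_dist
    exact seminorm_apply_linearMap_eq hN hf_length (F := fR.toLinearMap) hfR
end
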